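/- arXiv:2410.00870 — 13 statements merged into one kernel-verified Lean document; each statement's English description precedes it below -/
import Mathlib

section
/- Let a, b ∈ ℚ and suppose f(x) = x^12 + a·x^6 + b is irreducible over ℚ. Then every element of the Galois group Gal(f) of f over ℚ acts as an even permutation on the set of roots of f in ℂ (i.e., the image of every element under the Galois action homomorphism into the permutation group of the root set of f in ℂ has sign 1) if and only if b is a square in ℚ. -/
open Polynomial

attribute [local instance] Polynomial.Gal.splits_ℚ_ℂ

/-- The product of `2 v^6 + a` over the roots `v`. -/
lemma aux_prod_closed {L : Type*} [Field L] [IsAlgClosed L] [CharZero L] (a b : L)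
    (v : Fin 12 → L) (h : ∏ i, (X - C (v i)) = X ^ 12 + C a * X ^ 6 + C b) :
    ∏ i, (2 * v i ^ 6 + a) = (4 * b - a ^ 2) ^ 6 := by
  have hm : (X ^ 6 + C (a / 2) : L[X]).Monic := by monicity!
  have hd : (X ^ 6 + C (a / 2) : L[X]).natDegree = 6 := by compute_degree!
  set q : L[X] := X ^ 6 + C (a / 2) with hq
  have hs : q.Splits := IsAlgClosed.splits q
  have hcard : q.roots.card = 6 := by rw [← hd]; exact hs.natDegree_eq_card_roots.symm
  have hev : ∀ x, q.eval x = (q.roots.map (fun c => x - c)).prod := by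
    intro x
    have := hs.eval_eq_prod_roots x
    rw [this, hm.leadingCoeff, one_mul]
  have hF : ∀ x, ∏ i, (x - v i) = x ^ 12 + a * x ^ 6 + b := by
    intro x
    have := congrArg (eval x) h
    simpa [eval_prod] using this
  have h1 : ∀ i, 2 * v i ^ 6 + a = 2 * (q.roots.map (fun c => c - v i)).prod := by
    intro i
    have e1 : (q.roots.map (fun c => c - v i)).prod = (q.roots.map (fun c => v i - c)).prod := by
      have : (fun c => c - v i) = fun c => -(v i - c) := by ext; ring
      rw [this, show (fun c => -(v i - c)) = Neg.neg ∘ (fun c => v i - c) from rfl,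
        ← Multiset.map_map, Multiset.prod_map_neg, Multiset.card_map, hcard]
      norm_num
    rw [e1, ← hev, hq]
    simp
    field_simp
  simp_rw [h1]
  rw [Finset.prod_mul_distrib, ← Multiset.prod_map_prod]
  have h2 : q.roots.map (fun c => ∏ i, (c - v i)) = q.roots.map (fun _ => b - a ^ 2 / 4) := by
    apply Multiset.map_congr rfl
    intro c hc
    have hc' : c ^ 6 + a / 2 = 0 := by
      have := (mem_roots'.1 hc).2
      simpa [hq, IsRoot] using this
    have hc'' : c ^ 6 = - (a / 2) := by linear_combination hc'
    rw [hF, show c ^ 12 = (c ^ 6) ^ 2 by ring, hc'']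
    ring
  rw [h2, Multiset.map_const', Multiset.prod_replicate, hcard]
  simp
  ring

lemma aux_disc {K : Type*} [Field K] [CharZero K] (a b : K)
    (v : Fin 12 → K) (h : ∏ i, (X - C (v i)) = X ^ 12 + C a * X ^ 6 + C b) :
    (∏ i, ∏ j ∈ Finset.Ioi i, (v j - v i)) ^ 2 = 6 ^ 12 * b ^ 5 * (4 * b - a ^ 2) ^ 6 := by
  have hP : ∏ i, (2 * v i ^ 6 + a) = (4 * b - a ^ 2) ^ 6 := by
    apply (algebraMap K (AlgebraicClosure K)).injective
    have := aux_prod_closed (algebraMap K (AlgebraicClosure K) a)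
      (algebraMap K (AlgebraicClosure K) b) (fun i => algebraMap K (AlgebraicClosure K) (v i)) (by
        have := congrArg (Polynomial.map (algebraMap K (AlgebraicClosure K))) h
        simpa [Polynomial.map_prod] using this)
    simpa [map_ofNat] using this
  have hb : ∏ i, v i = b := by
    have := congrArg (eval 0) h
    rw [eval_prod] at this
    simp only [eval_sub, eval_X, eval_C, zero_sub] at this
    rw [Finset.prod_neg] at this
    norm_num at this
    exact this
  have hder : ∀ i, ∏ j ∈ Finset.univ.erase i, (v i - v j) = 6 * v i ^ 5 * (2 * v i ^ 6 + a) := by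
    intro i
    have := congrArg (fun p => eval (v i) (derivative p)) h
    beta_reduce at this
    rw [derivative_prod_finset] at this
    simp only [eval_finsetSum, eval_prod, eval_mul] at this
    rw [Finset.sum_eq_single i] at this
    · simp [eval_prod] at this
      rw [this]; ring
    · intro k _ hk
      rw [Finset.prod_eq_zero (i := i)]
      · simp
      · simp [hk.symm]
      · simp
    · simp
  have key : ∏ i, ∏ j ∈ Finset.univ.erase i, (v i - v j)
      = (∏ i, ∏ j ∈ Finset.Ioi i, (v j - v i)) ^ 2 := by
    have h3 := Finset.prod_prod_Ioi_mul_eq_prod_prod_off_diag (fun i j => v i - v j)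
    have h4 : ∏ i, ∏ j ∈ Finset.univ.erase i, (v i - v j)
        = ∏ i, ∏ j ∈ Finset.Ioi i, ((v j - v i) * (v i - v j)) := by
      rw [h3, Finset.prod_comm' (t' := Finset.univ) (s' := fun i => {i}ᶜ)]
      · intro x y
        simp [eq_comm]
    have h5 : ∀ i j, (v j - v i) * (v i - v j) = (-1) * (v j - v i) ^ 2 := by
      intro i j; ring
    rw [h4]
    simp_rw [h5, Finset.prod_mul_distrib, Finset.prod_const, Finset.prod_pow]
    rw [Finset.prod_pow_eq_pow_sum,
      show ∑ i : Fin 12, (Finset.Ioi i).card = 66 by decide]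
    norm_num
  rw [← key]
  simp_rw [hder]
  simp only [Finset.prod_mul_distrib, Finset.prod_const, Finset.prod_pow, hb, hP]
  simp

theorem aux_main {F Ω : Type*} [Field F] [CharZero F] [Field Ω] [Algebra F Ω] [DecidableEq Ω] (a b : F) (f : F[X])
    (hf : f = X ^ 12 + C a * X ^ 6 + C b) (hirr : Irreducible f)
    [Fact ((f.map (algebraMap F Ω)).Splits)] :
    (∀ σ : f.Gal, Equiv.Perm.sign (Polynomial.Gal.galActionHom f Ω σ) = 1) ↔
      ∃ s : F, s ^ 2 = b := by
  haveI : CharZero f.SplittingField := charZero_of_injective_algebraMap (algebraMap F f.SplittingField).injective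
  have hm : f.Monic := by rw [hf]; monicity!
  have hd : f.natDegree = 12 := by rw [hf]; compute_degree!
  have hsep : f.Separable := hirr.separable
  have hspl : (f.map (algebraMap F f.SplittingField)).Splits := SplittingField.splits f
  have hcard : Fintype.card (f.rootSet f.SplittingField) = 12 := by
    rw [← hd]; exact card_rootSet_eq_natDegree hsep hspl
  obtain ⟨e⟩ : Nonempty (Fin 12 ≃ f.rootSet f.SplittingField) :=
    ⟨(Fintype.equivFinOfCardEq hcard).symm⟩
  set v : Fin 12 → f.SplittingField := fun i => (e i : f.SplittingField) with hv
  have hvinj : Function.Injective v := fun i j hij => e.injective (Subtype.ext hij)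
  have hprod : ∏ i, (X - C (v i)) = X ^ 12 + C (algebraMap F f.SplittingField a) * X ^ 6
      + C (algebraMap F f.SplittingField b) := by
    have hmap : f.map (algebraMap F f.SplittingField) = X ^ 12
      + C (algebraMap F f.SplittingField a) * X ^ 6
      + C (algebraMap F f.SplittingField b) := by
      conv_lhs => enter [2]; rw [hf]
      simp
    rw [← hmap]
    refine (eq_of_monic_of_dvd_of_natDegree_le (monic_prod_of_monic _ _ fun i _ => monic_X_sub_C _)
      (hm.map _) ?_ ?_).symm
    · apply Finset.prod_dvd_of_coprime
      · intro i _ j _ hij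
        exact pairwise_coprime_X_sub_C hvinj hij
      · intro i _
        rw [dvd_iff_isRoot, IsRoot, eval_map_algebraMap]
        exact (mem_rootSet.1 (e i).2).2
    · rw [natDegree_map, hd]
      simp
  have hdisc := aux_disc _ _ v hprod
  set δ := ∏ i, ∏ j ∈ Finset.Ioi i, (v j - v i) with hδ
  have hδ0 : δ ≠ 0 := by
    rw [hδ]
    refine Finset.prod_ne_zero_iff.2 fun i _ => Finset.prod_ne_zero_iff.2 fun j hj => ?_
    rw [sub_ne_zero]
    exact fun h => (Finset.mem_Ioi.1 hj).ne' (hvinj h)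
  have hact : ∀ σ : f.Gal,
      σ δ = ((Equiv.Perm.sign (Polynomial.Gal.galActionHom f Ω σ) : ℤˣ) : ℤ) * δ := by
    intro σ
    let E := e.trans (Polynomial.Gal.rootsEquivRoots f Ω)
    let τ : Equiv.Perm (Fin 12) := E.symm.permCongr (Polynomial.Gal.galActionHom f Ω σ)
    have hτ : ∀ i, σ (v i) = v (τ i) := by
      intro i
      have : τ i = e.symm (σ • e i) := by
        change e.symm ((Polynomial.Gal.rootsEquivRoots f Ω).symm (Polynomial.Gal.rootsEquivRoots f Ω
          (σ • (Polynomial.Gal.rootsEquivRoots f Ω).symm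
            (Polynomial.Gal.rootsEquivRoots f Ω (e i))))) = _
        rw [Equiv.symm_apply_apply, Equiv.symm_apply_apply]
      simp only [hv, this, Equiv.apply_symm_apply]
      rfl
    have hs : Equiv.Perm.sign τ = Equiv.Perm.sign (Polynomial.Gal.galActionHom f Ω σ) := by
      simp only [τ, Equiv.Perm.sign_permCongr]
    rw [← hs, hδ, ← Equiv.Perm.prod_Ioi_comp_eq_sign_mul_prod τ (f := fun i j => v j - v i)
      (by intro i j; ring)]
    simp only [map_prod, map_sub, hτ]
  have heven : (∀ σ : f.Gal, Equiv.Perm.sign (Polynomial.Gal.galActionHom f Ω σ) = 1) ↔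
      ∀ σ : f.Gal, σ δ = δ := by
    refine forall_congr' fun σ => ?_
    rw [hact σ]
    rcases Int.units_eq_one_or (Equiv.Perm.sign (Polynomial.Gal.galActionHom f Ω σ)) with h | h
    · simp [h]
    · rw [h]
      simp [neg_eq_self, hδ0]
  have hgal : IsGalois F f.SplittingField := IsGalois.of_separable_splitting_field hsep
  have hfix : (∀ σ : f.Gal, σ δ = δ) ↔ ∃ q : F, algebraMap F f.SplittingField q = δ := by
    exact (IsGalois.mem_range_algebraMap_iff_fixed δ).symm
  rw [heven, hfix]
  have hdisc' : δ ^ 2 = algebraMap F f.SplittingField (6 ^ 12 * b ^ 5 * (4 * b - a ^ 2) ^ 6) := by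
    rw [hdisc]; simp [map_ofNat]
  have hne : (6 ^ 12 * b ^ 5 * (4 * b - a ^ 2) ^ 6) ≠ 0 := by
    intro h
    rw [h, map_zero] at hdisc'
    exact hδ0 (by simpa using hdisc')
  have hb0 : b ≠ 0 := by rintro rfl; simp at hne
  have hD0 : 4 * b - a ^ 2 ≠ 0 := by intro h; simp [h] at hne
  constructor
  · rintro ⟨q, hq⟩
    rw [← hq, ← map_pow] at hdisc'
    have := (algebraMap F f.SplittingField).injective hdisc'
    refine ⟨q / (6 ^ 6 * b ^ 2 * (4 * b - a ^ 2) ^ 3), ?_⟩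
    rw [div_pow, this]
    rw [div_eq_iff (pow_ne_zero _ (mul_ne_zero (mul_ne_zero (by norm_num) (pow_ne_zero _ hb0)) (pow_ne_zero _ hD0)))]
    ring
  · rintro ⟨s, hs⟩
    have : δ ^ 2 = (algebraMap F f.SplittingField (6 ^ 6 * s ^ 5 * (4 * b - a ^ 2) ^ 3)) ^ 2 := by
      rw [hdisc', ← map_pow, ← hs]
      congr 1
      ring
    rcases sq_eq_sq_iff_eq_or_eq_neg.1 this with h | h
    · exact ⟨_, h.symm⟩
    · exact ⟨-(6 ^ 6 * s ^ 5 * (4 * b - a ^ 2) ^ 3), by rw [h, map_neg]⟩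

theorem galois_group_even_iff_b_square (a b : ℚ) (f : ℚ[X])
    (hf : f = X ^ 12 + C a * X ^ 6 + C b) (hirr : Irreducible f) :
    (∀ σ : f.Gal, Equiv.Perm.sign (Polynomial.Gal.galActionHom f ℂ σ) = 1) ↔
      ∃ s : ℚ, s ^ 2 = b := by
  exact aux_main a b f hf hirr
end

section
/- Let a, b ∈ ℚ and suppose f(x) = x^12 + a·x^6 + b is irreducible over ℚ. Let g₄(x) = x^4 + a·x^2 + b. Then the order of the Galois group of f over ℚ is at most 18 times the order of the Galois group of g₄ over ℚ. -/
open Polynomial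

lemma aux_finrank_adjoin_le {K E : Type*} [Field K] [Field E] [Algebra K E]
    (p : K[X]) (hp : p.Monic) (x : E) (hx : aeval x p = 0) :
    Module.finrank K (IntermediateField.adjoin K {x}) ≤ p.natDegree ∧
      FiniteDimensional K (IntermediateField.adjoin K {x}) := by
  have hi : IsIntegral K x := ⟨p, hp, by simpa [aeval_def] using hx⟩
  refine ⟨?_, IntermediateField.adjoin.finiteDimensional hi⟩
  rw [IntermediateField.adjoin.finrank hi]
  exact natDegree_le_of_dvd (minpoly.dvd K x hx) hp.ne_zero

lemma aux_card_gal {F : Type*} [Field F] [CharZero F] (p : F[X]) :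
    Nat.card p.Gal = Module.finrank F p.SplittingField := by
  have : Normal F p.SplittingField := Normal.of_isSplittingField p
  have : IsGalois F p.SplittingField := ⟨⟩
  exact IsGalois.card_aut_eq_finrank F p.SplittingField

/-- Over an extension containing the square roots of the roots of `Y ^ 2 + a Y + b`. -/
lemma aux_core {F K : Type*} [Field F] [Field K] [Algebra F K] [FiniteDimensional F K]
    (a b : F) (α β : K) (h1 : algebraMap F K a = -(α ^ 2 + β ^ 2))
    (h2 : algebraMap F K b = α ^ 2 * β ^ 2) (f : F[X])
    (hf : f = X ^ 12 + C a * X ^ 6 + C b) :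
    Module.finrank F f.SplittingField ≤ 18 * Module.finrank F K := by
  let E := AlgebraicClosure K
  obtain ⟨c, hc⟩ := IsAlgClosed.exists_pow_nat_eq (algebraMap K E α) (n := 3) (by norm_num)
  obtain ⟨d, hd⟩ := IsAlgClosed.exists_pow_nat_eq (algebraMap K E β) (n := 3) (by norm_num)
  obtain ⟨w, hw⟩ := (IsAlgClosed.splits (X ^ 2 + X + 1 : E[X])).exists_eval_eq_zero (by
    have : (X ^ 2 + X + 1 : E[X]).degree = 2 := by compute_degree!
    rw [this]; norm_num)
  simp only [eval_add, eval_pow, eval_X, eval_one] at hw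
  obtain ⟨rkw, fw⟩ := aux_finrank_adjoin_le (X ^ 2 + X + 1 : K[X]) (by monicity!) w (by simpa using hw)
  obtain ⟨rc, fc⟩ := aux_finrank_adjoin_le (X ^ 3 - C α : K[X]) (by monicity!) c (by simp [hc, E])
  obtain ⟨rd, fd⟩ := aux_finrank_adjoin_le (X ^ 3 - C β : K[X]) (by monicity!) d (by simp [hd, E])
  have dw : (X ^ 2 + X + 1 : K[X]).natDegree = 2 := by compute_degree!
  rw [dw] at rkw
  rw [natDegree_X_pow_sub_C] at rc rd
  let M := (IntermediateField.adjoin K {w} ⊔ IntermediateField.adjoin K {c}) ⊔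
    IntermediateField.adjoin K {d}
  have hwM : w ∈ M := (le_sup_left.trans le_sup_left : IntermediateField.adjoin K {w} ≤ M)
    (IntermediateField.mem_adjoin_simple_self K w)
  have hcM : c ∈ M := (le_sup_right.trans le_sup_left : IntermediateField.adjoin K {c} ≤ M)
    (IntermediateField.mem_adjoin_simple_self K c)
  have hdM : d ∈ M := (le_sup_right : IntermediateField.adjoin K {d} ≤ M)
    (IntermediateField.mem_adjoin_simple_self K d)
  have fM : FiniteDimensional K M := by
    have := IntermediateField.finiteDimensional_sup
      (IntermediateField.adjoin K {w}) (IntermediateField.adjoin K {c})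
    exact IntermediateField.finiteDimensional_sup _ _
  have rM : Module.finrank K M ≤ 18 := by
    calc _ ≤ _ := IntermediateField.finrank_sup_le _ _
      _ ≤ (2 * 3) * 3 := Nat.mul_le_mul
        ((IntermediateField.finrank_sup_le _ _).trans (Nat.mul_le_mul rkw rc)) rd
      _ = 18 := by norm_num
  have cube : ∀ x e : E, x ^ 3 = e ^ 3 → e ∈ M → x ∈ M := by
    intro x e h he
    have : (x - e) * ((x - w * e) * (x - (-1 - w) * e)) = 0 := by
      linear_combination h + (e ^ 2 * (e - x)) * hw
    rcases mul_eq_zero.1 this with h | h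
    · rw [sub_eq_zero.1 h]; exact he
    rcases mul_eq_zero.1 h with h | h
    · rw [sub_eq_zero.1 h]; exact mul_mem hwM he
    · rw [sub_eq_zero.1 h]
      exact mul_mem (sub_mem (neg_mem (one_mem _)) hwM) he
  have six : ∀ x e : E, x ^ 6 = e ^ 6 → e ∈ M → x ∈ M := by
    intro x e h he
    have : (x ^ 3 - e ^ 3) * (x ^ 3 - (-e) ^ 3) = 0 := by linear_combination h
    rcases mul_eq_zero.1 this with h | h
    · exact cube x e (sub_eq_zero.1 h) he
    · exact cube x (-e) (sub_eq_zero.1 h) (neg_mem he)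
  have hsp : ((f.map (algebraMap F K)).map (algebraMap K M)).Splits := by
    apply IntermediateField.splits_of_splits (IsAlgClosed.splits _)
    intro x hx
    have hx := (mem_rootSet.1 hx).2
    simp only [hf, Polynomial.map_add, Polynomial.map_mul, Polynomial.map_pow, map_X, map_C,
      map_add, map_mul, map_pow, aeval_X, aeval_C, h1, h2, map_neg] at hx
    rw [← hc, ← hd] at hx
    have : (x ^ 6 - c ^ 6) * (x ^ 6 - d ^ 6) = 0 := by linear_combination hx
    rcases mul_eq_zero.1 this with h | h
    · exact six x c (sub_eq_zero.1 h) hcM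
    · exact six x d (sub_eq_zero.1 h) hdM
  rw [Polynomial.map_map, ← IsScalarTower.algebraMap_eq] at hsp
  have : FiniteDimensional F M := FiniteDimensional.trans F K M
  calc _ ≤ Module.finrank F M :=
        LinearMap.finrank_le_finrank_of_injective (f := (SplittingField.lift f hsp).toLinearMap)
          (SplittingField.lift f hsp).injective
    _ = Module.finrank F K * Module.finrank K M := (Module.finrank_mul_finrank F K M).symm
    _ ≤ Module.finrank F K * 18 := Nat.mul_le_mul_left _ rM
    _ = _ := mul_comm _ _

lemma aux_roots {K : Type*} [Field K] (A B : K)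
    (hs : (X ^ 4 + C A * X ^ 2 + C B : K[X]).Splits) :
    ∃ α β : K, A = -(α ^ 2 + β ^ 2) ∧ B = α ^ 2 * β ^ 2 := by
  have hm : (X ^ 4 + C A * X ^ 2 + C B : K[X]).degree = 4 := by compute_degree!
  have hne : (X ^ 4 + C A * X ^ 2 + C B : K[X]) ≠ 0 := by
    intro h; rw [h] at hm; simp at hm
  obtain ⟨α, hα⟩ := hs.exists_eval_eq_zero (by rw [hm]; norm_num)
  simp only [eval_add, eval_mul, eval_pow, eval_X, eval_C] at hα
  have hB : B = -(α ^ 4 + A * α ^ 2) := by linear_combination hα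
  have hd : (X ^ 2 + C (A + α ^ 2) : K[X]) ∣ X ^ 4 + C A * X ^ 2 + C B := by
    refine ⟨X ^ 2 - C (α ^ 2), ?_⟩
    rw [hB]
    simp only [map_add, map_mul, map_pow, map_neg]
    ring
  have hm2 : (X ^ 2 + C (A + α ^ 2) : K[X]).degree = 2 := by compute_degree!
  obtain ⟨β, hβ⟩ := (hs.of_dvd hne hd).exists_eval_eq_zero (by rw [hm2]; norm_num)
  simp only [eval_add, eval_pow, eval_X, eval_C] at hβ
  refine ⟨α, β, by linear_combination hβ, ?_⟩
  rw [hB]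
  linear_combination (-α ^ 2) * hβ

lemma aux_main_s1 {F : Type*} [Field F] [CharZero F] (a b : F) (f g₄ : F[X])
    (hf : f = X ^ 12 + C a * X ^ 6 + C b)
    (hg : g₄ = X ^ 4 + C a * X ^ 2 + C b) :
    Nat.card f.Gal ≤ 18 * Nat.card g₄.Gal := by
  rw [aux_card_gal, aux_card_gal]
  have hs := SplittingField.splits g₄
  have hgK : g₄.map (algebraMap F g₄.SplittingField) =
      X ^ 4 + C (algebraMap F g₄.SplittingField a) * X ^ 2 +
        C (algebraMap F g₄.SplittingField b) := by
    conv_lhs => arg 2; rw [hg]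
    simp only [Polynomial.map_add, Polynomial.map_mul, Polynomial.map_pow, map_X, map_C]
  rw [hgK] at hs
  obtain ⟨α, β, h1, h2⟩ := aux_roots _ _ hs
  exact aux_core a b α β h1 h2 f hf

theorem card_gal_le_eighteen_mul_card_gal_quartic (a b : ℚ) (f g₄ : ℚ[X])
    (hf : f = X ^ 12 + C a * X ^ 6 + C b) (hirr : Irreducible f)
    (hg : g₄ = X ^ 4 + C a * X ^ 2 + C b) :
    Nat.card f.Gal ≤ 18 * Nat.card g₄.Gal :=
  aux_main_s1 a b f g₄ hf hg
end

section
/- Let a, b ∈ ℚ and suppose f(x) = x^12 + a·x^6 + b is irreducible over ℚ. Let g₆(x) = x^6 + a·x^3 + b. Then the order of the Galois group of f over ℚ is at most 4 times the order of the Galois group of g₆ over ℚ. -/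
open Polynomial

lemma finrank_adjoin_sqrt_le (L : IntermediateField ℚ ℂ) (x : ℂ) (hx : x ^ 2 ∈ L) :
    IsIntegral L x ∧ Module.finrank L (IntermediateField.adjoin L {x}) ≤ 2 := by
  have hm : (X ^ 2 - C (⟨x ^ 2, hx⟩ : L)).Monic := monic_X_pow_sub_C _ (by norm_num)
  have h0 : aeval x (X ^ 2 - C (⟨x ^ 2, hx⟩ : L)) = 0 := by
    simp only [map_sub, map_pow, aeval_X, aeval_C]
    exact sub_self _
  have hi : IsIntegral L x := ⟨_, hm, h0⟩
  refine ⟨hi, ?_⟩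
  rw [IntermediateField.adjoin.finrank hi]
  refine (natDegree_le_of_dvd (minpoly.dvd L x h0) hm.ne_zero).trans ?_
  rw [natDegree_X_pow_sub_C]

lemma card_gal_eq_finrank_adjoin (p : ℚ[X]) (hp : Irreducible p) :
    Nat.card p.Gal = Module.finrank ℚ (IntermediateField.adjoin ℚ (p.rootSet ℂ)) := by
  have : p.IsSplittingField ℚ (IntermediateField.adjoin ℚ (p.rootSet ℂ)) :=
    IntermediateField.adjoin_rootSet_isSplittingField (IsAlgClosed.splits _)
  rw [Polynomial.Gal.card_of_separable hp.separable]
  exact (IsSplittingField.algEquiv (IntermediateField.adjoin ℚ (p.rootSet ℂ)) p).toLinearEquiv.finrank_eq.symm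

lemma finrank_tower_aux (L : IntermediateField ℚ ℂ) (N : IntermediateField L ℂ) :
    Module.finrank ℚ N = Module.finrank ℚ L * Module.finrank L N := by
  have : Module.Free L N := Module.Free.of_divisionRing L N
  exact (Module.finrank_mul_finrank ℚ L N).symm

lemma mem_of_pow_six_eq {F : Type*} [SetLike F ℂ] [SubfieldClass F ℂ] (N : F) (x y : ℂ)
    (h : x ^ 6 = y ^ 6) (hy : y ∈ N) (hx : x ^ 2 ∈ N) : x ∈ N := by
  by_cases h0 : y = 0
  · have : x = 0 := by simpa [h0] using h
    rw [this]; exact zero_mem N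
  have hz : y * (x ^ 2 / y ^ 2) ^ 2 ∈ N :=
    mul_mem hy (pow_mem (div_mem hx (pow_mem hy 2)) 2)
  have h3 : (x ^ 3 - y ^ 3) * (x ^ 3 + y ^ 3) = 0 := by linear_combination h
  rcases mul_eq_zero.1 h3 with h3 | h3
  · have : x = y * (x ^ 2 / y ^ 2) ^ 2 := by
      field_simp
      linear_combination -x * h3
    rw [this]; exact hz
  · have : x = -(y * (x ^ 2 / y ^ 2) ^ 2) := by
      field_simp
      linear_combination x * h3
    rw [this]; exact neg_mem hz

theorem card_gal_le_four_mul_card_gal_sextic (a b : ℚ) (f g₆ : ℚ[X])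
    (hf : f = X ^ 12 + C a * X ^ 6 + C b) (hirr : Irreducible f)
    (hg : g₆ = X ^ 6 + C a * X ^ 3 + C b) :
    Nat.card f.Gal ≤ 4 * Nat.card g₆.Gal := by
  have hfg : f = expand ℚ 2 g₆ := by
    rw [hf, hg]; simp [← pow_mul]
  have hgirr : Irreducible g₆ := by
    rw [hfg] at hirr
    exact of_irreducible_expand (by norm_num) hirr
  rw [card_gal_eq_finrank_adjoin f hirr, card_gal_eq_finrank_adjoin g₆ hgirr]
  set L := IntermediateField.adjoin ℚ (g₆.rootSet ℂ) with hL
  have hfe (x : ℂ) : aeval x f = x ^ 12 + a * x ^ 6 + b := by rw [hf]; simp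
  have hge (x : ℂ) : aeval x g₆ = x ^ 6 + a * x ^ 3 + b := by rw [hg]; simp
  have hsq (x : ℂ) (hx : x ^ 12 + a * x ^ 6 + b = 0) : x ^ 2 ∈ L := by
    apply IntermediateField.subset_adjoin
    rw [mem_rootSet]
    refine ⟨hgirr.ne_zero, ?_⟩
    rw [hge]; linear_combination hx
  obtain ⟨x, hx⟩ := IsAlgClosed.exists_aeval_eq_zero ℂ f hirr.degree_pos.ne'
  rw [hfe] at hx
  obtain ⟨y, hy⟩ := IsAlgClosed.exists_pow_nat_eq (-a - x ^ 6 : ℂ) (n := 6) (by norm_num)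
  have hy' : y ^ 12 + a * y ^ 6 + b = 0 := by
    have : y ^ 12 = (y ^ 6) ^ 2 := by ring
    rw [this, hy]; linear_combination hx
  obtain ⟨hxi, hx2⟩ := finrank_adjoin_sqrt_le L x (hsq x hx)
  obtain ⟨hyi, hy2⟩ := finrank_adjoin_sqrt_le L y (hsq y hy')
  have : FiniteDimensional L (IntermediateField.adjoin L {x}) :=
    IntermediateField.adjoin.finiteDimensional hxi
  have : FiniteDimensional L (IntermediateField.adjoin L {y}) :=
    IntermediateField.adjoin.finiteDimensional hyi
  have : g₆.IsSplittingField ℚ L :=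
    IntermediateField.adjoin_rootSet_isSplittingField (IsAlgClosed.splits _)
  have : FiniteDimensional ℚ L := IsSplittingField.finiteDimensional L g₆
  set N := IntermediateField.adjoin L {x} ⊔ IntermediateField.adjoin L {y} with hN
  have hN4 : Module.finrank L N ≤ 4 :=
    (IntermediateField.finrank_sup_le _ _).trans (Nat.mul_le_mul hx2 hy2)
  have hxN : x ∈ N := (le_sup_left : _ ≤ N) (IntermediateField.mem_adjoin_simple_self L x)
  have hyN : y ∈ N := (le_sup_right : _ ≤ N) (IntermediateField.mem_adjoin_simple_self L y)
  have hle : IntermediateField.adjoin ℚ (f.rootSet ℂ) ≤ N.restrictScalars ℚ := by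
    rw [IntermediateField.adjoin_le_iff]
    intro z hz
    have hz := (mem_rootSet.1 hz).2
    rw [hfe] at hz
    have hzN : z ^ 2 ∈ N := N.algebraMap_mem ⟨z ^ 2, hsq z hz⟩
    have hm : (z ^ 6 - x ^ 6) * (z ^ 6 - y ^ 6) = 0 := by
      rw [hy]; linear_combination hz - hx
    show z ∈ N
    rcases mul_eq_zero.1 hm with h | h
    · exact mem_of_pow_six_eq N z x (sub_eq_zero.1 h) hxN hzN
    · exact mem_of_pow_six_eq N z y (sub_eq_zero.1 h) hyN hzN
  have : FiniteDimensional L N := IntermediateField.finiteDimensional_sup _ _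
  have hfin : FiniteDimensional ℚ N := FiniteDimensional.trans ℚ L N
  have h1 : Module.finrank ℚ (IntermediateField.adjoin ℚ (f.rootSet ℂ)) ≤ Module.finrank ℚ N := by
    exact LinearMap.finrank_le_finrank_of_injective
      (f := (IntermediateField.inclusion hle).toLinearMap) (IntermediateField.inclusion hle).injective
  rw [finrank_tower_aux L N, mul_comm] at h1
  exact h1.trans (Nat.mul_le_mul_right _ hN4)
end

section
/- Let a, b ∈ ℚ and suppose g(x) = x^4 + a·x^2 + b is irreducible over ℚ, and let θ ∈ ℂ be a root of g. Then for every r ∈ ℚ that is not a square in ℚ, r is a square in the field ℚ(θ) (the subfield of ℂ generated over ℚ by θ) if and only if r·(a^2 − 4b) is a square in ℚ, or there exists s ∈ ℚ with s^2 = b such that r·(−a + 2s) is a square in ℚ or r·(−a − 2s) is a square in ℚ. -/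
open Polynomial

theorem quartic_monic_aux (a b : ℚ) : (X ^ 4 + C a * X ^ 2 + C b : ℚ[X]).Monic := by
  monicity!

theorem quartic_natDegree_aux (a b : ℚ) : (X ^ 4 + C a * X ^ 2 + C b : ℚ[X]).natDegree = 4 := by
  compute_degree!

theorem quartic_indep_aux (a b : ℚ) (g : ℚ[X])
    (hg : g = X ^ 4 + C a * X ^ 2 + C b) (hirr : Irreducible g)
    (θ : ℂ) (hθ : aeval θ g = 0) (p q s t : ℚ)
    (h : (p : ℂ) + q * θ + s * θ ^ 2 + t * θ ^ 3 = 0) :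
    p = 0 ∧ q = 0 ∧ s = 0 ∧ t = 0 := by
  have hm : g.Monic := hg ▸ quartic_monic_aux a b
  have hd : g.natDegree = 4 := hg ▸ quartic_natDegree_aux a b
  have hmin : g = minpoly ℚ θ := minpoly.eq_of_irreducible_of_monic hirr hθ hm
  set f : ℚ[X] := C p + C q * X + C s * X ^ 2 + C t * X ^ 3 with hf
  have hf0 : aeval θ f = 0 := by simpa [hf] using h
  have hdvd : g ∣ f := hmin ▸ minpoly.dvd ℚ θ hf0
  have hfd : f.natDegree ≤ 3 := by rw [hf]; compute_degree
  have hfz : f = 0 := Polynomial.eq_zero_of_dvd_of_natDegree_lt hdvd (by omega)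
  refine ⟨?_, ?_, ?_, ?_⟩
  · simpa [hf, coeff_X, coeff_C] using congrArg (fun k => coeff k 0) hfz
  · simpa [hf, coeff_X, coeff_C, coeff_X_pow] using congrArg (fun k => coeff k 1) hfz
  · simpa [hf, coeff_X, coeff_C, coeff_X_pow] using congrArg (fun k => coeff k 2) hfz
  · simpa [hf, coeff_X, coeff_C, coeff_X_pow] using congrArg (fun k => coeff k 3) hfz

theorem quartic_repr_aux (a b : ℚ) (g : ℚ[X])
    (hg : g = X ^ 4 + C a * X ^ 2 + C b)
    (θ : ℂ) (hθ : aeval θ g = 0) (y : ℂ)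
    (hy : y ∈ IntermediateField.adjoin ℚ ({θ} : Set ℂ)) :
    ∃ p q s t : ℚ, y = (p : ℂ) + q * θ + s * θ ^ 2 + t * θ ^ 3 := by
  have hm : g.Monic := hg ▸ quartic_monic_aux a b
  have hd : g.natDegree = 4 := hg ▸ quartic_natDegree_aux a b
  have halg : IsAlgebraic ℚ θ := ⟨g, hm.ne_zero, hθ⟩
  rw [← IntermediateField.mem_toSubalgebra,
    IntermediateField.adjoin_simple_toSubalgebra_of_isAlgebraic halg,
    Algebra.adjoin_singleton_eq_range_aeval] at hy
  obtain ⟨f, rfl⟩ := hy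
  have h1 : aeval θ (f %ₘ g) = aeval θ f := by
    conv_rhs => rw [← modByMonic_add_div f g]
    simp [hθ]
  have h2 : (f %ₘ g).natDegree < 4 := by
    rw [← hd]
    exact natDegree_modByMonic_lt f hm (by rintro rfl; simp at hd)
  refine ⟨(f %ₘ g).coeff 0, (f %ₘ g).coeff 1, (f %ₘ g).coeff 2, (f %ₘ g).coeff 3, ?_⟩
  change aeval θ f = _
  rw [← h1, aeval_eq_sum_range' h2]
  simp [Finset.sum_range_succ, Algebra.smul_def]

theorem quartic_back_aux (a b s t r : ℚ) (θ : ℂ) (h0 : θ ≠ 0)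
    (h4 : θ ^ 4 + a * θ ^ 2 + b = 0) (hs : s ^ 2 = b) (hne : -a + 2 * s ≠ 0)
    (ht : t ^ 2 = r * (-a + 2 * s)) :
    ∃ y ∈ IntermediateField.adjoin ℚ ({θ} : Set ℂ), y ^ 2 = (r : ℂ) := by
  have hmem : θ ∈ IntermediateField.adjoin ℚ ({θ} : Set ℂ) :=
    IntermediateField.mem_adjoin_simple_self ℚ θ
  have hQ (q : ℚ) : (q : ℂ) ∈ IntermediateField.adjoin ℚ ({θ} : Set ℂ) :=
    (IntermediateField.adjoin ℚ ({θ} : Set ℂ)).algebraMap_mem q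
  refine ⟨(θ + s / θ) * ((t / (-a + 2 * s) : ℚ) : ℂ),
    mul_mem (add_mem hmem (div_mem (hQ s) hmem)) (hQ _), ?_⟩
  have h1 : (θ + s / θ) ^ 2 = ((-a + 2 * s : ℚ) : ℂ) := by
    have hs' : (s : ℂ) ^ 2 = b := by exact_mod_cast hs
    push_cast
    field_simp
    linear_combination h4 + hs'
  rw [mul_pow, h1]
  norm_cast
  rw [div_pow, ht]
  field_simp

theorem square_in_quartic_stem_field_iff (a b : ℚ) (g : ℚ[X])
    (hg : g = X ^ 4 + C a * X ^ 2 + C b) (hirr : Irreducible g)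
    (θ : ℂ) (hθ : aeval θ g = 0) (r : ℚ) (hr : ¬ ∃ s : ℚ, s ^ 2 = r) :
    (∃ y ∈ IntermediateField.adjoin ℚ ({θ} : Set ℂ), y ^ 2 = (r : ℂ)) ↔
      ((∃ s : ℚ, s ^ 2 = r * (a ^ 2 - 4 * b)) ∨
        ∃ s : ℚ, s ^ 2 = b ∧
          ((∃ t : ℚ, t ^ 2 = r * (-a + 2 * s)) ∨
            (∃ t : ℚ, t ^ 2 = r * (-a - 2 * s)))) := by
  have ind := quartic_indep_aux a b g hg hirr θ hθ
  have h4 : θ ^ 4 + a * θ ^ 2 + b = 0 := by simpa [hg] using hθ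
  have h0 : θ ≠ 0 := by
    intro h
    have := ind 0 1 0 0 (by simp [h])
    simp at this
  have hdisc : a ^ 2 - 4 * b ≠ 0 := by
    intro h
    have h' : (a : ℂ) ^ 2 - 4 * b = 0 := by exact_mod_cast h
    have h2 : (2 * θ ^ 2 + a) ^ 2 = 0 := by linear_combination 4 * h4 + h'
    have h3 : 2 * θ ^ 2 + (a : ℂ) = 0 := by simpa using h2
    have := ind a 0 2 0 (by push_cast; linear_combination h3)
    simp at this
  constructor
  · rintro ⟨y, hy, hyr⟩
    obtain ⟨c0, c1, c2, c3, rfl⟩ := quartic_repr_aux a b g hg θ hθ y hy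
    -- split y = P + Q θ, where P, Q lie in the quadratic subfield
    obtain ⟨e0, e1, e2, e3⟩ := ind
      (c0 ^ 2 - b * c2 ^ 2 - 2 * b * c1 * c3 + a * b * c3 ^ 2 - r)
      (2 * (c0 * c1 - b * c2 * c3))
      (2 * c0 * c2 - a * c2 ^ 2 + c1 ^ 2 - 2 * a * c1 * c3 + (a ^ 2 - b) * c3 ^ 2)
      (2 * (c0 * c3 + c1 * c2 - a * c2 * c3)) (by
        push_cast
        linear_combination hyr - (c2 ^ 2 + 2 * c1 * c3 + 2 * c2 * c3 * θ
          + c3 ^ 2 * (θ ^ 2 - a)) * h4)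
    have hPQ : ((c0 : ℂ) + c2 * θ ^ 2) * (c1 + c3 * θ ^ 2) = 0 := by
      have e1' : (2 : ℂ) * (c0 * c1 - b * c2 * c3) = 0 := by exact_mod_cast e1
      have e3' : (2 : ℂ) * (c0 * c3 + c1 * c2 - a * c2 * c3) = 0 := by exact_mod_cast e3
      linear_combination e1' / 2 + e3' / 2 * θ ^ 2 + c2 * c3 * h4
    rcases mul_eq_zero.mp hPQ with h | h
    · obtain ⟨rfl, -, rfl, -⟩ := ind c0 0 c2 0 (by push_cast; linear_combination h)
      right
      have hc3 : c3 ≠ 0 := by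
        rintro rfl
        have hc1 : c1 = 0 := by simpa using e2
        subst hc1
        exact hr ⟨0, by linear_combination e0⟩
      have hs : (a - c1 / c3) ^ 2 = b := by
        field_simp
        linear_combination e2
      obtain ⟨s, hsd⟩ : ∃ s, s = a - c1 / c3 := ⟨_, rfl⟩
      rw [← hsd] at hs
      have hc1 : c1 = c3 * (a - s) := by rw [hsd]; field_simp; ring
      refine ⟨s, hs, Or.inl ⟨c3 * s * (a - 2 * s), ?_⟩⟩
      subst hc1
      subst hs
      linear_combination (-a + 2 * s) * e0
    · obtain ⟨rfl, -, rfl, -⟩ := ind c1 0 c3 0 (by push_cast; linear_combination h)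
      left
      have hc2 : c2 ≠ 0 := by
        rintro rfl
        exact hr ⟨c0, by linear_combination e0⟩
      have h5 : 2 * c0 - a * c2 = 0 := by
        apply (mul_eq_zero.mp (?_ : c2 * (2 * c0 - a * c2) = 0)).resolve_left hc2
        linear_combination e2
      have hc0 : c0 = a * c2 / 2 := by linarith
      subst hc0
      exact ⟨c2 * (a ^ 2 - 4 * b) / 2, by linear_combination (a ^ 2 - 4 * b) * e0⟩
  · rintro (⟨s, hs⟩ | ⟨s, hs, ⟨t, ht⟩ | ⟨t, ht⟩⟩)
    · have hmem : θ ∈ IntermediateField.adjoin ℚ ({θ} : Set ℂ) :=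
        IntermediateField.mem_adjoin_simple_self ℚ θ
      have hQ (q : ℚ) : (q : ℂ) ∈ IntermediateField.adjoin ℚ ({θ} : Set ℂ) :=
        (IntermediateField.adjoin ℚ ({θ} : Set ℂ)).algebraMap_mem q
      refine ⟨(((2 : ℚ) : ℂ) * θ ^ 2 + a) * ((s / (a ^ 2 - 4 * b) : ℚ) : ℂ),
        mul_mem (add_mem (mul_mem (hQ 2) (pow_mem hmem 2)) (hQ a)) (hQ _), ?_⟩
      have h1 : (((2 : ℚ) : ℂ) * θ ^ 2 + a) ^ 2 = ((a ^ 2 - 4 * b : ℚ) : ℂ) := by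
        push_cast
        linear_combination 4 * h4
      rw [mul_pow, h1]
      norm_cast
      rw [div_pow, hs]
      field_simp
    · refine quartic_back_aux a b s t r θ h0 h4 hs ?_ ht
      intro h
      exact hdisc (by linear_combination (-a - 2 * s) * h + 4 * hs)
    · refine quartic_back_aux a b (-s) t r θ h0 h4 (by linear_combination hs) ?_
        (by linear_combination ht)
      intro h
      exact hdisc (by linear_combination (-a + 2 * s) * h + 4 * hs)
end

section
/- Let a, b ∈ ℚ and suppose f(x) = x^12 + a·x^6 + b is irreducible over ℚ, and let θ ∈ ℂ be a root of f. Then for every r ∈ ℚ that is not a square in ℚ, r is a square in the field ℚ(θ) (the subfield of ℂ generated over ℚ by θ) if and only if r·(a^2 − 4b) is a square in ℚ, or there exists s ∈ ℚ with s^2 = b such that r·(−a + 2s) is a square in ℚ or r·(−a − 2s) is a square in ℚ. -/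
open Polynomial

/-- Data about the quartic subfield generated by `θ ^ 3`. -/
theorem quartic_minpoly (a b : ℚ) (hirr : Irreducible (X ^ 12 + C a * X ^ 6 + C b : ℚ[X]))
    (θ : ℂ) (hθ : aeval θ (X ^ 12 + C a * X ^ 6 + C b : ℚ[X]) = 0) :
    minpoly ℚ (θ ^ 3) = X ^ 4 + C a * X ^ 2 + C b := by
  have he : expand ℚ 3 (X ^ 4 + C a * X ^ 2 + C b : ℚ[X]) = X ^ 12 + C a * X ^ 6 + C b := by
    simp [← pow_mul]
  have hg : Irreducible (X ^ 4 + C a * X ^ 2 + C b : ℚ[X]) := by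
    rw [← he] at hirr
    exact of_irreducible_expand (by norm_num) hirr
  symm
  apply minpoly.eq_of_irreducible_of_monic hg
  · rw [← he, expand_aeval] at hθ
    exact hθ
  · monicity!

theorem quartic_indep (a b : ℚ) (u : ℂ)
    (hm : minpoly ℚ u = X ^ 4 + C a * X ^ 2 + C b)
    (c₀ c₁ c₂ c₃ : ℚ) (h : (c₀ : ℂ) + c₁ * u + c₂ * u ^ 2 + c₃ * u ^ 3 = 0) :
    c₀ = 0 ∧ c₁ = 0 ∧ c₂ = 0 ∧ c₃ = 0 := by
  have hd : (X ^ 4 + C a * X ^ 2 + C b : ℚ[X]).degree = 4 := by compute_degree!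
  have hp : (C c₃ * X ^ 3 + C c₂ * X ^ 2 + C c₁ * X + C c₀ : ℚ[X]) = 0 := by
    by_contra hne
    have h1 := minpoly.degree_le_of_ne_zero ℚ u hne (by
      simp only [map_add, map_mul, aeval_C, aeval_X, map_pow, eq_ratCast]
      linear_combination h)
    rw [hm, hd] at h1
    have h2 : (C c₃ * X ^ 3 + C c₂ * X ^ 2 + C c₁ * X + C c₀ : ℚ[X]).degree ≤ 3 := degree_cubic_le
    exact absurd (h1.trans h2) (by decide)
  refine ⟨?_, ?_, ?_, ?_⟩
  · simpa [coeff_X, coeff_C, coeff_X_pow] using congrArg (fun p => coeff p 0) hp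
  · simpa [coeff_X, coeff_C, coeff_X_pow] using congrArg (fun p => coeff p 1) hp
  · simpa [coeff_X, coeff_C, coeff_X_pow] using congrArg (fun p => coeff p 2) hp
  · simpa [coeff_X, coeff_C, coeff_X_pow] using congrArg (fun p => coeff p 3) hp

theorem quartic_mem (a b : ℚ) (u : ℂ)
    (hm : minpoly ℚ u = X ^ 4 + C a * X ^ 2 + C b)
    (y : ℂ) (hy : y ∈ IntermediateField.adjoin ℚ ({u} : Set ℂ)) :
    ∃ c₀ c₁ c₂ c₃ : ℚ, y = (c₀ : ℂ) + c₁ * u + c₂ * u ^ 2 + c₃ * u ^ 3 := by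
  have hmon : (X ^ 4 + C a * X ^ 2 + C b : ℚ[X]).Monic := by monicity!
  have hnd : (X ^ 4 + C a * X ^ 2 + C b : ℚ[X]).natDegree = 4 := by compute_degree!
  have hint : IsIntegral ℚ u := by
    by_contra hn
    rw [minpoly.eq_zero hn] at hm
    rw [← hm] at hmon
    exact hmon.ne_zero rfl
  have hy' : y ∈ (IntermediateField.adjoin ℚ ({u} : Set ℂ)).toSubalgebra := hy
  rw [IntermediateField.adjoin_simple_toSubalgebra_of_isAlgebraic hint.isAlgebraic,
    Algebra.adjoin_singleton_eq_range_aeval] at hy'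
  obtain ⟨p, rfl⟩ := hy'
  have h0 : aeval u (X ^ 4 + C a * X ^ 2 + C b : ℚ[X]) = 0 := by rw [← hm]; exact minpoly.aeval _ _
  have h1 : aeval u (p %ₘ (X ^ 4 + C a * X ^ 2 + C b : ℚ[X])) = aeval u p :=
    aeval_modByMonic_eq_self_of_root h0
  have h2 : (p %ₘ (X ^ 4 + C a * X ^ 2 + C b : ℚ[X])).natDegree < 4 := by
    have := natDegree_modByMonic_lt p hmon (by
      intro h; rw [h] at hnd; simp at hnd)
    rwa [hnd] at this
  generalize p %ₘ (X ^ 4 + C a * X ^ 2 + C b : ℚ[X]) = g at h1 h2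
  refine ⟨g.coeff 0, g.coeff 1, g.coeff 2, g.coeff 3, h1.symm.trans ?_⟩
  rw [aeval_eq_sum_range' h2]
  simp only [Finset.sum_range_succ, Finset.sum_range_zero, Algebra.smul_def, eq_ratCast]
  simp

/-- Descent of a square root along the cubic extension `ℚ(θ) / ℚ(θ ^ 3)`. -/
theorem descend_cubic (a b : ℚ) (hirr : Irreducible (X ^ 12 + C a * X ^ 6 + C b : ℚ[X]))
    (θ : ℂ) (hθ : aeval θ (X ^ 12 + C a * X ^ 6 + C b : ℚ[X]) = 0) (r : ℚ) (hr0 : r ≠ 0)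
    (y : ℂ) (hy : y ∈ IntermediateField.adjoin ℚ ({θ} : Set ℂ)) (hyr : y ^ 2 = (r : ℂ)) :
    ∃ z ∈ IntermediateField.adjoin ℚ ({θ ^ 3} : Set ℂ), z ^ 2 = (r : ℂ) := by
  have hm := quartic_minpoly a b hirr θ hθ
  have hm12 : minpoly ℚ θ = X ^ 12 + C a * X ^ 6 + C b := by
    symm
    exact minpoly.eq_of_irreducible_of_monic hirr hθ (by monicity!)
  have hi : IsIntegral ℚ θ := by
    refine ⟨X ^ 12 + C a * X ^ 6 + C b, by monicity!, ?_⟩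
    exact hθ
  have hle : IntermediateField.adjoin ℚ ({θ ^ 3} : Set ℂ) ≤
      IntermediateField.adjoin ℚ ({θ} : Set ℂ) := by
    rw [IntermediateField.adjoin_simple_le_iff]
    exact pow_mem (IntermediateField.mem_adjoin_simple_self ℚ θ) 3
  have h12 : Module.finrank ℚ (IntermediateField.adjoin ℚ ({θ} : Set ℂ)) = 12 := by
    rw [IntermediateField.adjoin.finrank hi, hm12]
    compute_degree!
  have h4 : Module.finrank ℚ (IntermediateField.adjoin ℚ ({θ ^ 3} : Set ℂ)) = 4 := by
    rw [IntermediateField.adjoin.finrank (hi.pow 3), hm]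
    compute_degree!
  have h3 := IntermediateField.finrank_bot_mul_relfinrank hle
  rw [h12, h4, IntermediateField.relfinrank_eq_finrank_of_le hle] at h3
  have h3' : Module.finrank (IntermediateField.adjoin ℚ ({θ ^ 3} : Set ℂ))
    (IntermediateField.extendScalars hle) = 3 := by omega
  let y' : IntermediateField.extendScalars hle := ⟨y, hy⟩
  have hy' : y' ^ 2 = algebraMap (IntermediateField.adjoin ℚ ({θ ^ 3} : Set ℂ)) _ (r : _) := by
    apply Subtype.ext
    simpa [y'] using hyr
  have hN := congrArg (Algebra.norm (IntermediateField.adjoin ℚ ({θ ^ 3} : Set ℂ))) hy'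
  rw [map_pow, Algebra.norm_algebraMap, h3'] at hN
  set N := Algebra.norm (IntermediateField.adjoin ℚ ({θ ^ 3} : Set ℂ)) y' with hNdef
  have hN' : (N : ℂ) ^ 2 = (r : ℂ) ^ 3 := by
    have := congrArg (fun x : IntermediateField.adjoin ℚ ({θ ^ 3} : Set ℂ) => (x : ℂ)) hN
    simpa using this
  refine ⟨((N / (r : IntermediateField.adjoin ℚ ({θ ^ 3} : Set ℂ)) :
    IntermediateField.adjoin ℚ ({θ ^ 3} : Set ℂ)) : ℂ), SetLike.coe_mem _, ?_⟩
  have hrc : (r : ℂ) ≠ 0 := by exact_mod_cast hr0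
  push_cast
  rw [div_pow, hN']
  field_simp

theorem square_in_dodecic_stem_field_iff (a b : ℚ) (f : ℚ[X])
    (hf : f = X ^ 12 + C a * X ^ 6 + C b) (hirr : Irreducible f)
    (θ : ℂ) (hθ : aeval θ f = 0) (r : ℚ) (hr : ¬ ∃ s : ℚ, s ^ 2 = r) :
    (∃ y ∈ IntermediateField.adjoin ℚ ({θ} : Set ℂ), y ^ 2 = (r : ℂ)) ↔
      ((∃ s : ℚ, s ^ 2 = r * (a ^ 2 - 4 * b)) ∨
        ∃ s : ℚ, s ^ 2 = b ∧
          ((∃ t : ℚ, t ^ 2 = r * (-a + 2 * s)) ∨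
            (∃ t : ℚ, t ^ 2 = r * (-a - 2 * s)))) := by
  subst hf
  have hr0 : r ≠ 0 := by
    rintro rfl
    exact hr ⟨0, by norm_num⟩
  have hm := quartic_minpoly a b hirr θ hθ
  have ind := quartic_indep a b (θ ^ 3) hm
  have hmem : θ ^ 3 ∈ IntermediateField.adjoin ℚ ({θ} : Set ℂ) :=
    pow_mem (IntermediateField.mem_adjoin_simple_self ℚ θ) 3
  have hq : ∀ q : ℚ, (q : ℂ) ∈ IntermediateField.adjoin ℚ ({θ} : Set ℂ) := fun q => by
    simpa using (IntermediateField.adjoin ℚ ({θ} : Set ℂ)).algebraMap_mem q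
  have hu : (θ ^ 3) ^ 4 + a * (θ ^ 3) ^ 2 + b = 0 := by
    simp only [map_add, map_mul, aeval_C, aeval_X, map_pow, eq_ratCast] at hθ
    linear_combination hθ
  constructor
  · rintro ⟨y, hy, hyr⟩
    obtain ⟨z, hz, hzr⟩ := descend_cubic a b hirr θ hθ r hr0 y hy hyr
    obtain ⟨p, q, c, d, rfl⟩ := quartic_mem a b (θ ^ 3) hm z hz
    generalize θ ^ 3 = u at *
    obtain ⟨e0, e1, e2, e3⟩ := ind (p ^ 2 - r - b * (c ^ 2 + 2 * q * d) + a * b * d ^ 2)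
      (2 * p * q - 2 * b * c * d)
      (2 * p * c + q ^ 2 - a * (c ^ 2 + 2 * q * d) - b * d ^ 2 + a ^ 2 * d ^ 2)
      (2 * p * d + 2 * q * c - 2 * a * c * d) (by
        push_cast
        linear_combination hzr - (c ^ 2 + 2 * q * d + 2 * c * d * u + d ^ 2 * u ^ 2 - a * d ^ 2) * hu)
    have hprod : ((p : ℂ) + c * u ^ 2) * (q + d * u ^ 2) = 0 := by
      have e1' : ((2 * p * q - 2 * b * c * d : ℚ) : ℂ) = 0 := by rw [e1]; simp
      have e3' : ((2 * p * d + 2 * q * c - 2 * a * c * d : ℚ) : ℂ) = 0 := by rw [e3]; simp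
      push_cast at e1' e3'
      linear_combination e1' / 2 + u ^ 2 * e3' / 2 + c * d * hu
    rcases mul_eq_zero.1 hprod with h | h
    · obtain ⟨hp, -, hc, -⟩ := ind p 0 c 0 (by push_cast; linear_combination h)
      subst hp hc
      right
      have hd : d ≠ 0 := by
        rintro rfl
        apply hr0
        linear_combination -e0
      have hs : (q / d - a) ^ 2 = b := by
        field_simp
        linear_combination e2
      refine ⟨q / d - a, hs, Or.inr ⟨(q - a * d) * (-a - 2 * (q / d - a)), ?_⟩⟩
      have hqd : q = d * (q / d) := by field_simp
      generalize q / d = k at *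
      subst hqd
      have hrr : r = - b * (2 * d * k * d) + a * b * d ^ 2 := by linear_combination -e0
      rw [hrr, ← hs]
      ring
    · obtain ⟨hq', -, hd, -⟩ := ind q 0 d 0 (by push_cast; linear_combination h)
      subst hq' hd
      left
      have h2 : c * (2 * p - a * c) = 0 := by linear_combination e2
      rcases mul_eq_zero.1 h2 with h | h
      · subst h
        exact absurd ⟨p, by linear_combination e0⟩ hr
      · have hp : p = a * c / 2 := by linear_combination h / 2
        subst hp
        refine ⟨c * (a ^ 2 - 4 * b) / 2, ?_⟩
        linear_combination (a ^ 2 - 4 * b) * e0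
  · have hD : a ^ 2 - 4 * b ≠ 0 := by
      intro hD
      have hD' : ((a ^ 2 - 4 * b : ℚ) : ℂ) = 0 := by rw [hD]; simp
      push_cast at hD'
      have h : ((θ ^ 3) ^ 2 + a / 2 : ℂ) ^ 2 = 0 := by linear_combination hu + hD' / 4
      have h' := pow_eq_zero_iff (two_ne_zero) |>.1 h
      have := ind (a / 2) 0 1 0 (by push_cast; linear_combination h')
      simp at this
    have hu0 : θ ^ 3 ≠ 0 := by
      intro h
      have := ind 0 1 0 0 (by push_cast; linear_combination h)
      simp at this
    -- a square root of `m ≠ 0` in the field together with `r * m` a rational square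
    have key : ∀ (m w : ℚ) (v : ℂ), m ≠ 0 → w ^ 2 = r * m →
        v ∈ IntermediateField.adjoin ℚ ({θ} : Set ℂ) → v ^ 2 = (m : ℂ) →
        ∃ y ∈ IntermediateField.adjoin ℚ ({θ} : Set ℂ), y ^ 2 = (r : ℂ) := by
      intro m w v hm0 hw hv hvm
      refine ⟨w / v, div_mem (hq w) hv, ?_⟩
      have hmc : (m : ℂ) ≠ 0 := by exact_mod_cast hm0
      have hwc : (w : ℂ) ^ 2 = r * m := by exact_mod_cast hw
      rw [div_pow, hvm, hwc]
      field_simp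
    rintro (⟨w, hw⟩ | ⟨s, hs, ⟨w, hw⟩ | ⟨w, hw⟩⟩)
    · refine key _ w ((2 : ℚ) * (θ ^ 3) ^ 2 + a) hD hw
        (add_mem (mul_mem (hq _) (pow_mem hmem 2)) (hq _)) ?_
      push_cast
      linear_combination 4 * hu
    · have hsc : (s : ℂ) ^ 2 = b := by exact_mod_cast hs
      refine key _ w (θ ^ 3 + s / θ ^ 3) ?_ hw (add_mem hmem (div_mem (hq _) hmem)) ?_
      · intro h
        apply hD
        linear_combination (-a - 2 * s) * h + 4 * hs
      · generalize θ ^ 3 = u at *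
        push_cast
        field_simp
        linear_combination hu + hsc
    · have hsc : (s : ℂ) ^ 2 = b := by exact_mod_cast hs
      refine key _ w (θ ^ 3 - s / θ ^ 3) ?_ hw (sub_mem hmem (div_mem (hq _) hmem)) ?_
      · intro h
        apply hD
        linear_combination (-a + 2 * s) * h + 4 * hs
      · generalize θ ^ 3 = u at *
        push_cast
        field_simp
        linear_combination hu + hsc
end

section
/- Let a, b ∈ ℚ and suppose f(x) = x^12 + a·x^6 + b is irreducible over ℚ. Then it is not the case that both b·(a^2 − 4b) is a square in ℚ and 3·(4b − a^2) is a square in ℚ. -/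
open Polynomial

theorem not_both_squares (a b : ℚ) (f : ℚ[X])
    (hf : f = X ^ 12 + C a * X ^ 6 + C b) (hirr : Irreducible f) :
    ¬ ((∃ s : ℚ, s ^ 2 = b * (a ^ 2 - 4 * b)) ∧
        (∃ s : ℚ, s ^ 2 = 3 * (4 * b - a ^ 2))) := by
  rintro ⟨⟨s, hs⟩, ⟨t, ht⟩⟩
  have h1 : a ^ 2 ≤ 4 * b := by nlinarith [sq_nonneg t]
  rcases h1.lt_or_eq with h | h
  · have hb : 0 < b := by nlinarith [sq_nonneg a]
    nlinarith [sq_nonneg s, mul_pos hb (sub_pos.mpr h)]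
  · have hb : b = (a / 2) ^ 2 := by linarith
    have hfac : f = (X ^ 6 + C (a / 2)) * (X ^ 6 + C (a / 2)) := by
      have ha : C a = C (a / 2) + C (a / 2) := by rw [← C_add]; congr 1; ring
      rw [hf, hb, ha, C_pow]
      ring
    have hdeg : (X ^ 6 + C (a / 2) : ℚ[X]).natDegree = 6 := natDegree_X_pow_add_C
    have hu : IsUnit (X ^ 6 + C (a / 2) : ℚ[X]) := by
      rcases hirr.isUnit_or_isUnit hfac with h | h <;> exact h
    have := natDegree_eq_zero_of_isUnit hu
    omega
end

section
/- Let a, b, r ∈ ℚ with b ≠ 0 and r^2 ≠ b, and suppose r^3 − 3·b·r + a·b = 0. Let θ ∈ ℂ satisfy θ^12 + a·θ^6 + b = 0. Then ( (r/(b − r^2))·θ^10 + ((−b^2 + 3·b·r^2 − r^4)/(b·(b − r^2)))·θ^4 )^3 = b. In particular, b is a cube in the field ℚ(θ). -/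
open Polynomial

theorem cube_root_of_b_in_stem_field (a b r : ℚ) (hb : b ≠ 0) (hrb : r ^ 2 ≠ b)
    (hr : r ^ 3 - 3 * b * r + a * b = 0) (θ : ℂ)
    (hθ : θ ^ 12 + (a : ℂ) * θ ^ 6 + (b : ℂ) = 0) :
    (((r / (b - r ^ 2) : ℚ) : ℂ) * θ ^ 10 +
        (((-b ^ 2 + 3 * b * r ^ 2 - r ^ 4) / (b * (b - r ^ 2)) : ℚ) : ℂ) * θ ^ 4) ^ 3
      = (b : ℂ) ∧
      ∃ y ∈ IntermediateField.adjoin ℚ ({θ} : Set ℂ), y ^ 3 = (b : ℂ) := by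
  have key : (((r / (b - r ^ 2) : ℚ) : ℂ) * θ ^ 10 +
        (((-b ^ 2 + 3 * b * r ^ 2 - r ^ 4) / (b * (b - r ^ 2)) : ℚ) : ℂ) * θ ^ 4) ^ 3
      = (b : ℂ) := by
    have hd : b - r ^ 2 ≠ 0 := fun h => hrb (by linarith)
    have hB : (b : ℂ) ≠ 0 := by exact_mod_cast hb
    have hD : (b : ℂ) - (r : ℂ) ^ 2 ≠ 0 := by exact_mod_cast hd
    have hR : (r : ℂ) ^ 3 - 3 * b * r + a * b = 0 := by exact_mod_cast hr
    push_cast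
    generalize (a : ℂ) = A at *
    generalize (b : ℂ) = B at *
    generalize (r : ℂ) = R at *
    obtain ⟨t, ht⟩ : ∃ t, t = θ ^ 6 := ⟨_, rfl⟩
    have h : B * t ^ 2 + (3 * B * R - R ^ 3) * t + B ^ 2 = 0 := by
      rw [ht]; linear_combination B * hθ - θ ^ 6 * hR
    obtain ⟨u, hu⟩ : ∃ u, u = R * B * t + (-B ^ 2 + 3 * B * R ^ 2 - R ^ 4) := ⟨_, rfl⟩
    have h1 : t * u = -B ^ 2 * (R + t) := by
      rw [hu]; linear_combination R * h
    have h2 : B * (t + R) ^ 2 = (R ^ 2 - B) * (R * t + B) := by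
      linear_combination h
    have h3 : (R * t + B) * u = -B * (B - R ^ 2) ^ 2 := by
      rw [hu]; linear_combination R ^ 2 * h
    have h4 : t ^ 2 * u ^ 3 = B ^ 4 * (B - R ^ 2) ^ 3 := by
      calc t ^ 2 * u ^ 3 = (t * u) ^ 2 * u := by ring
        _ = B ^ 3 * (B * (t + R) ^ 2) * u := by rw [h1]; ring
        _ = B ^ 3 * (R ^ 2 - B) * ((R * t + B) * u) := by rw [h2]; ring
        _ = _ := by rw [h3]; ring
    have h5 : R / (B - R ^ 2) * θ ^ 10 +
        (-B ^ 2 + 3 * B * R ^ 2 - R ^ 4) / (B * (B - R ^ 2)) * θ ^ 4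
        = θ ^ 4 * u / (B * (B - R ^ 2)) := by
      rw [hu, ht]; field_simp
    rw [h5, div_pow, div_eq_iff (pow_ne_zero _ (mul_ne_zero hB hD))]
    calc (θ ^ 4 * u) ^ 3 = t ^ 2 * u ^ 3 := by rw [ht]; ring
      _ = _ := by rw [h4]; ring
  refine ⟨key, _, ?_, key⟩
  have hm := IntermediateField.mem_adjoin_simple_self ℚ θ
  have hq : ∀ q : ℚ, (q : ℂ) ∈ IntermediateField.adjoin ℚ ({θ} : Set ℂ) := fun q =>
    (IntermediateField.adjoin ℚ ({θ} : Set ℂ)).algebraMap_mem q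
  exact add_mem (mul_mem (hq _) (pow_mem hm _)) (mul_mem (hq _) (pow_mem hm _))
end

section
/- Let a, b ∈ ℚ and suppose f(x) = x^12 + a·x^6 + b is irreducible over ℚ, and let θ ∈ ℂ be a root of f. Then there exist s, c ∈ ℂ with s^2 = −3 and c^6 = b such that the subfield of ℂ generated over ℚ by the set of all roots of f in ℂ (i.e., the splitting field of f inside ℂ) equals the subfield of ℂ generated over ℚ by {θ, s, c}. -/
open Polynomial

lemma mem_of_pow_six_eq_s7 (L : IntermediateField ℚ ℂ) (s t r : ℂ) (hs : s ∈ L) (ht : t ∈ L)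
    (h3 : s ^ 2 = -3) (h : r ^ 6 = t ^ 6) : r ∈ L := by
  have h2 : (2 : ℂ) ∈ L := ofNat_mem L 2
  have hp : (r - t) * (r + t) * ((2 * r + t - s * t) * (2 * r + t + s * t)) *
      ((2 * r - t - s * t) * (2 * r - t + s * t)) = 0 := by
    have e1 : (2 * r + t - s * t) * (2 * r + t + s * t) = 4 * (r ^ 2 + r * t + t ^ 2) := by
      linear_combination (-t ^ 2) * h3
    have e2 : (2 * r - t - s * t) * (2 * r - t + s * t) = 4 * (r ^ 2 - r * t + t ^ 2) := by
      linear_combination (-t ^ 2) * h3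
    rw [e1, e2]
    linear_combination 16 * h
  have hst : s * t ∈ L := L.mul_mem hs ht
  have key : ∀ x ∈ L, 2 * r = x → r ∈ L := by
    intro x hx e
    have : r = x / 2 := by rw [← e]; ring
    rw [this]
    exact L.div_mem hx h2
  rcases mul_eq_zero.1 hp with hp | hp
  · rcases mul_eq_zero.1 hp with hp | hp
    · rcases mul_eq_zero.1 hp with hp | hp
      · exact key (t + t) (L.add_mem ht ht) (by linear_combination 2 * hp)
      · exact key (-t - t) (L.sub_mem (L.neg_mem ht) ht) (by linear_combination 2 * hp)
    · rcases mul_eq_zero.1 hp with hp | hp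
      · exact key (s * t - t) (L.sub_mem hst ht) (by linear_combination hp)
      · exact key (-(s * t) - t) (L.sub_mem (L.neg_mem hst) ht) (by linear_combination hp)
  · rcases mul_eq_zero.1 hp with hp | hp
    · exact key (s * t + t) (L.add_mem hst ht) (by linear_combination hp)
    · exact key (-(s * t) + t) (L.add_mem (L.neg_mem hst) ht) (by linear_combination hp)

theorem splitting_field_eq_adjoin_theta_sqrt_neg_three_sixth_root (a b : ℚ) (f : ℚ[X])
    (hf : f = X ^ 12 + C a * X ^ 6 + C b) (hirr : Irreducible f)
    (θ : ℂ) (hθ : aeval θ f = 0) :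
    ∃ s c : ℂ, s ^ 2 = -3 ∧ c ^ 6 = (b : ℂ) ∧
      IntermediateField.adjoin ℚ (f.rootSet ℂ) =
        IntermediateField.adjoin ℚ ({θ, s, c} : Set ℂ) := by
  have hev : ∀ r : ℂ, aeval r f = r ^ 12 + a * r ^ 6 + b := by
    intro r
    simp [hf]
  have hroot : ∀ r : ℂ, r ∈ f.rootSet ℂ ↔ r ^ 12 + a * r ^ 6 + b = 0 := by
    intro r
    rw [mem_rootSet, hev]
    simp [hirr.ne_zero]
  rw [hev] at hθ
  have hθ0 : θ ≠ 0 := by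
    rintro rfl
    have hb : b = 0 := by simpa using hθ
    have hfac : f = X * (X ^ 11 + C a * X ^ 5) := by
      rw [hf, hb, C_0]; ring
    rcases hirr.isUnit_or_isUnit hfac with h | h
    · exact not_isUnit_X h
    · have hfac2 : (X ^ 11 + C a * X ^ 5 : ℚ[X]) = X * (X ^ 10 + C a * X ^ 4) := by ring
      rw [hfac2] at h
      exact not_isUnit_X (isUnit_of_mul_isUnit_left h)
  obtain ⟨φ, hφ⟩ := IsAlgClosed.exists_pow_nat_eq (-a - θ ^ 6 : ℂ) (n := 6) (by norm_num)
  obtain ⟨s, hs⟩ := IsAlgClosed.exists_pow_nat_eq (-3 : ℂ) (n := 2) (by norm_num)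
  refine ⟨s, θ * φ, hs, ?_, le_antisymm ?_ ?_⟩
  · rw [mul_pow, hφ]
    linear_combination -hθ
  · rw [IntermediateField.adjoin_le_iff]
    intro r hr
    rw [hroot] at hr
    set L := IntermediateField.adjoin ℚ ({θ, s, θ * φ} : Set ℂ) with hL
    have m1 : θ ∈ L := IntermediateField.subset_adjoin _ _ (by simp)
    have m2 : s ∈ L := IntermediateField.subset_adjoin _ _ (by simp)
    have m3 : θ * φ ∈ L := IntermediateField.subset_adjoin _ _ (by simp)
    have m4 : φ ∈ L := by
      have : φ = θ * φ / θ := by field_simp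
      rw [this]
      exact L.div_mem m3 m1
    have hp : (r ^ 6 - θ ^ 6) * (r ^ 6 - φ ^ 6) = 0 := by
      rw [hφ]
      linear_combination hr - hθ
    rcases mul_eq_zero.1 hp with hp | hp
    · exact mem_of_pow_six_eq_s7 L s θ r m2 m1 hs (sub_eq_zero.1 hp)
    · exact mem_of_pow_six_eq_s7 L s φ r m2 m4 hs (sub_eq_zero.1 hp)
  · rw [IntermediateField.adjoin_le_iff]
    set K := IntermediateField.adjoin ℚ (f.rootSet ℂ) with hK
    have mem : ∀ r : ℂ, r ^ 12 + a * r ^ 6 + b = 0 → r ∈ K := fun r hr =>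
      IntermediateField.subset_adjoin _ _ ((hroot r).2 hr)
    have m1 : θ ∈ K := mem θ hθ
    have m2 : φ ∈ K := mem φ (by
      have : φ ^ 12 = (φ ^ 6) ^ 2 := by ring
      rw [this, hφ]
      linear_combination hθ)
    have hz : ((1 + s) / 2) ^ 6 = 1 := by
      have h3 : ((1 + s) / 2) ^ 3 = -1 := by
        linear_combination (3 + s) / 8 * hs
      have : ((1 + s) / 2) ^ 6 = (((1 + s) / 2) ^ 3) ^ 2 := by ring
      rw [this, h3]; norm_num
    have m3 : θ * ((1 + s) / 2) ∈ K := mem _ (by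
      have : (θ * ((1 + s) / 2)) ^ 12 = θ ^ 12 * (((1 + s) / 2) ^ 6) ^ 2 := by ring
      rw [this, mul_pow, hz]
      linear_combination hθ)
    have m4 : s ∈ K := by
      have e : s = (θ * ((1 + s) / 2) + θ * ((1 + s) / 2) - θ) / θ := by
        field_simp
        ring
      rw [e]
      exact K.div_mem (K.sub_mem (K.add_mem m3 m3) m1) m1
    rintro x (rfl | rfl | rfl)
    · exact m1
    · exact m4
    · exact K.mul_mem m1 m2
end

section
/- Let a, b ∈ ℚ and suppose f(x) = x^12 + a·x^6 + b is irreducible over ℚ. Assume: b is a square in ℚ; 3·(4b − a^2) is not a square in ℚ; there exists s ∈ ℚ with s^2 = b such that 3·(a + 2s) is a square in ℚ or 3·(a − 2s) is a square in ℚ; and either b is a cube in ℚ or the cubic x^3 − 3·b·x + a·b has a rational root. Then the Galois group of f over ℚ has order 12. -/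
open Polynomial

theorem aux_sixth {L : Type*} [Field L] [Algebra ℚ L] (K : IntermediateField ℚ L) (e z x : L)
    (he : e ∈ K) (hz : z ∈ K) (he2 : e ^ 2 = -3) (h : x ^ 6 = z ^ 6) : x ∈ K := by
  have : CharZero L := algebraRat.charZero L
  have h2 : (2 : L) ∈ K := ofNat_mem K 2
  have hp : (1 + e) / 2 * z ∈ K := mul_mem (div_mem (add_mem (one_mem _) he) h2) hz
  have hm : (1 - e) / 2 * z ∈ K := mul_mem (div_mem (sub_mem (one_mem _) he) h2) hz
  have key : (x - z) * ((x + z) * ((x - (1 + e) / 2 * z) * ((x + (1 + e) / 2 * z) *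
      ((x - (1 - e) / 2 * z) * (x + (1 - e) / 2 * z))))) = 0 := by
    have h1 : (x - (1 + e) / 2 * z) * (x - (1 - e) / 2 * z) = x ^ 2 - x * z + z ^ 2 := by
      linear_combination (-z ^ 2 / 4) * he2
    have h2 : (x + (1 + e) / 2 * z) * (x + (1 - e) / 2 * z) = x ^ 2 + x * z + z ^ 2 := by
      linear_combination (-z ^ 2 / 4) * he2
    calc _ = (x - z) * (x + z) * ((x - (1 + e) / 2 * z) * (x - (1 - e) / 2 * z)) *
          ((x + (1 + e) / 2 * z) * (x + (1 - e) / 2 * z)) := by ring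
      _ = 0 := by rw [h1, h2]; linear_combination h
  simp only [mul_eq_zero, sub_eq_zero, add_eq_zero_iff_eq_neg] at key
  rcases key with h | h | h | h | h | h <;> rw [h]
  · exact hz
  · exact neg_mem hz
  · exact hp
  · exact neg_mem hp
  · exact hm
  · exact neg_mem hm

theorem core_finrank (L : Type*) [Field L] [Algebra ℚ L] (a b : ℚ) (f : ℚ[X]) [IsSplittingField ℚ L f]
    (hf : f = X ^ 12 + C a * X ^ 6 + C b) (hirr : Irreducible f)
    (hb_sq : ∃ s : ℚ, s ^ 2 = b)
    (hd : ¬ ∃ s : ℚ, s ^ 2 = 3 * (4 * b - a ^ 2))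
    (hsq : ∃ s : ℚ, s ^ 2 = b ∧ ((∃ t : ℚ, t ^ 2 = 3 * (a + 2 * s)) ∨ ∃ t : ℚ, t ^ 2 = 3 * (a - 2 * s)))
    (hcr : (∃ c : ℚ, c ^ 3 = b) ∨ ∃ r : ℚ, r ^ 3 - 3 * b * r + a * b = 0) :
    Module.finrank ℚ L = 12 := by
  have hdeg : f.natDegree = 12 := by rw [hf]; compute_degree!
  have hb0 : b ≠ 0 := by
    intro h0
    refine hirr.not_isRoot_of_natDegree_ne_one (by omega) (x := 0) ?_
    simp [hf, h0]
  have hsqne : ∀ c : ℚ, a = 2 * c → b = c ^ 2 → False := by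
    rintro c rfl rfl
    refine hirr.not_isSquare ⟨X ^ 6 + C c, ?_⟩
    rw [hf]; simp only [C_mul, C_pow, C_ofNat]; ring
  obtain ⟨s, t, hs, ht⟩ : ∃ s t : ℚ, s ^ 2 = b ∧ t ^ 2 = 3 * (a + 2 * s) := by
    obtain ⟨s, hs, ⟨t, ht⟩ | ⟨t, ht⟩⟩ := hsq
    · exact ⟨s, t, hs, ht⟩
    · exact ⟨-s, t, by rw [← hs]; ring, by rw [ht]; ring⟩
  have ht0 : t ≠ 0 := by
    rintro rfl
    exact hsqne (-s) (by linarith) (by rw [← hs]; ring)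
  have : CharZero L := algebraRat.charZero L
  have : FiniteDimensional ℚ L := IsSplittingField.finiteDimensional L f
  have hspl : (f.map (algebraMap ℚ L)).Splits := IsSplittingField.splits L f
  obtain ⟨θ, hθ⟩ := hspl.exists_eval_eq_zero (by
    rw [degree_map]; exact (degree_pos_of_irreducible hirr).ne')
  have hcoe : ∀ q : ℚ, algebraMap ℚ L q = (q : L) := fun q => eq_ratCast _ q
  have hev : ∀ x : L, aeval x f = x ^ 12 + (a : L) * x ^ 6 + (b : L) := by
    intro x; simp [hf, hcoe]
  have hθ' : aeval θ f = 0 := by rw [← eval_map_algebraMap]; exact hθ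
  have hint : IsIntegral ℚ θ := .of_finite ℚ θ
  have hmin : (minpoly ℚ θ).natDegree = 12 := by
    have : f.Monic := by rw [hf]; monicity!
    rw [← minpoly.eq_of_irreducible_of_monic hirr hθ' this, hdeg]
  rw [hev] at hθ'
  set K := IntermediateField.adjoin ℚ {θ} with hK
  have hθK : θ ∈ K := IntermediateField.mem_adjoin_simple_self ℚ θ
  have hq : ∀ q : ℚ, (q : L) ∈ K := fun q => by rw [← hcoe]; exact K.algebraMap_mem q
  have hbL : (b : L) ≠ 0 := by exact_mod_cast hb0
  have htL : (t : L) ≠ 0 := by exact_mod_cast ht0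
  have hsL : (s : L) ^ 2 = b := by exact_mod_cast hs
  have htsL : (t : L) ^ 2 = 3 * (a + 2 * s) := by exact_mod_cast congrArg (Rat.cast (K := L)) ht
  have hθ0 : θ ≠ 0 := by
    rintro rfl; apply hbL; simpa using hθ'
  obtain ⟨e, heK, he⟩ : ∃ e ∈ K, e ^ 2 = -3 := by
    have hu : 3 * (θ ^ 3 - s / θ ^ 3) ^ 2 = -(t : L) ^ 2 := by
      field_simp
      linear_combination 3 * hθ' + θ ^ 6 * htsL + 3 * hsL
    have hu0 : θ ^ 3 - s / θ ^ 3 ≠ 0 := by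
      intro h; rw [h] at hu; apply htL; simpa using hu.symm
    refine ⟨t / (θ ^ 3 - s / θ ^ 3), div_mem (hq t) (sub_mem (pow_mem hθK 3)
      (div_mem (hq s) (pow_mem hθK 3))), ?_⟩
    rw [div_pow, div_eq_iff (pow_ne_zero 2 hu0)]
    linear_combination hu
  obtain ⟨v, hvK, hv⟩ : ∃ v ∈ K, v ^ 3 = (b : L) := by
    rcases hcr with ⟨c, hc⟩ | ⟨r, hr⟩
    · exact ⟨c, hq c, by exact_mod_cast hc⟩
    · have hrb : r ^ 2 - b ≠ 0 := by
        intro h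
        refine hsqne r ?_ (by linarith)
        have : b * (a - 2 * r) = 0 := by linear_combination hr - r * h
        rcases mul_eq_zero.1 this with h | h
        · exact absurd h hb0
        · linarith
      have hrbL : (r : L) ^ 2 - b ≠ 0 := by exact_mod_cast hrb
      have hrL : (r : L) ^ 3 - 3 * b * r + a * b = 0 := by
        exact_mod_cast congrArg (Rat.cast (K := L)) hr
      refine ⟨b * (θ ^ 6 + r) / (θ ^ 2 * (r ^ 2 - b)), div_mem (mul_mem (hq b)
        (add_mem (pow_mem hθK 6) (hq r))) (mul_mem (pow_mem hθK 2)
        (sub_mem (pow_mem (hq r) 2) (hq b))), ?_⟩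
      have H : (b : L) * θ ^ 12 + (3 * b * r - r ^ 3) * θ ^ 6 + b ^ 2 = 0 := by
        linear_combination b * hθ' - θ ^ 6 * hrL
      rw [div_pow, div_eq_iff (pow_ne_zero 3 (mul_ne_zero (pow_ne_zero 2 hθ0) hrbL))]
      linear_combination b * (b * θ ^ 6 + r ^ 3) * H
  have hv0 : v ≠ 0 := by rintro rfl; apply hbL; rw [← hv]; simp
  have htop : K = ⊤ := by
    have hadj : IntermediateField.adjoin ℚ (f.rootSet L) = ⊤ := by
      exact (isSplittingField_iff_intermediateField.1
        (inferInstance : IsSplittingField ℚ L f)).2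
    rw [eq_top_iff, ← hadj, IntermediateField.adjoin_le_iff]
    intro x hx
    have hx0 := (mem_rootSet.1 hx).2
    rw [hev] at hx0
    have hfac : (x ^ 6 - θ ^ 6) * (x ^ 6 * θ ^ 6 - b) = 0 := by
      linear_combination θ ^ 6 * hx0 - x ^ 6 * hθ'
    rcases mul_eq_zero.1 hfac with h | h
    · exact aux_sixth K e θ x heK hθK he (sub_eq_zero.1 h)
    · refine aux_sixth K e (s / v / θ) x heK (div_mem (div_mem (hq s) hvK) hθK) he ?_
      rw [div_pow, eq_div_iff (pow_ne_zero 6 hθ0), div_pow, eq_div_iff (pow_ne_zero 6 hv0),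
        sub_eq_zero.1 h, show v ^ 6 = (v ^ 3) ^ 2 by ring, hv,
        show (s : L) ^ 6 = (s ^ 2) ^ 3 by ring, hsL]
      ring
  have := IntermediateField.adjoin.finrank hint
  rw [hmin, ← hK, htop, IntermediateField.finrank_top'] at this
  exact this

theorem gal_order_twelve_of_12T3 (a b : ℚ) (f : ℚ[X])
    (hf : f = X ^ 12 + C a * X ^ 6 + C b) (hirr : Irreducible f)
    (hb_sq : ∃ s : ℚ, s ^ 2 = b)
    (hd : ¬ ∃ s : ℚ, s ^ 2 = 3 * (4 * b - a ^ 2))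
    (hsq : ∃ s : ℚ, s ^ 2 = b ∧ ((∃ t : ℚ, t ^ 2 = 3 * (a + 2 * s)) ∨ ∃ t : ℚ, t ^ 2 = 3 * (a - 2 * s)))
    (hcr : (∃ c : ℚ, c ^ 3 = b) ∨ ∃ r : ℚ, r ^ 3 - 3 * b * r + a * b = 0) :
    Nat.card f.Gal = 12 := by
  rw [Gal.card_of_separable hirr.separable]
  exact @core_finrank f.SplittingField _ _ a b f (IsSplittingField.splittingField f) hf hirr hb_sq hd hsq hcr
end

section
/- Let a, b ∈ ℚ and suppose f(x) = x^12 + a·x^6 + b is irreducible over ℚ. Assume: b is a square in ℚ; 3·(4b − a^2) is not a square in ℚ; there exists s ∈ ℚ with s^2 = b such that 3·(a + 2s) is a square in ℚ or 3·(a − 2s) is a square in ℚ; b is not a cube in ℚ; and the cubic x^3 − 3·b·x + a·b has no rational root. Then the Galois group of f over ℚ has order 36. -/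
open Polynomial

section helpers

variable {L : Type*} [Field L]

/-- cube roots differ by powers of a primitive cube root of unity -/
theorem cube_eq_cases {w : L} (hw : w ^ 2 + w + 1 = 0) {x y : L} (h : y ^ 3 = x ^ 3) :
    y = x ∨ y = w * x ∨ y = w ^ 2 * x := by
  have : (y - x) * ((y - w * x) * (y - w ^ 2 * x)) = 0 := by
    linear_combination h + (-x*y^2 + x^2*y*w - x^3*(w-1)) * hw
  rcases mul_eq_zero.mp this with h1 | h1
  · exact Or.inl (sub_eq_zero.mp h1)
  · rcases mul_eq_zero.mp h1 with h1 | h1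
    · exact Or.inr (Or.inl (sub_eq_zero.mp h1))
    · exact Or.inr (Or.inr (sub_eq_zero.mp h1))

/-- sixth roots differ by a sign and a power of a primitive cube root of unity -/
theorem sixth_eq_cases {w : L} (hw : w ^ 2 + w + 1 = 0) {x y : L} (h : y ^ 6 = x ^ 6) :
    (y = x ∨ y = w * x ∨ y = w ^ 2 * x) ∨ (y = -x ∨ y = w * -x ∨ y = w ^ 2 * -x) := by
  have : (y ^ 3 - x ^ 3) * (y ^ 3 - (-x) ^ 3) = 0 := by linear_combination h
  rcases mul_eq_zero.mp this with h1 | h1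
  · exact Or.inl (cube_eq_cases hw (sub_eq_zero.mp h1))
  · exact Or.inr (cube_eq_cases hw (sub_eq_zero.mp h1))

/-- roots of the polynomial -/
theorem root_cases {w c α s a : L} (hw : w ^ 2 + w + 1 = 0) (hα0 : α ≠ 0)
    (hα : α ^ 12 + a * α ^ 6 + s ^ 2 = 0) (hc : c ^ 3 = s)
    {y : L} (hy : y ^ 12 + a * y ^ 6 + s ^ 2 = 0) :
    ((y = α ∨ y = w * α ∨ y = w ^ 2 * α) ∨ (y = -α ∨ y = w * -α ∨ y = w ^ 2 * -α)) ∨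
    ((y = c / α ∨ y = w * (c / α) ∨ y = w ^ 2 * (c / α)) ∨
      (y = -(c / α) ∨ y = w * -(c / α) ∨ y = w ^ 2 * -(c / α))) := by
  have : (y ^ 6 - α ^ 6) * (y ^ 6 - (c / α) ^ 6) = 0 := by
    have h6 : (c / α) ^ 6 = s ^ 2 / α ^ 6 := by rw [div_pow, ← hc]; ring
    have h7 : s ^ 2 / α ^ 6 = - a - α ^ 6 := by
      field_simp
      linear_combination hα
    rw [h6, h7]
    linear_combination hy - hα
  rcases mul_eq_zero.mp this with h1 | h1
  · exact Or.inl (sixth_eq_cases hw (sub_eq_zero.mp h1))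
  · exact Or.inr (sixth_eq_cases hw (sub_eq_zero.mp h1))

/-- automorphisms of a simple extension are determined by the image of the generator -/
theorem algEquiv_ext_of_adjoin_eq_top {F : Type*} [Field F] [Algebra F L] {α : L}
    (htop : IntermediateField.adjoin F {α} = ⊤) {g h : L ≃ₐ[F] L} (hgh : g α = h α) : g = h := by
  have key : (g : L →ₐ[F] L).comp (IntermediateField.adjoin F {α}).val =
      (h : L →ₐ[F] L).comp (IntermediateField.adjoin F {α}).val := by
    refine IntermediateField.algHom_ext_of_eq_adjoin F rfl ?_
    intro x hx
    have hx' : x = α := hx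
    subst hx'
    exact hgh
  ext y
  have hy : y ∈ IntermediateField.adjoin F {α} := by rw [htop]; trivial
  exact DFunLike.congr_fun key (⟨y, hy⟩ : IntermediateField.adjoin F {α})

variable [Algebra ℚ L]

theorem no_cube [FiniteDimensional ℚ L] [IsGalois ℚ L] (a s t : ℚ) (α w c₀ : L)
    (hα0 : α ≠ 0)
    (hα : α ^ 12 + algebraMap ℚ L a * α ^ 6 + algebraMap ℚ L s ^ 2 = 0)
    (hext : ∀ g h : L ≃ₐ[ℚ] L, g α = h α → g = h)
    (htrans : ∀ y : L, y ^ 12 + algebraMap ℚ L a * y ^ 6 + algebraMap ℚ L s ^ 2 = 0 →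
      ∃ g : L ≃ₐ[ℚ] L, g α = y)
    (hwdef : w = (-1 + 3 * (α ^ 3 - algebraMap ℚ L s / α ^ 3) / algebraMap ℚ L t) / 2)
    (hw : w ^ 2 + w + 1 = 0)
    (hc₀ : c₀ ^ 3 = algebraMap ℚ L s)
    (hs : s ≠ 0)
    (hnc : ¬ ∃ c : ℚ, c ^ 3 = s)
    (hnr : ¬ ∃ r : ℚ, r ^ 3 - 3 * s ^ 2 * r + a * s ^ 2 = 0) : False := by
  have : CharZero L := algebraRat.charZero L
  set S := algebraMap ℚ L s with hS
  set A := algebraMap ℚ L a with hA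
  have hS0 : S ≠ 0 := by simpa [hS] using hs
  have hw3 : w ^ 3 = 1 := by linear_combination (w - 1) * hw
  have hw0 : w ≠ 0 := by rintro rfl; simp at hw
  have hw1 : w ≠ 1 := by rintro rfl; norm_num at hw
  have hw2 : w ^ 2 = -1 - w := by linear_combination hw
  obtain ⟨ρ, hρ⟩ := htrans (-α) (by linear_combination hα)
  obtain ⟨σ, hσ⟩ := htrans (w * α) (by
    linear_combination (α^12 * (w^9+w^6+w^3+1) + A * α^6 * (w^3+1)) * hw3 + hα)
  have hρw : ρ w = w ^ 2 := by
    rw [hw2, hwdef]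
    simp only [map_div₀, map_add, map_neg, map_sub, map_mul, map_pow, map_one, map_ofNat, hρ, hS,
      AlgEquiv.commutes]
    field_simp
    ring
  have hσw : σ w = w := by
    have : (w * α) ^ 3 = α ^ 3 := by rw [mul_pow, hw3, one_mul]
    rw [hwdef]
    simp only [map_div₀, map_add, map_neg, map_sub, map_mul, map_pow, map_one, map_ofNat, hσ, hS,
      AlgEquiv.commutes, this]
  -- choose the cube root fixed by `ρ`
  obtain ⟨c, hc, hρc⟩ : ∃ c : L, c ^ 3 = S ∧ ρ c = c := by
    have h1 : (ρ c₀) ^ 3 = c₀ ^ 3 := by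
      rw [← map_pow, hc₀]; simp [hS]
    rcases cube_eq_cases hw h1 with h | h | h
    · exact ⟨c₀, hc₀, h⟩
    · refine ⟨w ^ 2 * c₀, by linear_combination w ^ 6 * hc₀ + S * (w^3+1) * hw3, ?_⟩
      rw [map_mul, map_pow, hρw, h]
      linear_combination c₀ * w ^ 2 * hw3
    · refine ⟨w * c₀, by linear_combination w ^ 3 * hc₀ + S * hw3, ?_⟩
      rw [map_mul, hρw, h]
      linear_combination c₀ * w * hw3
  have hc0 : c ≠ 0 := by rintro rfl; apply hS0; rw [← hc]; simp
  have hcube : ∀ g : L ≃ₐ[ℚ] L, (g c) ^ 3 = c ^ 3 := by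
    intro g; rw [← map_pow, hc]; simp [hS]
  have hcα : (c / α) ^ 12 + A * (c / α) ^ 6 + S ^ 2 = 0 := by
    field_simp
    rw [← hc] at hα ⊢
    linear_combination c ^ 6 * hα
  obtain ⟨τ, hτ⟩ := htrans (c / α) hcα
  have hτw : τ w = w ^ 2 := by
    rw [hw2, hwdef]
    simp only [map_div₀, map_add, map_neg, map_sub, map_mul, map_pow, map_one, map_ofNat, hτ, hS,
      AlgEquiv.commutes]
    rw [← hS, div_pow, hc]
    field_simp
    ring
  have hτc : τ c = c := by
    have hcomm : τ * ρ = ρ * τ := by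
      apply hext
      simp [AlgEquiv.mul_apply, hτ, hρ, hρc, div_neg]
    have h1 : τ c = ρ (τ c) := by
      have := congrArg (fun g : L ≃ₐ[ℚ] L => g c) hcomm
      simpa [AlgEquiv.mul_apply, hρc] using this
    rcases cube_eq_cases hw (hcube τ) with h | h | h
    · exact h
    · exfalso
      rw [h, map_mul, hρw, hρc] at h1
      have h2 := mul_right_cancel₀ hc0 h1
      apply hw1
      have : w * (w - 1) = 0 := by linear_combination -h2
      rcases mul_eq_zero.mp this with h | h
      · exact absurd h hw0
      · linear_combination h
    · exfalso
      rw [h, map_mul, map_pow, hρw, hρc] at h1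
      have h2 := mul_right_cancel₀ hc0 h1
      apply hw1
      linear_combination w ^ 2 * h2 - w * hw3 + (w ^ 3 + 1) * hw3
  have hfix : ∀ x : L, σ x = x → ρ x = x → τ x = x → ∃ r : ℚ, algebraMap ℚ L r = x := by
    intro x hσx hρx hτx
    have key : ∀ g : L ≃ₐ[ℚ] L, g x = x := by
      intro g
      have hy : (g α) ^ 12 + A * (g α) ^ 6 + S ^ 2 = 0 := by
        have := congrArg g hα
        simpa [hA, hS] using this
      have fin : ∀ h : L ≃ₐ[ℚ] L, h α = g α → h x = x → g x = x := by
        intro h h1 h2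
        rw [← hext h g h1, h2]
      have hw4 : w ^ 4 = w := by linear_combination w * hw3
      rcases root_cases hw hα0 hα hc hy with ((h|h|h)|(h|h|h))|((h|h|h)|(h|h|h))
      · exact fin 1 (by simp [h]) (by simp)
      · exact fin σ (by simp [h, hσ]) hσx
      · exact fin (σ * σ) (by simp [AlgEquiv.mul_apply, h, hσ, hσw]; ring)
          (by simp [AlgEquiv.mul_apply, hσx])
      · exact fin ρ (by simp [h, hρ]) hρx
      · exact fin (σ * ρ) (by simp [AlgEquiv.mul_apply, h, hσ, hρ])
          (by simp [AlgEquiv.mul_apply, hσx, hρx])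
      · exact fin (σ * σ * ρ) (by simp [AlgEquiv.mul_apply, h, hσ, hσw, hρ]; ring)
          (by simp [AlgEquiv.mul_apply, hσx, hρx])
      · exact fin τ (by simp [h, hτ]) hτx
      · exact fin (τ * σ * σ) (by
            simp only [AlgEquiv.mul_apply, h, hσ, hσw, hτ, hτw, map_mul]
            linear_combination (c / α) * hw4) (by simp [AlgEquiv.mul_apply, hσx, hτx])
      · exact fin (τ * σ) (by simp [AlgEquiv.mul_apply, h, hσ, hτ, hτw])
          (by simp [AlgEquiv.mul_apply, hσx, hτx])
      · exact fin (τ * ρ) (by simp [AlgEquiv.mul_apply, h, hτ, hρ])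
          (by simp [AlgEquiv.mul_apply, hτx, hρx])
      · exact fin (τ * σ * σ * ρ) (by
            simp only [AlgEquiv.mul_apply, h, hσ, hσw, hτ, hτw, hρ, map_mul, map_neg]
            linear_combination (-c / α) * hw4) (by simp [AlgEquiv.mul_apply, hσx, hτx, hρx])
      · exact fin (τ * σ * ρ) (by simp [AlgEquiv.mul_apply, h, hσ, hτ, hτw, hρ])
          (by simp [AlgEquiv.mul_apply, hσx, hτx, hρx])
    exact (IsGalois.mem_range_algebraMap_iff_fixed x).mpr key
  rcases cube_eq_cases hw (hcube σ) with h | h | h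
  · obtain ⟨r, hr⟩ := hfix c h hρc hτc
    apply hnc
    refine ⟨r, (algebraMap ℚ L).injective ?_⟩
    rw [map_pow, hr, hc]
  · have : σ * τ = τ := by
      apply hext
      rw [AlgEquiv.mul_apply, hτ, map_div₀, hσ, h]
      field_simp
    have h1 : σ = 1 := by simpa using this
    rw [h1, AlgEquiv.one_apply] at hσ
    apply hw1
    have : (w - 1) * α = 0 := by linear_combination -hσ
    rcases mul_eq_zero.mp this with h | h
    · linear_combination h
    · exact absurd h hα0
  · have hσx : σ (c ^ 2 * α ^ 2 + c ^ 4 / α ^ 2) = c ^ 2 * α ^ 2 + c ^ 4 / α ^ 2 := by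
      simp only [map_add, map_mul, map_div₀, map_pow, h, hσ]
      field_simp
      linear_combination (α^4*(w^3+1) + c^2 * (w^3+1)) * hw3
    have hρx : ρ (c ^ 2 * α ^ 2 + c ^ 4 / α ^ 2) = c ^ 2 * α ^ 2 + c ^ 4 / α ^ 2 := by
      simp only [map_add, map_mul, map_div₀, map_pow, hρc, hρ, even_two.neg_pow]
    have hτx : τ (c ^ 2 * α ^ 2 + c ^ 4 / α ^ 2) = c ^ 2 * α ^ 2 + c ^ 4 / α ^ 2 := by
      simp only [map_add, map_mul, map_div₀, map_pow, hτc, hτ]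
      field_simp
      ring
    obtain ⟨r, hr⟩ := hfix _ hσx hρx hτx
    apply hnr
    refine ⟨r, (algebraMap ℚ L).injective ?_⟩
    simp only [map_add, map_sub, map_mul, map_pow, map_ofNat, map_zero, hr]
    rw [← hS, ← hA]
    rw [← hc] at hα ⊢
    field_simp
    linear_combination c ^ 6 * hα

theorem degree_thirtysix (a s t : ℚ) (f : ℚ[X])
    (hf : f = X ^ 12 + C a * X ^ 6 + C (s ^ 2)) (hirr : Irreducible f)
    [IsSplittingField ℚ L f]
    (ht : t ^ 2 = 3 * (a + 2 * s)) (ht0 : t ≠ 0) (hs0 : s ≠ 0)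
    (hnc : ¬ ∃ c : ℚ, c ^ 3 = s)
    (hnr : ¬ ∃ r : ℚ, r ^ 3 - 3 * s ^ 2 * r + a * s ^ 2 = 0) :
    Module.finrank ℚ L = 36 := by
  have hchar : CharZero L := algebraRat.charZero L
  have hdeg : f.natDegree = 12 := by rw [hf]; compute_degree!
  have hmonic : f.Monic := by rw [hf]; monicity!
  have hgal : IsGalois ℚ L := IsGalois.of_separable_splitting_field hirr.separable
  have hfd : FiniteDimensional ℚ L := IsSplittingField.finiteDimensional L f
  have hspl := IsSplittingField.splits L f
  have hadj := IsSplittingField.adjoin_rootSet L f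
  have haeval : ∀ y : L, aeval y f =
      y ^ 12 + algebraMap ℚ L a * y ^ 6 + algebraMap ℚ L s ^ 2 := by
    intro y; rw [hf]; simp [aeval_C]
  have hS0 : algebraMap ℚ L s ≠ 0 := by simpa using hs0
  have hT0 : algebraMap ℚ L t ≠ 0 := by simpa using ht0
  have hT : algebraMap ℚ L t ^ 2 = 3 * (algebraMap ℚ L a + 2 * algebraMap ℚ L s) := by
    rw [← map_pow, ht]; simp
  obtain ⟨α, hα'⟩ : ∃ α : L, aeval α f = 0 := by
    obtain ⟨α, h⟩ := hspl.exists_eval_eq_zero (by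
      rw [degree_map, degree_eq_natDegree hirr.ne_zero, hdeg]; norm_num)
    exact ⟨α, by rwa [eval_map_algebraMap] at h⟩
  have hmin : ∀ y : L, aeval y f = 0 → minpoly ℚ y = f := fun y hy =>
    (minpoly.eq_of_irreducible_of_monic hirr hy hmonic).symm
  have hα := hα'
  rw [haeval] at hα
  have hα0 : α ≠ 0 := by
    rintro rfl
    apply hS0
    simpa using hα
  -- the conjugate root
  obtain ⟨β, hβ⟩ : ∃ β : L, β ^ 6 = algebraMap ℚ L s ^ 2 / α ^ 6 := by
    have hdvd : (X ^ 6 - C (algebraMap ℚ L s ^ 2 / α ^ 6)) ∣ f.map (algebraMap ℚ L) := by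
      refine ⟨X ^ 6 - C (α ^ 6), ?_⟩
      have h7 : algebraMap ℚ L s ^ 2 / α ^ 6 = - algebraMap ℚ L a - α ^ 6 := by
        field_simp
        linear_combination hα
      have h8 : (C (algebraMap ℚ L s) : L[X]) ^ 2 = C (- α ^ 12 - algebraMap ℚ L a * α ^ 6) := by
        rw [← C_pow]; congr 1; linear_combination hα
      rw [h7, hf]
      simp only [Polynomial.map_add, Polynomial.map_mul, Polynomial.map_pow, map_X, map_C,
        map_pow, h8]
      simp only [C_sub, C_neg, C_mul, C_pow]
      ring
    have hsp2 := hspl.of_dvd (by simpa using hirr.ne_zero) hdvd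
    obtain ⟨β, h⟩ := hsp2.exists_eval_eq_zero (by
      rw [degree_X_pow_sub_C (by norm_num)]; norm_num)
    exact ⟨β, by simpa [sub_eq_zero] using h⟩
  obtain ⟨c, hc⟩ : ∃ c : L, c ^ 3 = algebraMap ℚ L s := by
    have h1 : ((α * β) ^ 3 - algebraMap ℚ L s) * ((α * β) ^ 3 + algebraMap ℚ L s) = 0 := by
      have : α ^ 6 * β ^ 6 = algebraMap ℚ L s ^ 2 := by rw [hβ]; field_simp
      linear_combination this
    rcases mul_eq_zero.mp h1 with h | h
    · exact ⟨α * β, by linear_combination h⟩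
    · exact ⟨-(α * β), by linear_combination -h⟩
  obtain ⟨w, hwdef⟩ : ∃ w : L, w =
    (-1 + 3 * (α ^ 3 - algebraMap ℚ L s / α ^ 3) / algebraMap ℚ L t) / 2 := ⟨_, rfl⟩
  have hw : w ^ 2 + w + 1 = 0 := by
    rw [hwdef]
    field_simp
    ring_nf
    rw [hT]
    linear_combination 9 * hα
  set E := IntermediateField.adjoin ℚ {α} with hEdef
  have hαE : α ∈ E := IntermediateField.mem_adjoin_simple_self ℚ α
  have hwE : w ∈ E := by
    have h3 : ∀ q : ℚ, algebraMap ℚ L q ∈ E := fun q => E.algebraMap_mem q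
    rw [hwdef]
    have h2 : (2 : L) ∈ E := by simpa using h3 2
    have h3' : (3 : L) ∈ E := by simpa using h3 3
    exact div_mem (add_mem (neg_mem (one_mem _)) (div_mem (mul_mem h3'
      (sub_mem (pow_mem hαE 3) (div_mem (h3 s) (pow_mem hαE 3)))) (h3 t))) h2
  -- an intermediate field containing `α` and a cube root of `s` is everything
  have htop : ∀ F : IntermediateField ℚ L, α ∈ F → w ∈ F → ∀ d : L, d ^ 3 = algebraMap ℚ L s →
      d ∈ F → F = ⊤ := by
    intro F hαF hwF d hd hdF
    have hle : Algebra.adjoin ℚ (f.rootSet L) ≤ F.toSubalgebra := by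
      rw [Algebra.adjoin_le_iff]
      intro y hy
      have hy' := (mem_rootSet.mp hy).2
      rw [haeval] at hy'
      have hq : d / α ∈ F := div_mem hdF hαF
      show y ∈ F
      rcases root_cases hw hα0 hα hd hy' with ((h|h|h)|(h|h|h))|((h|h|h)|(h|h|h)) <;> rw [h]
      · exact hαF
      · exact mul_mem hwF hαF
      · exact mul_mem (pow_mem hwF 2) hαF
      · exact neg_mem hαF
      · exact mul_mem hwF (neg_mem hαF)
      · exact mul_mem (pow_mem hwF 2) (neg_mem hαF)
      · exact hq
      · exact mul_mem hwF hq
      · exact mul_mem (pow_mem hwF 2) hq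
      · exact neg_mem hq
      · exact mul_mem hwF (neg_mem hq)
      · exact mul_mem (pow_mem hwF 2) (neg_mem hq)
    rw [hadj] at hle
    rw [eq_top_iff]
    intro y _
    exact hle (Algebra.mem_top)
  have hnot : ∀ d : E, d ^ 3 ≠ algebraMap ℚ E s := by
    intro d hd
    have hd' : (d : L) ^ 3 = algebraMap ℚ L s := by
      have := congrArg (algebraMap E L) hd
      rw [map_pow, ← IsScalarTower.algebraMap_apply ℚ E L] at this
      exact this
    have hEtop := htop E hαE hwE d hd' d.2
    refine no_cube a s t α w d hα0 hα ?_ ?_ hwdef hw hd' hs0 hnc hnr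
    · intro g h hgh
      exact algEquiv_ext_of_adjoin_eq_top hEtop hgh
    · intro y hy
      rw [← haeval] at hy
      exact isConjRoot_iff_exists_algEquiv.mp (by
        rw [isConjRoot_def, hmin y hy, hmin α hα'])
  have hirr3 : Irreducible (X ^ 3 - C (algebraMap ℚ E s)) :=
    X_pow_sub_C_irreducible_of_prime Nat.prime_three hnot
  have hcroot : aeval c (X ^ 3 - C (algebraMap ℚ E s)) = 0 := by
    simp only [map_sub, map_pow, aeval_X, aeval_C, ← IsScalarTower.algebraMap_apply ℚ E L]
    rw [hc, sub_self]
  have hcmin : minpoly E c = X ^ 3 - C (algebraMap ℚ E s) :=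
    (minpoly.eq_of_irreducible_of_monic hirr3 hcroot (monic_X_pow_sub_C _ (by norm_num))).symm
  have hcint : IsIntegral E c := ⟨_, monic_X_pow_sub_C _ (by norm_num), hcroot⟩
  have hEc : IntermediateField.adjoin E {c} = ⊤ := by
    have h1 := htop ((IntermediateField.adjoin E {c}).restrictScalars ℚ)
      ((IntermediateField.adjoin E {c}).algebraMap_mem ⟨α, hαE⟩)
      ((IntermediateField.adjoin E {c}).algebraMap_mem ⟨w, hwE⟩) c hc
      (IntermediateField.mem_adjoin_simple_self E c)
    rw [eq_top_iff]
    intro y _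
    have : y ∈ (IntermediateField.adjoin E {c}).restrictScalars ℚ := by rw [h1]; trivial
    exact this
  have d1 : Module.finrank ℚ E = 12 := by
    rw [hEdef, IntermediateField.adjoin.finrank (Algebra.IsIntegral.isIntegral α), hmin α hα', hdeg]
  have d2 : Module.finrank E L = 3 := by
    rw [← IntermediateField.finrank_top', ← hEc, IntermediateField.adjoin.finrank hcint, hcmin,
      natDegree_X_pow_sub_C]
  rw [← Module.finrank_mul_finrank ℚ E L, d1, d2]

end helpers

theorem gal_order_thirtysix_of_12T16 (a b : ℚ) (f : ℚ[X])
    (hf : f = X ^ 12 + C a * X ^ 6 + C b) (hirr : Irreducible f)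
    (hb_sq : ∃ s : ℚ, s ^ 2 = b)
    (hd : ¬ ∃ s : ℚ, s ^ 2 = 3 * (4 * b - a ^ 2))
    (hsq : ∃ s : ℚ, s ^ 2 = b ∧ ((∃ t : ℚ, t ^ 2 = 3 * (a + 2 * s)) ∨ ∃ t : ℚ, t ^ 2 = 3 * (a - 2 * s)))
    (hnc : ¬ ∃ c : ℚ, c ^ 3 = b)
    (hnr : ¬ ∃ r : ℚ, r ^ 3 - 3 * b * r + a * b = 0) :
    Nat.card f.Gal = 36 := by
  obtain ⟨s, t, hs, ht⟩ : ∃ s t : ℚ, s ^ 2 = b ∧ t ^ 2 = 3 * (a + 2 * s) := by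
    obtain ⟨s, hs, ⟨t, ht⟩ | ⟨t, ht⟩⟩ := hsq
    · exact ⟨s, t, hs, ht⟩
    · exact ⟨-s, t, by rw [← hs]; ring, by rw [ht]; ring⟩
  subst hs
  have hs0 : s ≠ 0 := by
    rintro rfl; exact hnc ⟨0, by norm_num⟩
  have ht0 : t ≠ 0 := by
    rintro rfl
    apply hd
    have : a = -2 * s := by linarith
    exact ⟨0, by rw [this]; ring⟩
  have hnc' : ¬ ∃ c : ℚ, c ^ 3 = s := by
    rintro ⟨c, hc⟩
    exact hnc ⟨c ^ 2, by rw [← hc]; ring⟩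
  rw [Polynomial.Gal.card_of_separable hirr.separable]
  exact degree_thirtysix a s t f hf hirr ht ht0 hs0 hnc' hnr
end

section
/- Let a, b ∈ ℚ and suppose f(x) = x^12 + a·x^6 + b is irreducible over ℚ. Assume: b is a square in ℚ; 3·(4b − a^2) is not a square in ℚ; for every s ∈ ℚ with s^2 = b, neither 3·(a + 2s) nor 3·(a − 2s) is a square in ℚ; and either b is a cube in ℚ or the cubic x^3 − 3·b·x + a·b has a rational root. Then the Galois group of f over ℚ has order 24. -/
open Polynomial

open scoped IntermediateField

/-- A quadratic extension by a square root of `-3` doubles the degree. -/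
lemma aux_quad (F : IntermediateField ℚ ℂ) (δ : ℂ) (hδ : δ ^ 2 = -3) (hn : δ ∉ F) :
    Module.finrank ℚ ((F⟮δ⟯).restrictScalars ℚ) = Module.finrank ℚ F * 2 := by
  have hm : (X ^ 2 + C (3 : F)).Monic := by monicity!
  have hroot : aeval δ (X ^ 2 + C (3 : F)) = 0 := by
    simp only [map_add, map_pow, aeval_X, aeval_C, hδ]
    rw [map_ofNat]; ring
  have hint : IsIntegral F δ := ⟨_, hm, by simpa [aeval_def] using hroot⟩
  have hdeg : (X ^ 2 + C (3 : F)).natDegree = 2 := by compute_degree!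
  have h2 : (minpoly F δ).natDegree ≤ 2 := by
    rw [← hdeg]
    exact natDegree_le_of_dvd (minpoly.dvd F δ hroot) hm.ne_zero
  have h1 : 2 ≤ (minpoly F δ).natDegree := by
    rw [minpoly.two_le_natDegree_iff hint]
    rintro ⟨x, rfl⟩
    exact hn x.2
  have h3 : Module.finrank F F⟮δ⟯ = 2 := by
    rw [IntermediateField.adjoin.finrank hint]; omega
  have := Module.finrank_mul_finrank ℚ F F⟮δ⟯
  rw [h3] at this
  exact this.symm

lemma aux_indep (y : ℂ) (h4 : (minpoly ℚ y).natDegree = 4) (p q r t : ℚ)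
    (h : (p : ℂ) + r * y + q * y ^ 2 + t * y ^ 3 = 0) : p = 0 ∧ q = 0 ∧ r = 0 ∧ t = 0 := by
  set P : ℚ[X] := C p + C r * X + C q * X ^ 2 + C t * X ^ 3 with hP
  have hP0 : P = 0 := by
    by_contra hne
    have h1 := natDegree_le_of_dvd (minpoly.dvd ℚ y (p := P) (by simpa [hP] using h)) hne
    have h2 : P.natDegree ≤ 3 := by rw [hP]; compute_degree!
    omega
  have c0 := congrArg (fun Q => coeff Q 0) hP0
  have c1 := congrArg (fun Q => coeff Q 1) hP0
  have c2 := congrArg (fun Q => coeff Q 2) hP0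
  have c3 := congrArg (fun Q => coeff Q 3) hP0
  simp [hP, coeff_X, coeff_C] at c0 c1 c2 c3
  exact ⟨c0, c2, c1, c3⟩

lemma aux_rep (y : ℂ) (hy : IsIntegral ℚ y) (h4 : (minpoly ℚ y).natDegree = 4) (d : ℂ)
    (hd : d ∈ ℚ⟮y⟯) : ∃ x0 x1 x2 x3 : ℚ, d = (x0 : ℂ) + x1 * y + x2 * y ^ 2 + x3 * y ^ 3 := by
  have hd' : d ∈ (ℚ⟮y⟯).toSubalgebra := hd
  rw [IntermediateField.adjoin_simple_toSubalgebra_of_isAlgebraic hy.isAlgebraic,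
    Algebra.adjoin_singleton_eq_range_aeval] at hd'
  obtain ⟨P, rfl⟩ := hd'
  have hm := minpoly.monic hy
  have hlt : (P %ₘ minpoly ℚ y).natDegree < 4 := by
    rw [← h4]
    exact natDegree_modByMonic_lt _ hm (by intro h; rw [h] at h4; simp at h4)
  refine ⟨(P %ₘ minpoly ℚ y).coeff 0, (P %ₘ minpoly ℚ y).coeff 1, (P %ₘ minpoly ℚ y).coeff 2,
    (P %ₘ minpoly ℚ y).coeff 3, ?_⟩
  have h1 : aeval y P = aeval y (P %ₘ minpoly ℚ y) := by
    exact (aeval_modByMonic_eq_self_of_root (minpoly.aeval ℚ y)).symm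
  change aeval y P = _
  rw [h1, aeval_eq_sum_range' hlt]
  simp [Finset.sum_range_succ, Algebra.smul_def]

lemma aux_six (M : IntermediateField ℚ ℂ) (δ : ℂ) (hδ : δ ^ 2 = -3) (hM : δ ∈ M) (z : ℂ)
    (hz : z ^ 6 = 1) : z ∈ M := by
  have h1 : (1 : ℂ) ∈ M := M.one_mem
  have h2 : (2 : ℂ) ∈ M := ofNat_mem M 2
  have key : (z - 1) * (z + 1) * (z - (-1 + δ) / 2) * (z - (-1 - δ) / 2) *
      (z - (1 + δ) / 2) * (z - (1 - δ) / 2) = 0 := by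
    have e1 : (z - (-1 + δ) / 2) * (z - (-1 - δ) / 2) = z ^ 2 + z + 1 := by
      linear_combination (-1 / 4) * hδ
    have e2 : (z - (1 + δ) / 2) * (z - (1 - δ) / 2) = z ^ 2 - z + 1 := by
      linear_combination (-1 / 4) * hδ
    calc _ = (z - 1) * (z + 1) * ((z - (-1 + δ) / 2) * (z - (-1 - δ) / 2)) *
      ((z - (1 + δ) / 2) * (z - (1 - δ) / 2)) := by ring
      _ = 0 := by rw [e1, e2]; linear_combination hz
  have hmem : ∀ w ∈ M, z - w = 0 → z ∈ M := fun w hw h => by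
    rw [sub_eq_zero.mp h]; exact hw
  simp only [mul_eq_zero] at key
  rcases key with ((((h | h) | h) | h) | h) | h
  · exact hmem _ h1 h
  · exact hmem (-1) (M.neg_mem h1) (by linear_combination h)
  · exact hmem _ (M.div_mem (M.add_mem (M.neg_mem h1) hM) h2) h
  · exact hmem _ (M.div_mem (M.sub_mem (M.neg_mem h1) hM) h2) h
  · exact hmem _ (M.div_mem (M.add_mem h1 hM) h2) h
  · exact hmem _ (M.div_mem (M.sub_mem h1 hM) h2) h

/-- `√-3` is not in the quartic subfield. -/
lemma aux_notmem (a b : ℚ) (y δ : ℂ) (hy : IsIntegral ℚ y) (h4 : (minpoly ℚ y).natDegree = 4)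
    (hy4 : y ^ 4 + a * y ^ 2 + b = 0) (hδ : δ ^ 2 = -3) (s : ℚ) (hs : s ^ 2 = b) (hb : b ≠ 0)
    (hd : ¬ ∃ s : ℚ, s ^ 2 = 3 * (4 * b - a ^ 2))
    (hsq : (¬ ∃ t : ℚ, t ^ 2 = 3 * (a + 2 * s)) ∧ ¬ ∃ t : ℚ, t ^ 2 = 3 * (a - 2 * s)) :
    δ ∉ ℚ⟮y⟯ := by
  intro hmem
  obtain ⟨x0, x1, x2, x3, rfl⟩ := aux_rep y hy h4 δ hmem
  obtain ⟨e0, e2, e1, e3⟩ := aux_indep y h4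
    (x0 ^ 2 - b * x2 ^ 2 - 2 * b * x1 * x3 + a * b * x3 ^ 2 + 3)
    (2 * x0 * x2 - a * x2 ^ 2 + x1 ^ 2 - 2 * a * x1 * x3 + (a ^ 2 - b) * x3 ^ 2)
    (2 * (x0 * x1 - b * x2 * x3))
    (2 * (x0 * x3 + x1 * x2 - a * x2 * x3)) (by
      push_cast
      linear_combination hδ - (x2 ^ 2 + 2 * x1 * x3 + 2 * x2 * x3 * y + x3 ^ 2 * y ^ 2
        - a * x3 ^ 2 : ℂ) * hy4)
  have hs0 : s ≠ 0 := by rintro rfl; apply hb; rw [← hs]; ring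
  have hprod : ((x0 : ℂ) + x2 * y ^ 2) * (x1 + x3 * y ^ 2) = 0 := by
    have e1' : (2 * (x0 * x1 - b * x2 * x3) : ℂ) = 0 := by exact_mod_cast e1
    have e3' : (2 * (x0 * x3 + x1 * x2 - a * x2 * x3) : ℂ) = 0 := by exact_mod_cast e3
    linear_combination e1' / 2 + y ^ 2 * e3' / 2 + (x2 * x3 : ℂ) * hy4
  rcases mul_eq_zero.mp hprod with h | h
  · obtain ⟨rfl, rfl, -, -⟩ := aux_indep y h4 x0 x2 0 0 (by push_cast; linear_combination h)
    have hx3 : x3 ≠ 0 := by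
      rintro rfl; norm_num at e0
    have hf : (x1 - a * x3 - s * x3) * (x1 - a * x3 + s * x3) = 0 := by
      subst hs; linear_combination e2
    rcases mul_eq_zero.mp hf with h' | h'
    · apply hsq.1
      refine ⟨3 / (s * x3), ?_⟩
      have : x1 = (a + s) * x3 := by linear_combination h'
      subst this; subst hs
      field_simp
      linear_combination e0
    · apply hsq.2
      refine ⟨3 / (s * x3), ?_⟩
      have : x1 = (a - s) * x3 := by linear_combination h'
      subst this; subst hs
      field_simp
      linear_combination e0
  · obtain ⟨rfl, rfl, -, -⟩ := aux_indep y h4 x1 x3 0 0 (by push_cast; linear_combination h)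
    have hx2 : x2 ≠ 0 := by
      rintro rfl
      nlinarith [sq_nonneg x0]
    apply hd
    refine ⟨6 / x2, ?_⟩
    have h0 : x0 = a * x2 / 2 := by
      apply mul_left_cancel₀ hx2
      linear_combination e2 / 2
    subst h0
    field_simp
    linear_combination 12 * e0

theorem gal_order_twentyfour_of_12T10 (a b : ℚ) (f : ℚ[X])
    (hf : f = X ^ 12 + C a * X ^ 6 + C b) (hirr : Irreducible f)
    (hb_sq : ∃ s : ℚ, s ^ 2 = b)
    (hd : ¬ ∃ s : ℚ, s ^ 2 = 3 * (4 * b - a ^ 2))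
    (hsq : ∀ s : ℚ, s ^ 2 = b → (¬ ∃ t : ℚ, t ^ 2 = 3 * (a + 2 * s)) ∧ ¬ ∃ t : ℚ, t ^ 2 = 3 * (a - 2 * s))
    (hcr : (∃ c : ℚ, c ^ 3 = b) ∨ ∃ r : ℚ, r ^ 3 - 3 * b * r + a * b = 0) :
    Nat.card f.Gal = 24 := by
  obtain ⟨s, hs⟩ := hb_sq
  have hsplit : (f.map (algebraMap ℚ ℂ)).Splits := IsAlgClosed.splits _
  have haev : ∀ x : ℂ, aeval x f = x ^ 12 + a * x ^ 6 + b := fun x => by simp [hf]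
  have hdeg : f.natDegree = 12 := by rw [hf]; compute_degree!
  have hmon : f.Monic := by rw [hf]; monicity!
  -- a root
  obtain ⟨θ, hθ⟩ : ∃ θ : ℂ, aeval θ f = 0 := by
    apply IsAlgClosed.exists_aeval_eq_zero
    rw [degree_eq_natDegree hirr.ne_zero, hdeg]; norm_num
  have hθint : IsIntegral ℚ θ := ⟨f, hmon, by simpa [aeval_def] using hθ⟩
  have hminθ : minpoly ℚ θ = f := (minpoly.eq_of_irreducible_of_monic hirr hθ hmon).symm
  have hK : Module.finrank ℚ ℚ⟮θ⟯ = 12 := by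
    rw [IntermediateField.adjoin.finrank hθint, hminθ, hdeg]
  -- the quartic
  obtain ⟨y, hy⟩ : ∃ y, y = θ ^ 3 := ⟨_, rfl⟩
  have hθ' := hθ
  rw [haev] at hθ'
  have hy4 : y ^ 4 + a * y ^ 2 + b = 0 := by rw [hy]; linear_combination hθ'
  obtain ⟨g, hg⟩ : ∃ g : ℚ[X], g = X ^ 4 + C a * X ^ 2 + C b := ⟨_, rfl⟩
  have hgirr : Irreducible g := by
    apply of_irreducible_expand (p := 3) (by norm_num)
    have : expand ℚ 3 g = f := by
      rw [hg, hf]; simp [← pow_mul]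
    rwa [this]
  have hgmon : g.Monic := by rw [hg]; monicity!
  have hgdeg : g.natDegree = 4 := by rw [hg]; compute_degree!
  have hgy : aeval y g = 0 := by rw [hg]; simpa using hy4
  have hyint : IsIntegral ℚ y := ⟨g, hgmon, by simpa [aeval_def] using hgy⟩
  have h4 : (minpoly ℚ y).natDegree = 4 := by
    rw [← minpoly.eq_of_irreducible_of_monic hgirr hgy hgmon, hgdeg]
  have hF : Module.finrank ℚ ℚ⟮y⟯ = 4 := by
    rw [IntermediateField.adjoin.finrank hyint, h4]
  have hy0 : y ≠ 0 := by
    rintro h0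
    have := aux_indep y h4 0 0 1 0 (by simp [h0])
    simp at this
  have hb : b ≠ 0 := by
    rintro rfl
    have : y ^ 2 * (y ^ 2 + a) = 0 := by push_cast at hy4; linear_combination hy4
    rcases mul_eq_zero.mp this with h | h
    · exact hy0 (by simpa using h)
    · have := aux_indep y h4 a 1 0 0 (by push_cast; linear_combination h)
      simp at this
  have hbC : (b : ℂ) ≠ 0 := by exact_mod_cast hb
  have hθ0 : θ ≠ 0 := by rintro rfl; apply hy0; rw [hy]; norm_num
  -- sqrt(-3)
  obtain ⟨δ, hδ⟩ : ∃ δ : ℂ, δ ^ 2 = -3 := IsAlgClosed.exists_pow_nat_eq _ (by norm_num)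
  have hδF : δ ∉ ℚ⟮y⟯ := aux_notmem a b y δ hyint h4 hy4 hδ s hs hb hd (hsq s hs)
  have hFK : ℚ⟮y⟯ ≤ ℚ⟮θ⟯ := by
    rw [IntermediateField.adjoin_simple_le_iff, hy]
    exact pow_mem (IntermediateField.mem_adjoin_simple_self ℚ θ) 3
  have hδK : δ ∉ ℚ⟮θ⟯ := by
    intro hmem
    have h8 := aux_quad ℚ⟮y⟯ δ hδ hδF
    rw [hF] at h8
    have hle : ((ℚ⟮y⟯)⟮δ⟯).restrictScalars ℚ ≤ ℚ⟮θ⟯ := by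
      have he := IntermediateField.adjoin_simple_adjoin_simple (F := ℚ) y δ
      refine he.le.trans ?_
      rw [IntermediateField.adjoin_le_iff]
      rintro x (hx | hx)
      · rw [hx]; exact hFK (IntermediateField.mem_adjoin_simple_self ℚ y)
      · rw [Set.mem_singleton_iff.mp hx]; exact hmem
    have := IntermediateField.finrank_dvd_of_le_right hle
    rw [h8, hK] at this
    omega
  have h24 := aux_quad ℚ⟮θ⟯ δ hδ hδK
  rw [hK] at h24
  obtain ⟨M, hMdef⟩ : ∃ M, M = ((ℚ⟮θ⟯)⟮δ⟯).restrictScalars ℚ := ⟨_, rfl⟩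
  rw [← hMdef] at h24
  replace hMdef := hMdef.trans (IntermediateField.adjoin_simple_adjoin_simple (F := ℚ) θ δ)
  have hθM : θ ∈ M := by
    rw [hMdef]
    exact IntermediateField.subset_adjoin _ _ (Or.inl rfl)
  have hδM : δ ∈ M := by
    rw [hMdef]
    exact IntermediateField.subset_adjoin _ _ (Or.inr rfl)
  have hQM : ∀ q : ℚ, (q : ℂ) ∈ M := fun q => by
    simpa using M.algebraMap_mem q
  have hsC : (s : ℂ) ^ 2 = b := by exact_mod_cast hs
  -- a cube root of b in M
  obtain ⟨β, hβM, hβ⟩ : ∃ β ∈ M, β ^ 3 = (b : ℂ) := by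
    rcases hcr with ⟨c, hc⟩ | ⟨r, hr⟩
    · exact ⟨c, hQM c, by exact_mod_cast hc⟩
    · have hne : r ^ 2 - b ≠ 0 := by
        intro h0
        have hb' : b = r ^ 2 := by linear_combination -h0
        have ha : a = 2 * r := by
          apply mul_left_cancel₀ hb
          rw [hb'] at hr ⊢
          linear_combination hr
        have hsqz : (y ^ 2 + r) ^ 2 = 0 := by
          rw [hb', ha] at hy4; push_cast at hy4
          linear_combination hy4
        have hz : y ^ 2 + r = 0 := by simpa using hsqz
        have := aux_indep y h4 r 1 0 0 (by push_cast; linear_combination hz)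
        simp at this
      have hneC : (r : ℂ) ^ 2 - b ≠ 0 := by exact_mod_cast hne
      have hrC : (r : ℂ) ^ 3 - 3 * b * r + a * b = 0 := by exact_mod_cast hr
      obtain ⟨p, hp⟩ : ∃ p : ℂ, p = b * (y ^ 2 + r) / (r ^ 2 - b) := ⟨_, rfl⟩
      have hyM : y ∈ M := by rw [hy]; exact pow_mem hθM 3
      have hpM : p ∈ M := by
        rw [hp]
        exact M.div_mem (M.mul_mem (hQM b) (M.add_mem (pow_mem hyM 2) (hQM r)))
          (M.sub_mem (pow_mem (hQM r) 2) (hQM b))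
      have hp1 : p * (r ^ 2 - b) = b * (y ^ 2 + r) := by rw [hp]; field_simp
      have hp2 : p ^ 2 - r * p + b = 0 := by
        apply mul_left_cancel₀ (pow_ne_zero 2 hneC)
        linear_combination (p * (r ^ 2 - b) + b * (y ^ 2 + r) - r * (r ^ 2 - b)) * hp1 +
          (b : ℂ) ^ 2 * hy4 - b * y ^ 2 * hrC
      have hp3 : p ^ 3 = b * y ^ 2 := by
        linear_combination (p + r) * hp2 + hp1
      refine ⟨p / θ ^ 2, M.div_mem hpM (pow_mem hθM 2), ?_⟩
      rw [div_pow, hp3, hy]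
      field_simp
  have hβ0 : β ≠ 0 := by rintro rfl; apply hbC; rw [← hβ]; norm_num
  have hs0 : (s : ℂ) ≠ 0 := by intro h; apply hbC; rw [← hsC, h]; norm_num
  have hγ6 : ((s : ℂ) / β) ^ 6 = b := by
    have h1 : (s : ℂ) ^ 6 = b ^ 3 := by rw [← hsC]; ring
    have h2 : β ^ 6 = (b : ℂ) ^ 2 := by rw [← hβ]; ring
    rw [div_pow, h1, h2]; field_simp
  have hγM : (s : ℂ) / β ∈ M := M.div_mem (hQM s) hβM
  have hγ0 : (s : ℂ) / β ≠ 0 := div_ne_zero hs0 hβ0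
  -- the splitting field in ℂ
  have hS : IntermediateField.adjoin ℚ (f.rootSet ℂ) = M := by
    apply le_antisymm
    · rw [IntermediateField.adjoin_le_iff]
      intro x hx
      have hx' := (mem_rootSet.mp hx).2
      rw [haev] at hx'
      have hfac : (x ^ 6 - θ ^ 6) * (x ^ 6 + a + θ ^ 6) = 0 := by
        linear_combination hx' - hθ'
      rcases mul_eq_zero.mp hfac with h | h
      · have h6 : (x / θ) ^ 6 = 1 := by
          rw [div_pow, sub_eq_zero.mp h]; field_simp
        have := M.mul_mem (aux_six M δ hδ hδM _ h6) hθM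
        rwa [div_mul_cancel₀ _ hθ0] at this
      · have h6 : (x * θ / (s / β)) ^ 6 = 1 := by
          rw [div_pow, hγ6, div_eq_one_iff_eq hbC]
          linear_combination θ ^ 6 * h - hθ'
        have := M.div_mem (M.mul_mem (aux_six M δ hδ hδM _ h6) hγM) hθM
        rwa [div_mul_cancel₀ _ hγ0, mul_div_cancel_right₀ _ hθ0] at this
    · have hθS : θ ∈ IntermediateField.adjoin ℚ (f.rootSet ℂ) :=
        IntermediateField.subset_adjoin _ _ (mem_rootSet.mpr ⟨hirr.ne_zero, hθ⟩)
      have hω3 : ((-1 + δ) / 2) ^ 3 = 1 := by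
        linear_combination (δ - 3) / 8 * hδ
      have hωS : (-1 + δ) / 2 * θ ∈ IntermediateField.adjoin ℚ (f.rootSet ℂ) := by
        apply IntermediateField.subset_adjoin _ _ (mem_rootSet.mpr ⟨hirr.ne_zero, ?_⟩)
        have e6 : ((-1 + δ) / 2 * θ) ^ 6 = θ ^ 6 := by
          calc _ = (((-1 + δ) / 2) ^ 3) ^ 2 * θ ^ 6 := by ring
            _ = θ ^ 6 := by rw [hω3]; ring
        rw [haev]
        calc _ = (((-1 + δ) / 2 * θ) ^ 6) ^ 2 + a * ((-1 + δ) / 2 * θ) ^ 6 + b := by ring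
          _ = 0 := by rw [e6]; linear_combination hθ'
      have hδS : δ ∈ IntermediateField.adjoin ℚ (f.rootSet ℂ) := by
        have h1 := div_mem hωS hθS
        rw [mul_div_cancel_right₀ _ hθ0] at h1
        have h2 := add_mem (add_mem h1 h1) (one_mem _)
        convert h2 using 1
        ring
      rw [hMdef, IntermediateField.adjoin_le_iff]
      rintro x (hx | hx)
      · rw [hx]; exact hθS
      · rw [Set.mem_singleton_iff.mp hx]; exact hδS
  rw [Polynomial.Gal.card_of_separable hirr.separable]
  have hSF : IsSplittingField ℚ (IntermediateField.adjoin ℚ (f.rootSet ℂ)) f :=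
    IntermediateField.adjoin_rootSet_isSplittingField hsplit
  rw [← (IsSplittingField.algEquiv (IntermediateField.adjoin ℚ (f.rootSet ℂ)) f).toLinearEquiv.finrank_eq,
    hS, h24]
end

section
/- Let a, b ∈ ℚ and suppose f(x) = x^12 + a·x^6 + b is irreducible over ℚ. Assume: b is a square in ℚ; 3·(4b − a^2) is not a square in ℚ; for every s ∈ ℚ with s^2 = b, neither 3·(a + 2s) nor 3·(a − 2s) is a square in ℚ; b is not a cube in ℚ; and the cubic x^3 − 3·b·x + a·b has no rational root. Then the Galois group of f over ℚ has order 72. -/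
open Polynomial

open IntermediateField in
theorem tower_step {k₀ : Type*} [Field k₀] [CharZero k₀] {E : Type*} [Field E] [Algebra k₀ E] [FiniteDimensional k₀ E]
    (F : IntermediateField k₀ E) (x : E) (p : ℕ) (hp : p.Prime) (hx : x ^ p ∈ F)
    (hn : ∀ y ∈ F, y ^ p ≠ x ^ p) :
    Module.finrank k₀ (F ⊔ k₀⟮x⟯ : IntermediateField k₀ E) = p * Module.finrank k₀ F ∧
    ∀ w ∈ (F ⊔ k₀⟮x⟯ : IntermediateField k₀ E), ∃ c : ℕ → E, (∀ i, c i ∈ F) ∧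
      w = ∑ i ∈ Finset.range p, c i * x ^ i := by
  set c : F := ⟨x ^ p, hx⟩ with hc
  have hirr : Irreducible (X ^ p - C c : F[X]) := by
    apply X_pow_sub_C_irreducible_of_prime hp
    intro y hy
    exact hn y y.2 (by simpa [hc] using congrArg (Subtype.val) hy)
  have hroot : aeval x (X ^ p - C c : F[X]) = 0 := by
    simp [hc, IntermediateField.algebraMap_apply]
  have hmon : (X ^ p - C c : F[X]).Monic := monic_X_pow_sub_C c hp.ne_zero
  have hmin : minpoly F x = X ^ p - C c := (minpoly.eq_of_irreducible_of_monic hirr hroot hmon).symm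
  have hint : IsIntegral F x := ⟨_, hmon, hroot⟩
  have hdeg : Module.finrank F F⟮x⟯ = p := by
    rw [adjoin.finrank hint, hmin, natDegree_X_pow_sub_C]
  have hsup : F⟮x⟯.restrictScalars k₀ = F ⊔ k₀⟮x⟯ := restrictScalars_adjoin_eq_sup ..
  constructor
  · rw [← hsup]
    change Module.finrank k₀ F⟮x⟯ = _
    rw [← Module.finrank_mul_finrank k₀ F F⟮x⟯, hdeg, mul_comm]
  · intro w hw
    rw [← hsup] at hw
    have hw' : w ∈ F⟮x⟯.toSubalgebra := hw
    rw [adjoin_simple_toSubalgebra_of_isAlgebraic hint.isAlgebraic,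
      Algebra.adjoin_singleton_eq_range_aeval] at hw'
    obtain ⟨g, hg⟩ := hw'
    have h1 : aeval x (g %ₘ (X ^ p - C c)) = w := by
      rw [← hg]
      conv_rhs => rw [← modByMonic_add_div g (X ^ p - C c)]
      simp [hroot, -aeval_X, -map_sub]
    refine ⟨fun i => ((g %ₘ (X ^ p - C c)).coeff i : E), fun i => SetLike.coe_mem _, ?_⟩
    rw [← h1, aeval_eq_sum_range' (n := p)]
    · simp [Algebra.smul_def, IntermediateField.algebraMap_apply]
    · have := natDegree_modByMonic_lt g hmon (by
        intro h; have := congrArg natDegree h; rw [natDegree_X_pow_sub_C] at this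
        simp at this; exact hp.ne_zero this)
      rwa [natDegree_X_pow_sub_C] at this

open IntermediateField in
theorem sq_descent {k₀ : Type*} [Field k₀] [CharZero k₀] {E : Type*} [Field E] [Algebra k₀ E] [FiniteDimensional k₀ E]
    (F : IntermediateField k₀ E) (x : E) (hx : x ^ 2 ∈ F)
    (hn : ∀ y ∈ F, y ^ 2 ≠ x ^ 2) (c : E) (hc : c ∈ F)
    (w : E) (hw : w ∈ (F ⊔ k₀⟮x⟯ : IntermediateField k₀ E)) (hwc : w ^ 2 = c) :
    (∃ y ∈ F, y ^ 2 = c) ∨ ∃ y ∈ F, y ^ 2 = c * x ^ 2 := by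
  have : CharZero E := charZero_of_injective_algebraMap (algebraMap k₀ E).injective
  obtain ⟨k, hk, hs⟩ := (tower_step F x 2 Nat.prime_two hx hn).2 w hw
  simp only [Finset.sum_range_succ, Finset.range_zero, Finset.sum_empty] at hs
  have e : 2 * k 0 * k 1 * x = c - k 0 ^ 2 - k 1 ^ 2 * x ^ 2 := by
    rw [← hwc, hs]; ring
  have hm : c - k 0 ^ 2 - k 1 ^ 2 * x ^ 2 ∈ F :=
    sub_mem (sub_mem hc (pow_mem (hk 0) _)) (mul_mem (pow_mem (hk 1) _) hx)
  by_cases h0 : k 0 = 0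
  · right
    refine ⟨k 1 * x ^ 2, mul_mem (hk 1) hx, ?_⟩
    rw [h0] at e; linear_combination (x ^ 2) * e
  by_cases h1 : k 1 = 0
  · left
    refine ⟨k 0, hk 0, ?_⟩
    rw [h1] at e; linear_combination e
  exfalso
  have : x = (c - k 0 ^ 2 - k 1 ^ 2 * x ^ 2) / (2 * k 0 * k 1) := by
    rw [← e]; field_simp
  refine hn x ?_ rfl
  rw [this]
  exact div_mem hm (mul_mem (mul_mem (ofNat_mem F 2) (hk 0)) (hk 1))

open IntermediateField in
theorem cube_descent {k₀ : Type*} [Field k₀] [CharZero k₀] {E : Type*} [Field E] [Algebra k₀ E] [FiniteDimensional k₀ E]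
    (F : IntermediateField k₀ E) (x : E) (hx : x ^ 3 ∈ F)
    (hn : ∀ y ∈ F, y ^ 3 ≠ x ^ 3) (c : E) (hc : c ∈ F)
    (w : E) (hw : w ∈ (F ⊔ k₀⟮x⟯ : IntermediateField k₀ E)) (hwc : w ^ 3 = c) :
    (∃ y ∈ F, y ^ 3 = c) ∨ (∃ y ∈ F, y ^ 3 * x ^ 3 = c) ∨ (∃ y ∈ F, y ^ 3 * x ^ 6 = c) := by
  have : CharZero E := charZero_of_injective_algebraMap (algebraMap k₀ E).injective
  obtain ⟨k, hk, hs⟩ := (tower_step F x 3 Nat.prime_three hx hn).2 w hw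
  -- linear independence of 1, x, x²
  have hx0 : x ≠ 0 := by
    rintro rfl; exact hn 0 (zero_mem _) rfl
  have lin : ∀ A ∈ F, ∀ B ∈ F, ∀ D ∈ F, A + B * x + D * x ^ 2 = 0 → B = 0 ∧ D = 0 := by
    intro A hA B hB D hD h
    have hxF : x ∉ F := fun h => hn x h rfl
    -- multiply by x and eliminate x²
    have h2 : (D ^ 2 * x ^ 3 - A * B) = (B ^ 2 - A * D) * x := by
      linear_combination (D * x - B) * h
    have hm : D ^ 2 * x ^ 3 - A * B ∈ F :=
      sub_mem (mul_mem (pow_mem hD _) hx) (mul_mem hA hB)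
    have hm2 : B ^ 2 - A * D ∈ F := sub_mem (pow_mem hB _) (mul_mem hA hD)
    have h3 : B ^ 2 - A * D = 0 := by
      by_contra h0
      apply hxF
      have : x = (D ^ 2 * x ^ 3 - A * B) / (B ^ 2 - A * D) := by
        rw [h2]; field_simp
      rw [this]; exact div_mem hm hm2
    have hD0 : D = 0 := by
      by_contra h0
      apply hn (B / D) (div_mem hB hD)
      rw [h3, zero_mul] at h2
      have h4 : D ^ 3 * x ^ 3 = B ^ 3 := by linear_combination D * h2 - B * h3
      field_simp
      exact h4.symm
    subst hD0
    refine ⟨?_, rfl⟩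
    have : B ^ 2 = 0 := by linear_combination h3
    exact pow_eq_zero_iff (two_ne_zero) |>.1 this
  simp only [Finset.sum_range_succ, Finset.range_zero, Finset.sum_empty] at hs
  obtain ⟨p, hpk⟩ : ∃ p, p = k 0 := ⟨_, rfl⟩
  obtain ⟨q, hqk⟩ : ∃ p, p = k 1 := ⟨_, rfl⟩
  obtain ⟨r, hrk⟩ : ∃ p, p = k 2 := ⟨_, rfl⟩
  have hp := hk 0; have hq := hk 1; have hr := hk 2
  rw [← hpk] at hp hs; rw [← hqk] at hq hs; rw [← hrk] at hr hs
  have hw3 : c = (p ^ 3 + q ^ 3 * x ^ 3 + r ^ 3 * (x ^ 3) ^ 2 + 6 * p * q * r * x ^ 3)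
      + (3 * (p ^ 2 * q + q ^ 2 * r * x ^ 3 + p * r ^ 2 * x ^ 3)) * x
      + (3 * (p ^ 2 * r + p * q ^ 2 + q * r ^ 2 * x ^ 3)) * x ^ 2 := by
    rw [← hwc, hs]; ring
  have h3F : (3 : E) ∈ F := ofNat_mem F 3
  have h6F : (6 : E) ∈ F := ofNat_mem F 6
  obtain ⟨e1, e2⟩ := lin (p ^ 3 + q ^ 3 * x ^ 3 + r ^ 3 * (x ^ 3) ^ 2 + 6 * p * q * r * x ^ 3 - c)
    (by
      clear hw hs
      apply_rules [sub_mem, add_mem, mul_mem, pow_mem])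
    (3 * (p ^ 2 * q + q ^ 2 * r * x ^ 3 + p * r ^ 2 * x ^ 3))
    (by clear hw hs; apply_rules [sub_mem, add_mem, mul_mem, pow_mem])
    (3 * (p ^ 2 * r + p * q ^ 2 + q * r ^ 2 * x ^ 3))
    (by clear hw hs; apply_rules [sub_mem, add_mem, mul_mem, pow_mem])
    (by linear_combination -hw3)
  have h30 : (3 : E) ≠ 0 := by norm_num
  have e1' := (mul_eq_zero.1 e1).resolve_left h30
  have e2' := (mul_eq_zero.1 e2).resolve_left h30
  have e3 : p * (r ^ 3 * x ^ 3 - q ^ 3) = 0 := by linear_combination r * e1' - q * e2'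
  have hx3 : x ^ 3 ≠ 0 := pow_ne_zero _ hx0
  rcases mul_eq_zero.1 e3 with h | h
  · subst h
    have : q ^ 2 * r * x ^ 3 = 0 := by linear_combination e1'
    rcases mul_eq_zero.1 ((mul_eq_zero.1 this).resolve_right hx3) with h | h
    · have hq0 : q = 0 := pow_eq_zero_iff (two_ne_zero) |>.1 h
      right; right
      exact ⟨r, hr, by rw [← hwc, hs, hq0]; ring⟩
    · right; left
      exact ⟨q, hq, by rw [← hwc, hs, h]; ring⟩
  · have hr0 : r = 0 := by
      by_contra h0
      apply hn (q / r) (div_mem hq hr)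
      field_simp
      linear_combination -h
    have hq0 : q = 0 := by
      rw [hr0] at h
      exact pow_eq_zero_iff (three_ne_zero) |>.1 (by linear_combination -h)
    left
    exact ⟨p, hp, by rw [← hwc, hs, hq0, hr0]; ring⟩

open IntermediateField in
theorem norm_quad {k₀ : Type*} [Field k₀] [CharZero k₀] {K : Type*} [Field K] [Algebra k₀ K] [FiniteDimensional k₀ K]
    (a b : k₀) (h : ¬ ∃ t : k₀, t ^ 2 = a ^ 2 - 4 * b) (h8 : Module.finrank k₀ K = 8)
    (α : K) (hα : α ^ 2 + algebraMap k₀ K a * α + algebraMap k₀ K b = 0) :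
    Algebra.norm k₀ α = b ^ 4 := by
  have hmon : (X ^ 2 + C a * X + C b : k₀[X]).Monic := by monicity!
  have hnd : (X ^ 2 + C a * X + C b : k₀[X]).natDegree = 2 := by compute_degree!
  have hirr : Irreducible (X ^ 2 + C a * X + C b : k₀[X]) := by
    rw [Monic.irreducible_iff_roots_eq_zero_of_degree_le_three hmon (by omega) (by omega)]
    rw [Multiset.eq_zero_iff_forall_notMem]
    intro t ht
    rw [mem_roots hmon.ne_zero] at ht
    simp at ht
    exact h ⟨2 * t + a, by linear_combination 4 * ht⟩
  have hroot : aeval α (X ^ 2 + C a * X + C b : k₀[X]) = 0 := by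
    simpa using hα
  have hint : IsIntegral k₀ α := ⟨_, hmon, hroot⟩
  have hmin : minpoly k₀ α = X ^ 2 + C a * X + C b :=
    (minpoly.eq_of_irreducible_of_monic hirr hroot hmon).symm
  have hdeg : Module.finrank k₀ k₀⟮α⟯ = 2 := by rw [adjoin.finrank hint, hmin, hnd]
  have hmul := Module.finrank_mul_finrank k₀ k₀⟮α⟯ K
  rw [hdeg, h8] at hmul
  have h4 : Module.finrank k₀⟮α⟯ K = 4 := by omega
  rw [Algebra.norm_eq_norm_adjoin, h4, ← adjoin.powerBasis_gen hint,
    Algebra.PowerBasis.norm_gen_eq_coeff_zero_minpoly]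
  simp [adjoin.powerBasis_gen, adjoin.powerBasis_dim, minpoly_gen, hmin, hnd]

open IntermediateField in
/-- no cubic irrationality in a field of degree 8 -/
theorem cubic_root {k₀ : Type*} [Field k₀] [CharZero k₀] {K : Type*} [Field K] [Algebra k₀ K] [FiniteDimensional k₀ K]
    (h8 : Module.finrank k₀ K = 8) (c d : k₀) (t : K)
    (ht : t ^ 3 + algebraMap k₀ K c * t + algebraMap k₀ K d = 0) :
    ∃ r : k₀, r ^ 3 + c * r + d = 0 := by
  by_contra hcon
  have hmon : (X ^ 3 + C c * X + C d : k₀[X]).Monic := by monicity!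
  have hnd : (X ^ 3 + C c * X + C d : k₀[X]).natDegree = 3 := by compute_degree!
  have hirr : Irreducible (X ^ 3 + C c * X + C d : k₀[X]) := by
    rw [Monic.irreducible_iff_roots_eq_zero_of_degree_le_three hmon (by omega) (by omega)]
    rw [Multiset.eq_zero_iff_forall_notMem]
    intro t ht
    rw [mem_roots hmon.ne_zero] at ht
    simp at ht
    exact hcon ⟨t, ht⟩
  have hroot : aeval t (X ^ 3 + C c * X + C d : k₀[X]) = 0 := by
    simpa using ht
  have hint : IsIntegral k₀ t := ⟨_, hmon, hroot⟩
  have hmin : minpoly k₀ t = X ^ 3 + C c * X + C d :=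
    (minpoly.eq_of_irreducible_of_monic hirr hroot hmon).symm
  have hdeg : Module.finrank k₀ k₀⟮t⟯ = 3 := by rw [adjoin.finrank hint, hmin, hnd]
  have hmul := Module.finrank_mul_finrank k₀ k₀⟮t⟯ K
  rw [hdeg, h8] at hmul
  omega

theorem nofac {k₀ : Type*} [Field k₀] (a b p q p' q' : k₀)
    (hirr : Irreducible (X ^ 12 + C a * X ^ 6 + C b : k₀[X]))
    (h9 : p + p' = 0) (h6 : q + q' + p * p' = a) (h3 : p * q' + q * p' = 0) (h0 : q * q' = b) :
    False := by
  have e : (X ^ 12 + C a * X ^ 6 + C b : k₀[X]) =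
      (X ^ 6 + C p * X ^ 3 + C q) * (X ^ 6 + C p' * X ^ 3 + C q') := by
    have h9' : C p + C p' = (0 : k₀[X]) := by rw [← C_add, h9, C_0]
    have h3' : C p * C q' + C q * C p' = (0 : k₀[X]) := by
      rw [← C_mul, ← C_mul, ← C_add, h3, C_0]
    rw [← h6, ← h0]
    simp only [C_add, C_mul]
    linear_combination (-X ^ 9) * h9' - X ^ 3 * h3'
  rcases hirr.isUnit_or_isUnit e with h | h
  · have := natDegree_eq_zero_of_isUnit h
    have h' : (X ^ 6 + C p * X ^ 3 + C q : k₀[X]).natDegree = 6 := by compute_degree!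
    omega
  · have := natDegree_eq_zero_of_isUnit h
    have h' : (X ^ 6 + C p' * X ^ 3 + C q' : k₀[X]).natDegree = 6 := by compute_degree!
    omega

/-- the roots we need in the splitting field -/
theorem setup {k₀ : Type*} [Field k₀] [CharZero k₀] {E : Type*} [Field E] [Algebra k₀ E]
    (a b s : k₀) (hs : s ^ 2 = b) (hb0 : b ≠ 0)
    (hsp : ((X ^ 12 + C a * X ^ 6 + C b : k₀[X]).map (algebraMap k₀ E)).Splits) :
    ∃ θ φ z : E, θ ^ 6 + φ ^ 6 = - algebraMap k₀ E a ∧ (θ * φ) ^ 3 = algebraMap k₀ E s ∧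
      z ^ 2 = -3 := by
  have hcE : CharZero E := charZero_of_injective_algebraMap (algebraMap k₀ E).injective
  obtain ⟨A, hA⟩ : ∃ A, A = algebraMap k₀ E a := ⟨_, rfl⟩
  obtain ⟨S, hS⟩ : ∃ S, S = algebraMap k₀ E s := ⟨_, rfl⟩
  have hB : algebraMap k₀ E b = S ^ 2 := by rw [← hs, hS, map_pow]
  have hS0 : S ≠ 0 := by
    intro h
    rw [h] at hB
    apply hb0
    apply (algebraMap k₀ E).injective
    rw [hB]; simp
  simp only [Polynomial.map_add, Polynomial.map_mul, Polynomial.map_pow, map_X, map_C, hB,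
    ← hA] at hsp
  rw [← hA, ← hS]
  set P : E[X] := X ^ 12 + C A * X ^ 6 + C (S ^ 2) with hP
  have hPd : P.natDegree = 12 := by rw [hP]; compute_degree!
  have hP0 : P ≠ 0 := by intro h; rw [h] at hPd; simp at hPd
  obtain ⟨θ, hθ⟩ := hsp.exists_eval_eq_zero (by
    rw [degree_eq_natDegree hP0, hPd]; norm_num)
  have hθ' : θ ^ 12 + A * θ ^ 6 + S ^ 2 = 0 := by simpa [hP] using hθ
  have hθ0 : θ ≠ 0 := by
    rintro rfl; apply hS0; simpa using hθ'
  have hfac : P = (X ^ 6 - C (θ ^ 6)) * (X ^ 6 - C (-A - θ ^ 6)) := by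
    have : C (S ^ 2) = - (C (θ ^ 12) + C A * C (θ ^ 6) : E[X]) := by
      rw [← C_mul, ← C_add, ← C_neg]
      congr 1; linear_combination hθ'
    rw [hP, this]
    simp only [C_sub, C_neg, C_pow]
    ring
  -- conjugate root
  obtain ⟨φ, hφ⟩ := (hsp.of_dvd hP0 (hfac ▸ dvd_mul_left _ _ :
      (X ^ 6 - C (-A - θ ^ 6) : E[X]) ∣ P)).exists_eval_eq_zero (by
    rw [degree_X_pow_sub_C (by norm_num)]; norm_num)
  have hφ' : φ ^ 6 = -A - θ ^ 6 := by
    have : φ ^ 6 - (-A - θ ^ 6) = 0 := by simpa using hφ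
    linear_combination this
  -- root of the quadratic
  have hq : (X ^ 2 + C θ * X + C (θ ^ 2) : E[X]) ∣ P := by
    rw [hfac]
    refine Dvd.dvd.mul_right ⟨(X ^ 2 - C (θ ^ 2)) * (X ^ 2 - C θ * X + C (θ ^ 2)), ?_⟩ _
    simp only [C_pow]; ring
  have hqd : (X ^ 2 + C θ * X + C (θ ^ 2) : E[X]).natDegree = 2 := by compute_degree!
  obtain ⟨ρ, hρ⟩ := (hsp.of_dvd hP0 hq).exists_eval_eq_zero (by
    rw [degree_eq_natDegree (by intro h; rw [h] at hqd; simp at hqd), hqd]; norm_num)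
  have hρ' : ρ ^ 2 + θ * ρ + θ ^ 2 = 0 := by simpa using hρ
  have hz : ((2 * ρ + θ) / θ) ^ 2 = -3 := by
    field_simp
    linear_combination 4 * hρ'
  have h6 : ((θ * φ) ^ 3 - S) * ((θ * φ) ^ 3 + S) = 0 := by
    linear_combination θ ^ 6 * hφ' - hθ'
  rcases mul_eq_zero.1 h6 with h | h
  · exact ⟨θ, φ, _, by linear_combination hφ', by linear_combination h, hz⟩
  · exact ⟨θ, -φ, _, by linear_combination hφ', by linear_combination -h, hz⟩

open IntermediateField in
theorem deg72 {k₀ : Type*} [Field k₀] [CharZero k₀] {E : Type*} [Field E] [Algebra k₀ E]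
    [FiniteDimensional k₀ E] (a b s : k₀) (hs : s ^ 2 = b)
    [hsf : IsSplittingField k₀ E (X ^ 12 + C a * X ^ 6 + C b : k₀[X])]
    (hu : ¬ ∃ t : k₀, t ^ 2 = -a + 2 * s) (hv : ¬ ∃ t : k₀, t ^ 2 = -a - 2 * s)
    (huv : ¬ ∃ t : k₀, t ^ 2 = a ^ 2 - 4 * b)
    (h3 : ¬ ∃ t : k₀, t ^ 2 = -3)
    (h3u : ¬ ∃ t : k₀, t ^ 2 = 3 * (a - 2 * s)) (h3v : ¬ ∃ t : k₀, t ^ 2 = 3 * (a + 2 * s))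
    (h3uv : ¬ ∃ t : k₀, t ^ 2 = 3 * (4 * b - a ^ 2))
    (hsc : ¬ ∃ t : k₀, t ^ 3 = s)
    (hnr : ¬ ∃ r : k₀, r ^ 3 - 3 * b * r + a * b = 0) :
    Module.finrank k₀ E = 72 := by
  have hcE : CharZero E := charZero_of_injective_algebraMap (algebraMap k₀ E).injective
  have hs0 : s ≠ 0 := by rintro rfl; exact hsc ⟨0, by simp⟩
  have hb0 : b ≠ 0 := by rw [← hs]; exact pow_ne_zero _ hs0
  obtain ⟨θ, φ, z, hsum, hprod, hz⟩ := setup (E := E) a b s hs hb0 hsf.splits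
  have hinj := (algebraMap k₀ E).injective
  have hS0 : algebraMap k₀ E s ≠ 0 := by simpa using hs0
  have hB : algebraMap k₀ E b = algebraMap k₀ E s ^ 2 := by rw [← hs, map_pow]
  have hθ0 : θ ≠ 0 := by
    rintro rfl; apply hS0; rw [← hprod]; simp
  have hφ0 : φ ≠ 0 := by
    rintro rfl; apply hS0; rw [← hprod]; simp
  set x := θ ^ 3 + φ ^ 3 with hx
  set y := θ ^ 3 - φ ^ 3 with hy
  have hx2 : x ^ 2 = algebraMap k₀ E (-a + 2 * s) := by
    simp only [map_add, map_neg, map_mul, map_ofNat]; linear_combination hsum + 2 * hprod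
  have hy2 : y ^ 2 = algebraMap k₀ E (-a - 2 * s) := by
    simp only [map_sub, map_neg, map_mul, map_ofNat]; linear_combination hsum - 2 * hprod
  have hz2 : z ^ 2 = algebraMap k₀ E (-3) := by
    simp only [map_neg, map_ofNat]; exact hz
  have bot_sq : ∀ c : k₀, ∀ y ∈ (⊥ : IntermediateField k₀ E), y ^ 2 = algebraMap k₀ E c →
      ∃ t : k₀, t ^ 2 = c := by
    intro c y hy h
    obtain ⟨t, rfl⟩ := mem_bot.1 hy
    exact ⟨t, hinj (by rw [map_pow, h])⟩
  -- the tower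
  obtain ⟨F0, hF0⟩ : ∃ F : IntermediateField k₀ E, F = ⊥ := ⟨_, rfl⟩
  obtain ⟨F1, hF1⟩ : ∃ F : IntermediateField k₀ E, F = F0 ⊔ k₀⟮x⟯ := ⟨_, rfl⟩
  obtain ⟨F2, hF2⟩ : ∃ F : IntermediateField k₀ E, F = F1 ⊔ k₀⟮y⟯ := ⟨_, rfl⟩
  obtain ⟨F3, hF3⟩ : ∃ F : IntermediateField k₀ E, F = F2 ⊔ k₀⟮z⟯ := ⟨_, rfl⟩
  obtain ⟨F4, hF4⟩ : ∃ F : IntermediateField k₀ E, F = F3 ⊔ k₀⟮θ * φ⟯ := ⟨_, rfl⟩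
  obtain ⟨F5, hF5⟩ : ∃ F : IntermediateField k₀ E, F = F4 ⊔ k₀⟮θ ^ 2⟯ := ⟨_, rfl⟩
  rw [← hF0] at bot_sq
  have c01 : F0 ≤ F1 := hF1 ▸ le_sup_left
  have c12 : F1 ≤ F2 := hF2 ▸ le_sup_left
  have c23 : F2 ≤ F3 := hF3 ▸ le_sup_left
  have c34 : F3 ≤ F4 := hF4 ▸ le_sup_left
  have c45 : F4 ≤ F5 := hF5 ▸ le_sup_left
  have mx : x ∈ F1 := hF1 ▸ (le_sup_right : k₀⟮x⟯ ≤ _) (mem_adjoin_simple_self k₀ x)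
  have my : y ∈ F2 := hF2 ▸ (le_sup_right : k₀⟮y⟯ ≤ _) (mem_adjoin_simple_self k₀ y)
  have mz : z ∈ F3 := hF3 ▸ (le_sup_right : k₀⟮z⟯ ≤ _) (mem_adjoin_simple_self k₀ z)
  have mβ : θ * φ ∈ F4 := hF4 ▸ (le_sup_right : k₀⟮θ * φ⟯ ≤ _) (mem_adjoin_simple_self k₀ _)
  have mϑ : θ ^ 2 ∈ F5 := hF5 ▸ (le_sup_right : k₀⟮θ ^ 2⟯ ≤ _) (mem_adjoin_simple_self k₀ _)
  have mk : ∀ (F : IntermediateField k₀ E) (c : k₀), algebraMap k₀ E c ∈ F :=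
    fun F c => F.algebraMap_mem c
  -- step 1
  have n1 : ∀ w ∈ F0, w ^ 2 ≠ x ^ 2 := by
    intro w hw h
    exact hu (bot_sq _ w hw (h.trans hx2))
  have d1 : Module.finrank k₀ F1 = 2 := by
    have := (tower_step F0 x 2 Nat.prime_two (hx2 ▸ mk _ _) n1).1
    rw [hF1, this, hF0, IntermediateField.finrank_bot]
  have desc1 : ∀ c : k₀, (¬ ∃ t : k₀, t ^ 2 = c) → (¬ ∃ t : k₀, t ^ 2 = c * (-a + 2 * s)) →
      ∀ w ∈ F1, w ^ 2 ≠ algebraMap k₀ E c := by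
    intro c h1 h2 w hw h
    rw [hF1] at hw
    rcases sq_descent F0 x (hx2 ▸ mk _ _) n1 _ (mk _ c) w hw h with ⟨t, ht, h⟩ | ⟨t, ht, h⟩
    · exact h1 (bot_sq _ t ht h)
    · exact h2 (bot_sq _ t ht (by rw [h, hx2, map_mul]))
  -- step 2
  have n2 : ∀ w ∈ F1, w ^ 2 ≠ y ^ 2 := by
    rw [hy2]
    apply desc1 _ hv
    rintro ⟨t, ht⟩
    exact huv ⟨t, by rw [ht, ← hs]; ring⟩
  have d2 : Module.finrank k₀ F2 = 4 := by
    have := (tower_step F1 y 2 Nat.prime_two (hy2 ▸ mk _ _) n2).1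
    rw [hF2, this, d1]
  -- step 3
  have n3 : ∀ w ∈ F2, w ^ 2 ≠ z ^ 2 := by
    intro w hw h
    rw [hz2] at h
    rw [hF2] at hw
    rcases sq_descent F1 y (hy2 ▸ mk _ _) n2 _ (mk _ _) w hw h with ⟨t, ht, h⟩ | ⟨t, ht, h⟩
    · refine desc1 _ h3 ?_ t ht h
      rintro ⟨r, hr⟩
      exact h3u ⟨r, by rw [hr]; ring⟩
    · rw [hy2, ← map_mul] at h
      refine desc1 _ ?_ ?_ t ht h
      · rintro ⟨r, hr⟩
        exact h3v ⟨r, by rw [hr]; ring⟩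
      · rintro ⟨r, hr⟩
        exact h3uv ⟨r, by rw [hr, ← hs]; ring⟩
  have d3 : Module.finrank k₀ F3 = 8 := by
    have := (tower_step F2 z 2 Nat.prime_two (hz2 ▸ mk _ _) n3).1
    rw [hF3, this, d2]
  -- elements of F3
  have mx3 : x ∈ F3 := c23 (c12 mx)
  have my3 : y ∈ F3 := c23 my
  have m2 : ∀ F : IntermediateField k₀ E, (2 : E) ∈ F := fun F => ofNat_mem F 2
  have mθ3 : θ ^ 3 ∈ F3 := by
    have : θ ^ 3 = (x + y) / 2 := by rw [hx, hy]; ring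
    rw [this]; exact div_mem (add_mem mx3 my3) (m2 _)
  have mφ3 : φ ^ 3 ∈ F3 := by
    have : φ ^ 3 = (x - y) / 2 := by rw [hx, hy]; ring
    rw [this]; exact div_mem (sub_mem mx3 my3) (m2 _)
  have mα : θ ^ 6 ∈ F3 := by
    have : θ ^ 6 = (θ ^ 3) ^ 2 := by ring
    rw [this]; exact pow_mem mθ3 _
  have hα : (θ ^ 6) ^ 2 + algebraMap k₀ E a * θ ^ 6 + algebraMap k₀ E b = 0 := by
    rw [hB]
    linear_combination (θ ^ 6) * hsum - (algebraMap k₀ E s + (θ * φ) ^ 3) * hprod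
  have hnorm : Algebra.norm k₀ (⟨θ ^ 6, mα⟩ : F3) = b ^ 4 :=
    norm_quad a b huv d3 _ (Subtype.ext (by simpa using hα))
  have hnorms : Algebra.norm k₀ (algebraMap k₀ F3 s) = s ^ 8 := by
    rw [Algebra.norm_algebraMap, d3]
  -- step 4
  have n4 : ∀ w ∈ F3, w ^ 3 ≠ (θ * φ) ^ 3 := by
    intro w hw h
    rw [hprod] at h
    obtain ⟨r, hr⟩ := cubic_root d3 0 (-s) (⟨w, hw⟩ : F3)
      (Subtype.ext (by simp [h]))
    exact hsc ⟨r, by linear_combination hr⟩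
  have d4 : Module.finrank k₀ F4 = 24 := by
    have := (tower_step F3 (θ * φ) 3 Nat.prime_three (hprod ▸ mk _ _) n4).1
    rw [hF4, this, d3]
  -- step 5
  have n5 : ∀ w ∈ F4, w ^ 3 ≠ (θ ^ 2) ^ 3 := by
    intro w hw h
    have h' : w ^ 3 = θ ^ 6 := by rw [h]; ring
    rw [hF4] at hw
    rcases cube_descent F3 (θ * φ) (hprod ▸ mk _ _) n4 _ mα w hw h' with
      ⟨t, ht, h⟩ | ⟨t, ht, h⟩ | ⟨t, ht, h⟩
    · -- the element is a cube
      have e : (⟨t, ht⟩ : F3) ^ 3 = ⟨θ ^ 6, mα⟩ := Subtype.ext h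
      have e2 := congrArg (Algebra.norm k₀) e
      rw [map_pow, hnorm, ← hs] at e2
      refine hsc ⟨s ^ 3 / Algebra.norm k₀ (⟨t, ht⟩ : F3), ?_⟩
      rw [div_pow, e2]; field_simp
    · rw [hprod] at h
      -- t³ s = α: t b gives the cubic
      have ht0 : t ≠ 0 := by
        rintro rfl; apply hθ0; exact pow_eq_zero_iff (by norm_num : 6 ≠ 0) |>.1 (by rw [← h]; ring)
      set S := algebraMap k₀ E s with hS
      have key : (t * S + S / t) ^ 3 + algebraMap k₀ E (-3 * b) * (t * S + S / t)
          + algebraMap k₀ E (a * b) = 0 := by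
        simp only [map_mul, map_neg, map_ofNat, hB]
        rw [hB, ← h] at hα
        have hα2 : S * t ^ 6 + S + algebraMap k₀ E a * t ^ 3 = 0 := by
          have : S * (S * t ^ 6 + S + algebraMap k₀ E a * t ^ 3) = 0 := by
            linear_combination hα
          exact (mul_eq_zero.1 this).resolve_left hS0
        have e : (t * S + S / t) ^ 3 + -3 * S ^ 2 * (t * S + S / t) + algebraMap k₀ E a * S ^ 2
            = S ^ 2 / t ^ 3 * (S * t ^ 6 + S + algebraMap k₀ E a * t ^ 3) := by
          field_simp
          ring
        rw [e, hα2, mul_zero]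
      obtain ⟨r, hr⟩ := cubic_root d3 (-3 * b) (a * b)
        (⟨t * S + S / t, add_mem (mul_mem ht (mk _ _)) (div_mem (mk _ _) ht)⟩ : F3)
        (Subtype.ext (by simpa using key))
      exact hnr ⟨r, by linear_combination hr⟩
    · have h2 : t ^ 3 * algebraMap k₀ E s ^ 2 = θ ^ 6 := by rw [← h, ← hprod]; ring
      have e : (⟨t, ht⟩ : F3) ^ 3 * (algebraMap k₀ F3 s) ^ 2 = ⟨θ ^ 6, mα⟩ := Subtype.ext h2
      have e2 := congrArg (Algebra.norm k₀) e
      rw [map_mul, map_pow, map_pow, hnorm, hnorms, ← hs] at e2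
      -- N³ s^16 = s^8
      have e3 : (Algebra.norm k₀ (⟨t, ht⟩ : F3)) ^ 3 * s ^ 8 = 1 := by
        apply mul_left_cancel₀ (pow_ne_zero 8 hs0)
        linear_combination e2
      refine hsc ⟨Algebra.norm k₀ (⟨t, ht⟩ : F3) * s ^ 3, ?_⟩
      linear_combination s * e3
  have d5 : Module.finrank k₀ F5 = 72 := by
    have := (tower_step F4 (θ ^ 2) 3 Nat.prime_three (by
      have : (θ ^ 2) ^ 3 = θ ^ 6 := by ring
      rw [this]; exact c34 mα) n5).1
    rw [hF5, this, d4]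
  -- all roots lie in F5
  have unity : ∀ w : E, w ^ 3 = 1 → w ∈ F5 := by
    intro w hw
    have : (w - 1) * ((2 * w + 1 - z) * (2 * w + 1 + z)) = 0 := by
      linear_combination 4 * hw - (w - 1) * hz
    have mz5 : z ∈ F5 := c45 (c34 mz)
    rcases mul_eq_zero.1 this with h | h
    · rw [sub_eq_zero.1 h]; exact one_mem _
    rcases mul_eq_zero.1 h with h | h
    · have : w = (z - 1) / 2 := by field_simp; linear_combination h
      rw [this]; exact div_mem (sub_mem mz5 (one_mem _)) (m2 _)
    · have : w = (-z - 1) / 2 := by field_simp; linear_combination h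
      rw [this]; exact div_mem (sub_mem (neg_mem mz5) (one_mem _)) (m2 _)
  have mφ2 : φ ^ 2 ∈ F5 := by
    have : φ ^ 2 = (θ * φ) ^ 2 / θ ^ 2 := by field_simp
    rw [this]; exact div_mem (pow_mem (c45 mβ) _) mϑ
  have rt : ∀ η : E, η ≠ 0 → η ^ 3 ∈ F5 → η ^ 2 ∈ F5 → ∀ r : E, r ^ 6 = η ^ 6 → r ∈ F5 := by
    intro η h0 m3 m2' r hr
    have hr0 : r ≠ 0 := by
      rintro rfl; apply h0; exact pow_eq_zero_iff (by norm_num : 6 ≠ 0) |>.1 (by rw [← hr]; ring)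
    have r3 : r ^ 3 ∈ F5 := by
      have : (r ^ 3 - η ^ 3) * (r ^ 3 + η ^ 3) = 0 := by linear_combination hr
      rcases mul_eq_zero.1 this with h | h
      · rw [sub_eq_zero.1 h]; exact m3
      · rw [eq_neg_of_add_eq_zero_left h]; exact neg_mem m3
    have r2 : r ^ 2 ∈ F5 := by
      have : r ^ 2 = (r ^ 2 / η ^ 2) * η ^ 2 := by field_simp
      rw [this]
      refine mul_mem (unity _ ?_) m2'
      field_simp
      linear_combination hr
    have : r = r ^ 3 / r ^ 2 := by field_simp
    rw [this]; exact div_mem r3 r2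
  have top : F5 = ⊤ := by
    have h1 := hsf.adjoin_rootSet
    have h2 : Algebra.adjoin k₀ ((X ^ 12 + C a * X ^ 6 + C b : k₀[X]).rootSet E)
        ≤ F5.toSubalgebra := by
      rw [Algebra.adjoin_le_iff]
      intro r hr
      have hr' := (mem_rootSet'.1 hr).2
      have hr2 : r ^ 12 + algebraMap k₀ E a * r ^ 6 + algebraMap k₀ E b = 0 := by
        simpa using hr'
      have : (r ^ 6 - θ ^ 6) * (r ^ 6 - φ ^ 6) = 0 := by
        rw [hB, ← hprod] at hr2
        linear_combination hr2 - r ^ 6 * hsum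
      change r ∈ F5
      rcases mul_eq_zero.1 this with h | h
      · exact rt θ hθ0 (c45 (c34 mθ3)) mϑ r (sub_eq_zero.1 h)
      · exact rt φ hφ0 (c45 (c34 mφ3)) mφ2 r (sub_eq_zero.1 h)
    rw [h1] at h2
    rw [eq_top_iff]
    intro w _
    exact h2 Algebra.mem_top
  rw [top, finrank_top'] at d5
  exact d5

theorem gal_generic {k₀ : Type*} [Field k₀] [CharZero k₀] (h3 : ¬ ∃ t : k₀, t ^ 2 = -3) (a b : k₀) (f : k₀[X])
    (hf : f = X ^ 12 + C a * X ^ 6 + C b) (hirr : Irreducible f)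
    (hb_sq : ∃ s : k₀, s ^ 2 = b)
    (hd : ¬ ∃ s : k₀, s ^ 2 = 3 * (4 * b - a ^ 2))
    (hsq : ∀ s : k₀, s ^ 2 = b → (¬ ∃ t : k₀, t ^ 2 = 3 * (a + 2 * s)) ∧ ¬ ∃ t : k₀, t ^ 2 = 3 * (a - 2 * s))
    (hnc : ¬ ∃ c : k₀, c ^ 3 = b)
    (hnr : ¬ ∃ r : k₀, r ^ 3 - 3 * b * r + a * b = 0) :
    Nat.card f.Gal = 72 := by
  obtain ⟨s, hs⟩ := hb_sq
  rw [Gal.card_of_separable hirr.separable]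
  have hirr' := hirr
  rw [hf] at hirr'
  have hsf : IsSplittingField k₀ f.SplittingField (X ^ 12 + C a * X ^ 6 + C b : k₀[X]) := by
    rw [← hf]; exact IsSplittingField.splittingField f
  refine deg72 a b s hs ?_ ?_ ?_ h3 (hsq s hs).2 (hsq s hs).1 hd ?_ hnr
  · rintro ⟨t, ht⟩
    exact nofac a b t s (-t) s hirr' (by ring) (by linear_combination -ht) (by ring)
      (by rw [← hs]; ring)
  · rintro ⟨t, ht⟩
    exact nofac a b t (-s) (-t) (-s) hirr' (by ring) (by linear_combination -ht) (by ring)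
      (by rw [← hs]; ring)
  · rintro ⟨t, ht⟩
    exact nofac a b 0 ((a - t) / 2) 0 ((a + t) / 2) hirr' (by ring) (by ring) (by ring)
      (by linear_combination -ht / 4)
  · rintro ⟨t, ht⟩
    exact hnc ⟨t ^ 2, by rw [← hs, ← ht]; ring⟩

theorem gal_order_seventytwo_of_12T37 (a b : ℚ) (f : ℚ[X])
    (hf : f = X ^ 12 + C a * X ^ 6 + C b) (hirr : Irreducible f)
    (hb_sq : ∃ s : ℚ, s ^ 2 = b)
    (hd : ¬ ∃ s : ℚ, s ^ 2 = 3 * (4 * b - a ^ 2))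
    (hsq : ∀ s : ℚ, s ^ 2 = b → (¬ ∃ t : ℚ, t ^ 2 = 3 * (a + 2 * s)) ∧ ¬ ∃ t : ℚ, t ^ 2 = 3 * (a - 2 * s))
    (hnc : ¬ ∃ c : ℚ, c ^ 3 = b)
    (hnr : ¬ ∃ r : ℚ, r ^ 3 - 3 * b * r + a * b = 0) :
    Nat.card f.Gal = 72 := by
  refine gal_generic ?_ a b f hf hirr hb_sq hd hsq hnc hnr
  rintro ⟨t, ht⟩
  nlinarith [sq_nonneg t]
end

section
/- Let a, b ∈ ℚ and suppose f(x) = x^12 + a·x^6 + b is irreducible over ℚ. Assume: b is not a square in ℚ; b·(a^2 − 4b) is not a square in ℚ; 3·(4b − a^2) is not a square in ℚ; either −3b is a square in ℚ or 3b·(4b − a^2) is a square in ℚ; and either b is a cube in ℚ or the cubic x^3 − 3·b·x + a·b has a rational root. Then the Galois group of f over ℚ has order 24. -/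
open Polynomial

lemma aux_even_odd {k K : Type*} [Field k] [CharZero k] [Field K] [Algebra k K] (M : IntermediateField k K) (τ e : K)
    (hint : IsIntegral k τ) (hτ : τ ^ 2 ∈ M) (he : e ∈ IntermediateField.adjoin k {τ}) :
    ∃ p ∈ M, ∃ q ∈ M, e = p + q * τ := by
  have h1 : e ∈ (IntermediateField.adjoin k {τ}).toSubalgebra := he
  rw [IntermediateField.adjoin_simple_toSubalgebra_of_isAlgebraic hint.isAlgebraic,
    Algebra.adjoin_singleton_eq_range_aeval] at h1
  obtain ⟨g, rfl⟩ := h1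
  show ∃ p ∈ M, ∃ q ∈ M, aeval τ g = p + q * τ
  induction g using Polynomial.induction_on with
  | C x => exact ⟨algebraMap k K x, M.algebraMap_mem x, 0, M.zero_mem, by simp⟩
  | add g h hg hh =>
    obtain ⟨p, hp, q, hq, h1⟩ := hg
      (by rw [← IntermediateField.mem_toSubalgebra, IntermediateField.adjoin_simple_toSubalgebra_of_isAlgebraic hint.isAlgebraic,
          Algebra.adjoin_singleton_eq_range_aeval]; exact ⟨g, rfl⟩)
    obtain ⟨p', hp', q', hq', h2⟩ := hh
      (by rw [← IntermediateField.mem_toSubalgebra, IntermediateField.adjoin_simple_toSubalgebra_of_isAlgebraic hint.isAlgebraic,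
          Algebra.adjoin_singleton_eq_range_aeval]; exact ⟨h, rfl⟩)
    exact ⟨p + p', add_mem hp hp', q + q', add_mem hq hq', by rw [map_add, h1, h2]; ring⟩
  | monomial n x ih =>
    obtain ⟨p, hp, q, hq, h1⟩ := ih
      (by rw [← IntermediateField.mem_toSubalgebra, IntermediateField.adjoin_simple_toSubalgebra_of_isAlgebraic hint.isAlgebraic,
          Algebra.adjoin_singleton_eq_range_aeval]; exact ⟨_, rfl⟩)
    refine ⟨q * τ ^ 2, mul_mem hq hτ, p, hp, ?_⟩
    rw [pow_succ, ← mul_assoc, map_mul, h1, aeval_X]; ring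

lemma aux_odd_sq {A B : Type*} [Field A] [Field B] [Algebra A B] (h3 : Module.finrank A B = 3)
    (p : B) (c : A) (hp : p ^ 2 = algebraMap A B c) : ∃ x : A, algebraMap A B x = p := by
  have : FiniteDimensional A B := Module.finite_of_finrank_pos (by omega)
  have hi : IsIntegral A p := Algebra.IsIntegral.isIntegral p
  have h1 := minpoly.degree_dvd hi
  rw [h3] at h1
  have hd : minpoly A p ∣ X ^ 2 - C c := minpoly.dvd _ _ (by simp [hp])
  have h2 := natDegree_le_of_dvd hd (X_pow_sub_C_ne_zero (by norm_num) c)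
  rw [natDegree_X_pow_sub_C] at h2
  have h4 : (minpoly A p).natDegree = 1 := by
    rcases (Nat.dvd_prime Nat.prime_three).1 h1 with h | h <;> omega
  exact minpoly.natDegree_eq_one_iff.1 h4

/-- In a degree six field containing `√D`, `-3` is not a square. -/
lemma aux_six_s12 {k N : Type*} [Field k] [CharZero k] [Field N] [Algebra k N] (h6 : Module.finrank k N = 6) (D : k)
    (hD : ¬ ∃ s : k, s ^ 2 = D) (h3D : ¬ ∃ s : k, s ^ 2 = -3 * D) (h3 : ∀ u : k, u ^ 2 ≠ -3) (τ p : N)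
    (hτ : τ ^ 2 = algebraMap k N D) (hp : p ^ 2 = -3) : False := by
  have : FiniteDimensional k N := Module.finite_of_finrank_pos (by omega)
  have hi : IsIntegral k τ := Algebra.IsIntegral.isIntegral τ
  have hirr : Irreducible (X ^ 2 - C D : k[X]) :=
    X_pow_sub_C_irreducible_of_prime Nat.prime_two (fun s hs => hD ⟨s, hs⟩)
  have hmp : X ^ 2 - C D = minpoly k τ := minpoly.eq_of_irreducible_of_monic hirr
    (by simp [hτ]) (monic_X_pow_sub_C D (by norm_num))
  have hfr := IntermediateField.adjoin.finrank hi
  rw [← hmp, natDegree_X_pow_sub_C] at hfr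
  have hmul := Module.finrank_mul_finrank k (IntermediateField.adjoin k {τ}) N
  rw [hfr, h6] at hmul
  obtain ⟨x, hx⟩ := aux_odd_sq (A := IntermediateField.adjoin k {τ}) (B := N) (by omega) p (-3)
    (by rw [hp, map_neg, map_ofNat])
  have hpm : p ∈ IntermediateField.adjoin k {τ} := by rw [← hx]; exact x.2
  obtain ⟨u, hu, v, hv, huv⟩ := aux_even_odd ⊥ τ p hi
    (by rw [hτ]; exact IntermediateField.algebraMap_mem _ _) hpm
  obtain ⟨u, rfl⟩ := IntermediateField.mem_bot.1 hu
  obtain ⟨v, rfl⟩ := IntermediateField.mem_bot.1 hv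
  have hτn : ∀ z : k, algebraMap k N z ≠ τ := by
    intro z hz
    apply hD
    refine ⟨z, (algebraMap k N).injective ?_⟩
    rw [map_pow, hz, hτ]
  have inj := (algebraMap k N).injective
  rw [huv] at hp
  by_cases hv0 : v = 0
  · subst hv0
    have : u ^ 2 = -3 := inj (by simpa [map_ofNat] using hp)
    exact h3 _ this
  by_cases hu0 : u = 0
  · subst hu0
    apply h3D
    refine ⟨v * D, inj ?_⟩
    have : (algebraMap k N v) ^ 2 * algebraMap k N D = -3 := by
      rw [← hτ]; rw [map_zero] at hp; linear_combination hp
    simp only [map_mul, map_pow, map_neg, map_ofNat]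
    linear_combination (algebraMap k N D) * this
  · apply hτn ((-3 - u ^ 2 - v ^ 2 * D) / (2 * u * v))
    have hu' : algebraMap k N u ≠ 0 := by simpa using hu0
    have hv' : algebraMap k N v ≠ 0 := by simpa using hv0
    have : CharZero N := charZero_of_injective_algebraMap (algebraMap k N).injective
    simp only [map_div₀, map_sub, map_mul, map_pow, map_neg, map_ofNat]
    rw [div_eq_iff (by simp [hu', hv'])]
    rw [← hτ]
    linear_combination -hp

lemma aux_norm {k K : Type*} [Field k] [CharZero k] [Field K] [Algebra k K] (a b : k) (s : K) (hb : ¬ ∃ s : k, s ^ 2 = b)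
    (hmp : minpoly k s = X ^ 6 + C a * X ^ 3 + C b) (hi : IsIntegral k s) (w : K)
    (hw : w ∈ IntermediateField.adjoin k {s}) (hws : w ^ 2 = -3 * s) : False := by
  have h1 := Algebra.PowerBasis.norm_gen_eq_coeff_zero_minpoly (IntermediateField.adjoin.powerBasis hi)
  have hfr := IntermediateField.adjoin.finrank hi
  have hdeg : (minpoly k s).natDegree = 6 := by rw [hmp]; compute_degree!
  rw [IntermediateField.adjoin.powerBasis_gen, IntermediateField.minpoly_gen,
    IntermediateField.adjoin.powerBasis_dim, hdeg, hmp] at h1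
  have h2 : (⟨w, hw⟩ : IntermediateField.adjoin k {s}) ^ 2
      = algebraMap k _ (-3) * IntermediateField.AdjoinSimple.gen k s := by
    apply Subtype.ext
    simp [hws, map_ofNat]
    exact Or.inl rfl
  have h3 := congrArg (Algebra.norm k) h2
  rw [map_pow, map_mul, h1, Algebra.norm_algebraMap, hfr, hdeg] at h3
  simp at h3
  refine hb ⟨Algebra.norm k (⟨w, hw⟩ : IntermediateField.adjoin k {s}) / 27, ?_⟩
  rw [div_pow, h3]; norm_num

/-- `-3` is not a square in `k(α)`. -/
lemma aux_not_sq {k K : Type*} [Field k] [CharZero k] [Field K] [Algebra k K] (a b : k) (f : k[X])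
    (hf : f = X ^ 12 + C a * X ^ 6 + C b) (hirr : Irreducible f)
    (hb_nsq : ¬ ∃ s : k, s ^ 2 = b)
    (hd : ¬ ∃ s : k, s ^ 2 = 3 * (4 * b - a ^ 2)) (α : K) (hα : aeval α f = 0)
    (hi : IsIntegral k α) (hm3 : ∀ u : k, u ^ 2 ≠ -3)
    (h12 : Module.finrank k (IntermediateField.adjoin k {α}) = 12)
    (e : K) (he : e ∈ IntermediateField.adjoin k {α}) (he3 : e ^ 2 = -3) : False := by
  have : CharZero K := charZero_of_injective_algebraMap (algebraMap k K).injective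
  have hg : Irreducible (X ^ 6 + C a * X ^ 3 + C b : k[X]) := by
    apply of_irreducible_expand (p := 2) (by norm_num)
    convert hirr using 1
    rw [hf]; simp [← pow_mul]
  have hq : Irreducible (X ^ 2 + C a * X + C b : k[X]) := by
    apply of_irreducible_expand (p := 3) (by norm_num)
    convert hg using 1
    simp [← pow_mul]
  have hD : ¬ ∃ s : k, s ^ 2 = a ^ 2 - 4 * b := by
    rintro ⟨s, hs⟩
    have hdg : (X ^ 2 + C a * X + C b : k[X]).degree = 2 := by compute_degree!
    have := degree_eq_one_of_irreducible_of_root hq (x := (-a + s) / 2)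
      (by simp; linear_combination hs / 4)
    rw [hdg] at this
    norm_num at this
  have hi2 : IsIntegral k (α ^ 2) := hi.pow 2
  have hα' : α ^ 12 + algebraMap k K a * α ^ 6 + algebraMap k K b = 0 := by
    rw [hf] at hα; simpa using hα
  have hmp : X ^ 6 + C a * X ^ 3 + C b = minpoly k (α ^ 2) :=
    minpoly.eq_of_irreducible_of_monic hg (by simp; linear_combination hα') (by monicity!)
  have hfr := IntermediateField.adjoin.finrank hi2
  have hdeg : (minpoly k (α ^ 2)).natDegree = 6 := by rw [← hmp]; compute_degree!
  rw [hdeg] at hfr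
  have hfd : FiniteDimensional k (IntermediateField.adjoin k {α ^ 2}) :=
    Module.finite_of_finrank_pos (by omega)
  have hαN : α ∉ IntermediateField.adjoin k {α ^ 2} := by
    intro h
    have := IntermediateField.finrank_le_of_le_right (IntermediateField.adjoin_simple_le_iff.2 h)
    omega
  have hs : α ^ 2 ∈ IntermediateField.adjoin k {α ^ 2} :=
    IntermediateField.mem_adjoin_simple_self k (α ^ 2)
  set N := IntermediateField.adjoin k {α ^ 2} with hN
  have key : ∀ p ∈ N, p ^ 2 ≠ -3 := by
    intro p hp hp3
    have ht : α ^ 6 ∈ N := by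
      have := pow_mem hs 3
      rwa [← pow_mul] at this
    refine aux_six_s12 hfr (a ^ 2 - 4 * b) hD ?_ hm3 (2 * ⟨α ^ 6, ht⟩ + algebraMap k N a) ⟨p, hp⟩ ?_ ?_
    · rintro ⟨s, hs⟩
      exact hd ⟨s, by rw [hs]; ring⟩
    · apply Subtype.ext
      show (2 * α ^ 6 + algebraMap k K a) ^ 2 = algebraMap k K (a ^ 2 - 4 * b)
      simp only [map_sub, map_mul, map_pow, map_ofNat]
      linear_combination 4 * hα'
    · apply Subtype.ext
      exact hp3
  obtain ⟨p, hp, q, hq, hpq⟩ := aux_even_odd N α e hi hs he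
  rw [hpq] at he3
  by_cases hq0 : q = 0
  · subst hq0
    exact key p hp (by linear_combination he3)
  by_cases hp0 : p = 0
  · subst hp0
    exact aux_norm a b (α ^ 2) hb_nsq hmp.symm hi2 (q * α ^ 2) (mul_mem hq hs)
      (by linear_combination (α ^ 2) * he3)
  · apply hαN
    have h2 : (2 : K) ∈ N := ofNat_mem N 2
    have h3 : (3 : K) ∈ N := ofNat_mem N 3
    have : α = (-3 - p ^ 2 - q ^ 2 * α ^ 2) / (2 * p * q) := by
      rw [eq_div_iff (by simp [hp0, hq0])]
      linear_combination he3
    rw [this]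
    exact div_mem (sub_mem (sub_mem (neg_mem h3) (pow_mem hp 2)) (mul_mem (pow_mem hq 2) hs))
      (mul_mem (mul_mem h2 hp) hq)

lemma aux_cube_eq {K : Type*} [Field K] (ω x y : K) (hω : ω ^ 2 + ω + 1 = 0)
    (h : x ^ 3 = y ^ 3) : x = y ∨ x = ω * y ∨ x = ω ^ 2 * y := by
  have h3 : ω ^ 3 = 1 := by linear_combination (ω - 1) * hω
  have : (x - y) * ((x - ω * y) * (x - ω ^ 2 * y)) = 0 := by
    linear_combination h + (x * y ^ 2 * ω - x ^ 2 * y) * hω - y ^ 3 * h3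
  rcases mul_eq_zero.1 this with h | h
  · exact Or.inl (sub_eq_zero.1 h)
  rcases mul_eq_zero.1 h with h | h
  · exact Or.inr (Or.inl (sub_eq_zero.1 h))
  · exact Or.inr (Or.inr (sub_eq_zero.1 h))

lemma aux_u {k K : Type*} [Field k] [Field K] [CharZero K] [Algebra k K] (F : IntermediateField k K) (b r : K) (hrm : r ∈ F) (hbm : b ∈ F)
    (hrb : r ^ 2 ≠ b) (u v m : K) (hm : m ∈ F) (huv : u * v = b) (hr : u + v = r)
    (h3 : u ^ 3 - v ^ 3 = m) : u ∈ F := by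
  have hne : (r ^ 2 - b) ≠ 0 := by
    rw [sub_ne_zero]; exact_mod_cast hrb
  have h2 : (2 : K) ∈ F := by exact ofNat_mem F 2
  have : u = (m / (r ^ 2 - b) + r) / 2 := by
    rw [eq_div_iff two_ne_zero, ← sub_eq_iff_eq_add, eq_div_iff hne, ← hr, ← huv, ← h3]
    ring
  rw [this]
  exact div_mem (add_mem (div_mem hm (sub_mem (pow_mem hrm 2) hbm)) hrm) h2

/-- Every root of `f` lies in any subfield containing one root and a primitive cube root of unity. -/
lemma aux_mem {k K : Type*} [Field k] [Field K] [CharZero K] [Algebra k K] (F : IntermediateField k K) (a b : K) (haF : a ∈ F) (hbF : b ∈ F)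
    (hb0 : b ≠ 0) (hD0 : a ^ 2 - 4 * b ≠ 0)
    (h3b : (∃ s ∈ F, s ^ 2 = -3 * b) ∨ ∃ s ∈ F, s ^ 2 = 3 * b * (4 * b - a ^ 2))
    (hcr : (∃ c ∈ F, c ^ 3 = b) ∨ ∃ r ∈ F, r ^ 2 ≠ b ∧ r ^ 3 - 3 * b * r + a * b = 0)
    (ω α β : K) (hω : ω ^ 2 + ω + 1 = 0) (hωF : ω ∈ F) (hαF : α ∈ F)
    (hα : α ^ 12 + a * α ^ 6 + b = 0) (hβ : β ^ 12 + a * β ^ 6 + b = 0) : β ∈ F := by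
  have hbK : b ≠ 0 := by exact_mod_cast hb0
  have h3 : ω ^ 3 = 1 := by linear_combination (ω - 1) * hω
  have hω0 : ω ≠ 0 := by rintro rfl; simp at hω
  have hα0 : α ≠ 0 := by rintro rfl; simp at hα; exact hb0 hα
  have hβ0 : β ≠ 0 := by rintro rfl; simp at hβ; exact hb0 hβ
  have h2m : (2 : K) ∈ F := by exact ofNat_mem F 2
  have h1m : (1 : K) ∈ F := F.one_mem
  have hcube : ∀ x y : K, y ∈ F → x ^ 3 = y ^ 3 → x ∈ F := by
    intro x y hy hxy
    rcases aux_cube_eq ω x y hω hxy with h | h | h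
    · rwa [h]
    · rw [h]; exact mul_mem hωF hy
    · rw [h]; exact mul_mem (pow_mem hωF 2) hy
  have hsq : ∀ x y : K, y ∈ F → x ^ 2 = y ^ 2 → x ∈ F := by
    intro x y hy hxy
    rcases sq_eq_sq_iff_eq_or_eq_neg.1 hxy with h | h
    · rwa [h]
    · rw [h]; exact neg_mem hy
  have hcase : (β ^ 6 - α ^ 6) * (β ^ 6 + α ^ 6 + a) = 0 := by linear_combination hβ - hα
  rcases mul_eq_zero.1 hcase with h | h
  · -- same sixth power
    have h1 : (β ^ 3) ∈ F := hsq _ (α ^ 3) (pow_mem hαF 3) (by linear_combination h)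
    have h2 : (β ^ 2) ∈ F := hcube _ (α ^ 2) (pow_mem hαF 2) (by linear_combination h)
    have : β = β ^ 3 / β ^ 2 := by field_simp
    rw [this]; exact div_mem h1 h2
  · have hprod : α ^ 6 * β ^ 6 = b := by linear_combination α ^ 6 * h - hα
    have hg6 : (α * β) ^ 6 = b := by rw [mul_pow, hprod]
    have hg0 : α * β ≠ 0 := mul_ne_zero hα0 hβ0
    have hg3 : (α * β) ^ 3 ∈ F := by
      have hθ : (2 * ω + 1) ^ 2 = -3 := by linear_combination 4 * hω
      have hθm : (2 * ω + 1) ∈ F := add_mem (mul_mem h2m hωF) h1m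
      have hθ0 : 2 * ω + 1 ≠ 0 := by
        intro h0; rw [h0] at hθ; norm_num at hθ
      rcases h3b with ⟨s, hsF, hs⟩ | ⟨s, hsF, hs⟩
      · have hsK : s ^ 2 = -3 * b := by exact_mod_cast hs
        have hm : (α * β) ^ 3 * (2 * ω + 1) ∈ F := hsq _ s (hsF) (by
          rw [mul_pow, hθ, hsK, ← hg6]; ring)
        have : (α * β) ^ 3 = (α * β) ^ 3 * (2 * ω + 1) / (2 * ω + 1) := by field_simp
        rw [this]; exact div_mem hm hθm
      · have hsK : s ^ 2 = 3 * b * (4 * b - a ^ 2) := by exact_mod_cast hs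
        have hτ : (2 * α ^ 6 + a) ^ 2 = a ^ 2 - 4 * b := by linear_combination 4 * hα
        have hτm : (2 * α ^ 6 + a) ∈ F := add_mem (mul_mem h2m (pow_mem hαF 6)) (haF)
        have hτ0 : 2 * α ^ 6 + a ≠ 0 := by
          intro h0; rw [h0] at hτ
          apply hD0
          have : (a ^ 2 - 4 * b) = 0 := by rw [← hτ]; norm_num
          exact_mod_cast this
        have hm : (α * β) ^ 3 * ((2 * ω + 1) * (2 * α ^ 6 + a)) ∈ F := hsq _ s (hsF) (by
          rw [mul_pow _ (_ * _), mul_pow (2 * ω + 1), hθ, hτ, hsK, ← hg6]; ring)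
        have : (α * β) ^ 3 = (α * β) ^ 3 * ((2 * ω + 1) * (2 * α ^ 6 + a))
            / ((2 * ω + 1) * (2 * α ^ 6 + a)) := by
          rw [mul_div_assoc, div_self (mul_ne_zero hθ0 hτ0), mul_one]
        rw [this]; exact div_mem hm (mul_mem hθm hτm)
    have hg2 : (α * β) ^ 2 ∈ F := by
      rcases hcr with ⟨c, hcF, hc⟩ | ⟨r, hrF, hrb, hr⟩
      · have hcK : c ^ 3 = b := by exact_mod_cast hc
        exact hcube _ c (hcF) (by rw [hcK, ← hg6]; ring)
      · have hrK : r ^ 3 - 3 * b * r + a * b = 0 := by exact_mod_cast hr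
        obtain ⟨u, hu⟩ : ∃ u, u = α ^ 4 * β ^ 2 := ⟨_, rfl⟩
        obtain ⟨v, hv⟩ : ∃ v, v = α ^ 2 * β ^ 4 := ⟨_, rfl⟩
        have huv : u * v = b := by rw [hu, hv, ← hprod]; ring
        have hu3 : u ^ 3 = b * α ^ 6 := by rw [hu, ← hprod]; ring
        have hv3 : v ^ 3 = b * β ^ 6 := by rw [hv, ← hprod]; ring
        have hβ6 : β ^ 6 ∈ F := by
          have : β ^ 6 = -α ^ 6 - a := by linear_combination h
          rw [this]; exact sub_mem (neg_mem (pow_mem hαF 6)) (haF)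
        have hm : b * α ^ 6 - b * β ^ 6 ∈ F :=
          sub_mem (mul_mem (hbF) (pow_mem hαF 6)) (mul_mem (hbF) hβ6)
        have hsum : u ^ 3 + v ^ 3 = -a * b := by rw [hu3, hv3]; linear_combination b * h
        have huF : u ∈ F := by
          have hfac : (u + v - r) * ((ω * u + ω ^ 2 * v - r) * (ω ^ 2 * u + ω * v - r)) = 0 := by
            have e1 : (u + v - r) * ((ω * u + ω ^ 2 * v - r) * (ω ^ 2 * u + ω * v - r))
              = u ^ 3 + v ^ 3 - r ^ 3 + 3 * (u * v) * r := by
              have e2 : ω ^ 2 = -ω - 1 := by linear_combination hω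
              rw [e2]
              linear_combination (-(u + v - r) * (u - v) ^ 2) * hω
            rw [e1, hsum, huv]; linear_combination -hrK
          rcases mul_eq_zero.1 hfac with h' | h'
          · exact aux_u F b r hrF hbF hrb u v _ hm huv (sub_eq_zero.1 h') (by rw [hu3, hv3])
          rcases mul_eq_zero.1 h' with h' | h'
          · have := aux_u F b r hrF hbF hrb (ω * u) (ω ^ 2 * v) _ hm
              (by linear_combination huv + u * v * h3) (sub_eq_zero.1 h')
              (by rw [← hu3, ← hv3]; linear_combination (u ^ 3 - v ^ 3 * (ω ^ 3 + 1)) * h3)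
            have e : u = ω * u / ω := by field_simp
            rw [e]; exact div_mem this hωF
          · have := aux_u F b r hrF hbF hrb (ω ^ 2 * u) (ω * v) _ hm
              (by linear_combination huv + u * v * h3) (sub_eq_zero.1 h')
              (by rw [← hu3, ← hv3]; linear_combination (u ^ 3 * (ω ^ 3 + 1) - v ^ 3) * h3)
            have e : u = ω ^ 2 * u / ω ^ 2 := by field_simp
            rw [e]; exact div_mem this (pow_mem hωF 2)
        have e : (α * β) ^ 2 = u / α ^ 2 := by rw [hu]; field_simp
        rw [e]; exact div_mem huF (pow_mem hαF 2)
    have : β = (α * β) ^ 3 / (α * β) ^ 2 / α := by field_simp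
    rw [this]; exact div_mem (div_mem hg3 hg2) hαF

lemma aux_main_s12 {k K : Type*} [Field k] [CharZero k] [Field K] [Algebra k K] (a b : k) (f : k[X])
    (hf : f = X ^ 12 + C a * X ^ 6 + C b) (hirr : Irreducible f) (hm3 : ∀ u : k, u ^ 2 ≠ -3)
    (hb_nsq : ¬ ∃ s : k, s ^ 2 = b)
    (hd : ¬ ∃ s : k, s ^ 2 = 3 * (4 * b - a ^ 2))
    (h3b : (∃ s : k, s ^ 2 = -3 * b) ∨ ∃ s : k, s ^ 2 = 3 * b * (4 * b - a ^ 2))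
    (hcr : (∃ c : k, c ^ 3 = b) ∨ ∃ r : k, r ^ 3 - 3 * b * r + a * b = 0)
    (hsp : (f.map (algebraMap k K)).Splits) (hadj : Algebra.adjoin k (f.rootSet K) = ⊤)
    [FiniteDimensional k K] : Module.finrank k K = 24 := by
  have hcz : CharZero K := charZero_of_injective_algebraMap (algebraMap k K).injective
  have inj := (algebraMap k K).injective
  have hfm : f.Monic := by rw [hf]; monicity!
  have hfd : f.natDegree = 12 := by rw [hf]; compute_degree!
  have haev : ∀ x : K, aeval x f = x ^ 12 + algebraMap k K a * x ^ 6 + algebraMap k K b := by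
    intro x; rw [hf]; simp
  obtain ⟨α, hα⟩ := hsp.exists_eval_eq_zero (by
    rw [degree_map, degree_eq_natDegree hfm.ne_zero, hfd]; norm_num)
  rw [eval_map_algebraMap] at hα
  have hα' := hα
  rw [haev] at hα'
  have hb0 : b ≠ 0 := fun h => hb_nsq ⟨0, by rw [h]; norm_num⟩
  have hD0 : a ^ 2 - 4 * b ≠ 0 := fun h => hd ⟨0, by linear_combination 3 * h⟩
  have hα0 : α ≠ 0 := by
    rintro rfl
    apply hb0
    apply inj
    rw [map_zero]; linear_combination hα'
  obtain ⟨ω, hω⟩ : ∃ ω : K, ω ^ 2 + ω + 1 = 0 := by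
    have hdvd : (X ^ 2 + C α * X + C (α ^ 2) : K[X]) ∣ f.map (algebraMap k K) := by
      refine ⟨(X - C α) * (X ^ 3 + C (α ^ 3)) * (X ^ 6 + C (algebraMap k K a + α ^ 6)), ?_⟩
      have hb : algebraMap k K b = -(α ^ 12 + algebraMap k K a * α ^ 6) := by
        linear_combination hα'
      rw [hf]
      simp only [Polynomial.map_add, Polynomial.map_mul, Polynomial.map_pow, map_X, map_C, hb]
      simp only [C_add, C_mul, C_pow, C_neg]
      ring
    have hs := hsp.of_dvd (hfm.map _).ne_zero hdvd
    have hdg : (X ^ 2 + C α * X + C (α ^ 2) : K[X]).degree = 2 := by compute_degree!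
    obtain ⟨β, hβ⟩ := hs.exists_eval_eq_zero (by rw [hdg]; norm_num)
    refine ⟨β / α, ?_⟩
    simp at hβ
    field_simp
    linear_combination hβ
  have hi : IsIntegral k α := Algebra.IsIntegral.isIntegral α
  have h12 : Module.finrank k (IntermediateField.adjoin k {α}) = 12 := by
    rw [IntermediateField.adjoin.finrank hi,
      ← minpoly.eq_of_irreducible_of_monic hirr hα hfm, hfd]
  have hωE : ω ∉ IntermediateField.adjoin k {α} := by
    intro h
    refine aux_not_sq a b f hf hirr hb_nsq hd α hα hi hm3 h12 (2 * ω + 1)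
      (add_mem (mul_mem (ofNat_mem _ 2) h) (one_mem _)) (by linear_combination 4 * hω)
  have hαE := IntermediateField.mem_adjoin_simple_self k α
  rw [← Module.finrank_mul_finrank k (IntermediateField.adjoin k {α}) K, h12]
  generalize IntermediateField.adjoin k {α} = E at hωE hαE
  have hiω : IsIntegral E ω := Algebra.IsIntegral.isIntegral ω
  have htop : IntermediateField.adjoin E {ω} = ⊤ := by
    have hall : ∀ x : K, x ∈ (IntermediateField.adjoin E {ω}).restrictScalars k := by
      set F := (IntermediateField.adjoin E {ω}).restrictScalars k with hF
      have hle : Algebra.adjoin k (f.rootSet K) ≤ F.toSubalgebra := by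
        rw [Algebra.adjoin_le_iff]
        intro β hβ
        rw [mem_rootSet_of_ne hfm.ne_zero, haev] at hβ
        have hm : ∀ x : k, algebraMap k K x ∈ F := F.algebraMap_mem
        refine aux_mem F (algebraMap k K a) (algebraMap k K b) (hm a) (hm b) ?_ ?_ ?_ ?_
          ω α β hω ?_ ?_ hα' hβ
        · simpa using hb0
        · intro h
          apply hD0; apply inj
          simpa [map_ofNat] using h
        · rcases h3b with ⟨s, hs⟩ | ⟨s, hs⟩
          · left; exact ⟨_, hm s, by rw [← map_pow, hs]; simp [map_ofNat]⟩
          · right; exact ⟨_, hm s, by rw [← map_pow, hs]; simp [map_ofNat]⟩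
        · rcases hcr with ⟨s, hs⟩ | ⟨s, hs⟩
          · left; exact ⟨_, hm s, by rw [← map_pow, hs]⟩
          · right
            refine ⟨_, hm s, ?_, ?_⟩
            · intro h
              rw [← map_pow] at h
              exact hb_nsq ⟨s, inj h⟩
            · simpa [map_ofNat] using congrArg (algebraMap k K) hs
        · exact IntermediateField.mem_adjoin_simple_self E ω
        · exact (IntermediateField.adjoin E {ω}).algebraMap_mem ⟨α, hαE⟩
      intro x
      apply hle
      rw [hadj]; trivial
    rw [eq_top_iff]
    intro x _
    exact hall x
  have hfr := IntermediateField.adjoin.finrank hiω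
  rw [htop, IntermediateField.finrank_top'] at hfr
  have hle : (minpoly E ω).natDegree ≤ 2 := by
    have hdg : (X ^ 2 + X + 1 : E[X]).natDegree = 2 := by compute_degree!
    rw [← hdg]
    refine natDegree_le_of_dvd (minpoly.dvd _ _ (by simp [hω])) ?_
    intro h; rw [h] at hdg; simp at hdg
  have hne1 : (minpoly E ω).natDegree ≠ 1 := by
    intro h
    obtain ⟨x, hx⟩ := minpoly.natDegree_eq_one_iff.1 h
    exact hωE (by rw [← hx]; exact x.2)
  have hpos := minpoly.natDegree_pos hiω
  rw [hfr]
  omega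

theorem gal_order_twentyfour_of_12T12_or_13 (a b : ℚ) (f : ℚ[X])
    (hf : f = X ^ 12 + C a * X ^ 6 + C b) (hirr : Irreducible f)
    (hb_nsq : ¬ ∃ s : ℚ, s ^ 2 = b)
    (hbd : ¬ ∃ s : ℚ, s ^ 2 = b * (a ^ 2 - 4 * b))
    (hd : ¬ ∃ s : ℚ, s ^ 2 = 3 * (4 * b - a ^ 2))
    (h3b : (∃ s : ℚ, s ^ 2 = -3 * b) ∨ ∃ s : ℚ, s ^ 2 = 3 * b * (4 * b - a ^ 2))
    (hcr : (∃ c : ℚ, c ^ 3 = b) ∨ ∃ r : ℚ, r ^ 3 - 3 * b * r + a * b = 0) :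
    Nat.card f.Gal = 24 := by
  rw [Gal.card_of_separable hirr.separable]
  exact aux_main_s12 a b f hf hirr (fun u hu => by nlinarith [sq_nonneg u]) hb_nsq hd h3b hcr
    (SplittingField.splits f) (SplittingField.adjoin_rootSet f)
end
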